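/- Let f = Σ_{λ∈Λ} Σ_k p_k(λ) D^k δ_λ (k ∈ (ℕ∪{0})^d) be a tempered distribution on ℝ^d whose support Λ and spectrum Γ = supp f̂ are both uniformly discrete. If there are constants 0 < c ≤ C < ∞ such that c ≤ sup_k |p_k(λ)| ≤ C for every λ ∈ Λ, then Λ is a finite union of translates of several full-rank lattices. -/

import Mathlib

open MeasureTheory SchwartzMap Metric Set
open scoped Pointwise RealInnerProductSpace ENNReal NNReal

noncomputable section

/-- Euclidean space `ℝ^d`. -/
abbrev Rd (d : ℕ) : Type := EuclideanSpace ℝ (Fin d)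

/-- The space `S*(ℝ^d)` of tempered distributions: continuous linear functionals
on the Schwartz space `S(ℝ^d)`. -/
abbrev TemperedDist (d : ℕ) : Type := SchwartzMap (Rd d) ℂ →L[ℂ] ℂ

/-- The Fourier transform of a tempered distribution: `f̂(φ) = f(φ̂)`. -/
def fourierTD {d : ℕ} (f : TemperedDist d) : TemperedDist d :=
  f.comp (fourierTransformCLM ℂ)

/-- The support of a tempered distribution: `x ∈ supp f` iff for every open
neighbourhood `U` of `x` there is a smooth compactly supported test function
supported in `U` on which `f` does not vanish. -/
def tdSupport {d : ℕ} (f : TemperedDist d) : Set (Rd d) :=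
  {x | ∀ U : Set (Rd d), IsOpen U → x ∈ U →
    ∃ φ : SchwartzMap (Rd d) ℂ, HasCompactSupport (⇑φ) ∧ tsupport (⇑φ) ⊆ U ∧ f φ ≠ 0}

/-- A set is locally finite if its intersection with every ball is finite. -/
def LocFinite {d : ℕ} (A : Set (Rd d)) : Prop :=
  ∀ (x : Rd d) (r : ℝ), (A ∩ Metric.ball x r).Finite

/-- A set is uniformly discrete if distances between distinct points are
bounded below by a positive constant. -/
def UniformlyDiscrete {d : ℕ} (A : Set (Rd d)) : Prop :=
  ∃ η > (0:ℝ), ∀ x ∈ A, ∀ y ∈ A, x ≠ y → η ≤ dist x y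

/-- A set is polynomially discrete (p-discrete) if
`|x - x'| ≥ c min{1, |x|^{-h}}` for distinct points `x, x'` of the set. -/
def PDiscrete {d : ℕ} (A : Set (Rd d)) : Prop :=
  ∃ c > (0:ℝ), ∃ h > (0:ℝ), ∀ x ∈ A, ∀ y ∈ A, x ≠ y →
    c * (if ‖x‖ ≤ 1 then 1 else ‖x‖ ^ (-h)) ≤ dist x y

/-- A set has bounded density if it is locally finite and the number of its
points in balls of radius 1 is uniformly bounded. -/
def BoundedDensity {d : ℕ} (A : Set (Rd d)) : Prop :=
  LocFinite A ∧ ∃ N : ℕ, ∀ x : Rd d, (A ∩ Metric.ball x 1).ncard ≤ N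

/-- A set is relatively dense if it intersects every ball of some fixed radius `R`. -/
def RelDense {d : ℕ} (A : Set (Rd d)) : Prop :=
  ∃ R : ℝ, 0 < R ∧ ∀ x : Rd d, ∃ a ∈ A, dist x a ≤ R

/-- A full-rank lattice in `ℝ^d` is the image of `ℤ^d` under an invertible
linear operator. -/
def IsFullRankLattice {d : ℕ} (L : Set (Rd d)) : Prop :=
  ∃ T : Rd d →ₗ[ℝ] Rd d, Function.Bijective T ∧
    L = T '' {x : Rd d | ∀ i, ∃ n : ℤ, x i = (n : ℝ)}

/-- The multi-indices `k ∈ (ℕ ∪ {0})^d` with `‖k‖ = k₁ + ⋯ + k_d ≤ K`. -/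
def mIdx (d K : ℕ) : Finset (Fin d → ℕ) :=
  (Finset.Iic fun _ => K).filter fun k => (∑ i, k i) ≤ K

/-- Partial derivative in the `i`-th coordinate direction. -/
def pderiv' {d : ℕ} (i : Fin d) (φ : Rd d → ℂ) : Rd d → ℂ :=
  fun x => fderiv ℝ φ x (EuclideanSpace.single i (1:ℝ))

/-- The mixed partial derivative `D^k = ∂^{k₁}_{x₁} ⋯ ∂^{k_d}_{x_d}`. -/
def Dmulti {d : ℕ} (k : Fin d → ℕ) : (Rd d → ℂ) → (Rd d → ℂ) :=
  ((List.finRange d).map fun i => (pderiv' i)^[k i]).foldr (· ∘ ·) id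

/-- The action of `D^k δ_λ` on a test function: `φ ↦ (-1)^{‖k‖} (D^k φ)(λ)`. -/
def dkDelta {d : ℕ} (k : Fin d → ℕ) (lam : Rd d) (φ : SchwartzMap (Rd d) ℂ) : ℂ :=
  (-1 : ℂ) ^ (∑ i, k i) * Dmulti k (⇑φ) lam

/-- The exponential `e^{2πi⟨x,w⟩}`. -/
def e2pi {d : ℕ} (x w : Rd d) : ℂ :=
  Complex.exp (((2 * Real.pi : ℝ) : ℂ) * Complex.I * ((⟪x, w⟫ : ℝ) : ℂ))

/-- A trigonometric polynomial: a finite sum `Σ c_ω e^{2πi⟨x,ω⟩}`. -/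
def IsTrigPoly {d : ℕ} (P : Rd d → ℂ) : Prop :=
  ∃ (n : ℕ) (cc : Fin n → ℂ) (w : Fin n → Rd d),
    ∀ x, P x = ∑ i, cc i * e2pi x (w i)

/-- The monomial `x^m = x₁^{m₁} ⋯ x_d^{m_d}` (as a complex number). -/
def monom {d : ℕ} (m : Fin d → ℕ) (x : Rd d) : ℂ := ((∏ i, (x i) ^ (m i) : ℝ) : ℂ)

/-- The total variation of the pure point measure with masses `b` on the open
ball `B(0,r)`: `Σ_{|γ| < r} |b(γ)|` (as an extended nonnegative real). -/
def ballVar {d : ℕ} (b : Rd d → ℂ) (r : ℝ) : ℝ≥0∞ :=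
  ∑' γ : Rd d, if ‖γ‖ < r then (‖b γ‖₊ : ℝ≥0∞) else 0

/-- The pure point measure `μ = Σ_λ a(λ) δ_λ` belongs to `S*(ℝ^d)` and is
represented there by the tempered distribution `f`: its support is countable,
`Σ_λ |a(λ)| |φ(λ)| < ∞` for every Schwartz function `φ`, and the (automatically
continuous) functional `φ ↦ Σ_λ a(λ) φ(λ)` coincides with `f`. -/
def RepMeasure {d : ℕ} (a : Rd d → ℂ) (f : TemperedDist d) : Prop :=
  {x | a x ≠ 0}.Countable ∧
  (∀ φ : SchwartzMap (Rd d) ℂ, Summable fun lam => ‖a lam‖ * ‖φ lam‖) ∧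
  (∀ φ : SchwartzMap (Rd d) ℂ, f φ = ∑' lam, a lam * φ lam)

/-- A continuous function on `ℝ^d` is almost periodic if for every `ε > 0` its
set of `ε`-almost periods is relatively dense. -/
def APFunction {d : ℕ} (g : Rd d → ℂ) : Prop :=
  Continuous g ∧ ∀ ε > (0:ℝ), RelDense {τ : Rd d | ∀ t, ‖g (t + τ) - g t‖ < ε}

/-- A tempered distribution is almost periodic if for every smooth compactly
supported `ψ` the function `t ↦ f(ψ(t - ·))` is almost periodic. -/
def APDistribution {d : ℕ} (f : TemperedDist d) : Prop :=
  ∀ ψ : Rd d → ℂ, ContDiff ℝ (⊤ : ℕ∞) ψ → HasCompactSupport ψ →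
    ∀ Φ : Rd d → SchwartzMap (Rd d) ℂ, (∀ t y, Φ t y = ψ (t - y)) →
      APFunction fun t => f (Φ t)

/-!
Let `P x` be the vector of coefficients of `f` at `x`. When `supp ψ` meets the spectrum in at most
one point `γ`, the function `t ↦ f (τ_t 𝓕ψ)` is a multiple of the character `e^{2πi⟨γ, t⟩}`, so
`f (τ_{t+u} 𝓕ψ) * conj (f (τ_t 𝓕ψ))` does not depend on `t`. Apply this to the translates of one
`ψ` by `ζ + n θ`: the derivatives in `f` turn the value into a polynomial in `n` whose coefficients
are exponential sums in `n`. Such sums recur along an ultrafilter, so the two occurrences of `n` can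
be separated: the identity persists when only the exponential sums are moved. By Parseval the
correlations of `P` with its translates, seen through a window of rapid decay, are then independent
of the centre of the window.

Almost periodicity makes every coefficient `P z` return, up to a small error, along translations
that are small in the Bohr topology. Choose an ultrafilter of such translations and restrict `P` to
the points `z` with `P (z + h) ≠ 0` for almost all of them. The translates of this restriction
converge in `ℓ²` along the ultrafilter; its values being bounded below, its support is invariant
under the differences of these translations, which span `ℝ^d`, hence under a full-rank lattice.
Removing this piece preserves all the hypotheses and, by Pythagoras, lowers the energy seen through
the window by a fixed amount, so finitely many pieces exhaust the support.
-/

section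
open Filter Topology

section Exponentials
variable {d : ℕ}

lemma e2pi_comm (x w : Rd d) : e2pi x w = e2pi w x := by
  rw [e2pi, e2pi, real_inner_comm]

lemma e2pi_add_left (x y w : Rd d) : e2pi (x + y) w = e2pi x w * e2pi y w := by
  simp only [e2pi, inner_add_left, Complex.ofReal_add, mul_add, Complex.exp_add]

lemma e2pi_add_right (w x y : Rd d) : e2pi w (x + y) = e2pi w x * e2pi w y := by
  simp only [e2pi, inner_add_right, Complex.ofReal_add, mul_add, Complex.exp_add]

@[simp] lemma e2pi_zero_left (w : Rd d) : e2pi 0 w = 1 := by simp [e2pi]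

@[simp] lemma e2pi_zero_right (x : Rd d) : e2pi x 0 = 1 := by
  rw [e2pi_comm, e2pi_zero_left]

@[simp] lemma norm_e2pi (x w : Rd d) : ‖e2pi x w‖ = 1 := by simp [e2pi, Complex.norm_exp]

lemma e2pi_ne_zero (x w : Rd d) : e2pi x w ≠ 0 := Complex.exp_ne_zero _

lemma e2pi_neg_left (x w : Rd d) : e2pi (-x) w = (e2pi x w)⁻¹ := by
  simp [e2pi, inner_neg_left, Complex.exp_neg]

lemma e2pi_neg_right (x w : Rd d) : e2pi x (-w) = (e2pi x w)⁻¹ := by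
  rw [e2pi_comm, e2pi_neg_left, e2pi_comm]

lemma e2pi_sub_left (x y w : Rd d) : e2pi (x - y) w = e2pi x w * (e2pi y w)⁻¹ := by
  rw [sub_eq_add_neg, e2pi_add_left, e2pi_neg_left]

lemma e2pi_nsmul_right (x w : Rd d) (n : ℕ) : e2pi x (n • w) = e2pi x w ^ n := by
  induction n with
  | zero => simp [e2pi]
  | succ n ih => rw [succ_nsmul, e2pi_add_right, ih, pow_succ]

lemma norm_e2pi_sub_e2pi (x y w : Rd d) : ‖e2pi x w - e2pi y w‖ = ‖e2pi (x - y) w - 1‖ := by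
  have h : e2pi x w - e2pi y w = (e2pi (x - y) w - 1) * e2pi y w := by
    rw [e2pi_sub_left, sub_mul, inv_mul_cancel_right₀ (e2pi_ne_zero _ _), one_mul]
  rw [h, norm_mul, norm_e2pi, mul_one]

@[fun_prop] lemma continuous_e2pi_left (w : Rd d) : Continuous fun x => e2pi x w := by
  unfold e2pi; fun_prop

lemma four_mul_abs_sub_round_le_norm_exp_sub_one (x : ℝ) :
    4 * |x - round x| ≤ ‖Complex.exp (((2 * Real.pi : ℝ) : ℂ) * Complex.I * (x : ℂ)) - 1‖ := by
  set y := x - round x with hy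
  have hexp : Complex.exp (((2 * Real.pi : ℝ) : ℂ) * Complex.I * (x : ℂ)) =
      Complex.exp (Complex.I * ((2 * Real.pi * y : ℝ) : ℂ)) :=
    Complex.exp_eq_exp_iff_exists_int.2 ⟨round x, by rw [hy]; push_cast; ring⟩
  have hpi := Real.pi_pos
  have habs : |Real.pi * y| = Real.pi * |y| := by rw [abs_mul, abs_of_pos hpi]
  have hsin : 2 / Real.pi * |Real.pi * y| ≤ |Real.sin (Real.pi * y)| :=
    Real.mul_abs_le_abs_sin (by rw [habs]; nlinarith [abs_sub_round x])
  have hscale : 2 / Real.pi * |Real.pi * y| = 2 * |y| := by rw [habs]; field_simp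
  rw [hexp, Complex.norm_exp_I_mul_ofReal_sub_one, mul_assoc, mul_div_cancel_left₀ _ two_ne_zero,
    norm_mul, Real.norm_eq_abs, Real.norm_eq_abs, Nat.abs_ofNat]
  linarith

end Exponentials

section Bohr
variable {d : ℕ}

/-- The filter of Bohr neighbourhoods of `0`: a set belongs to it when it contains every `h` for
which finitely many prescribed characters `e^{2πi⟨h,θ⟩}` are close enough to `1`. -/
def bohr (d : ℕ) : Filter (Rd d) := comap (fun h θ => e2pi h θ) (𝓝 (1 : Rd d → ℂ))

lemma tendsto_e2pi_bohr (θ : Rd d) : Tendsto (fun h => e2pi h θ) (bohr d) (𝓝 1) :=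
  tendsto_pi_nhds.1 tendsto_comap θ

lemma tendsto_bohr_iff {ι : Type*} {l : Filter ι} {u : ι → Rd d} :
    Tendsto u l (bohr d) ↔ ∀ θ, Tendsto (fun i => e2pi (u i) θ) l (𝓝 1) :=
  tendsto_comap_iff.trans tendsto_pi_nhds

lemma exists_of_mem_bohr {U : Set (Rd d)} (hU : U ∈ bohr d) :
    ∃ (F : Finset (Rd d)) (ε : ℝ), 0 < ε ∧ {h | ∀ θ ∈ F, ‖e2pi h θ - 1‖ < ε} ⊆ U := by
  obtain ⟨V, hV, hVU⟩ := mem_comap.1 hU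
  rw [nhds_pi, Filter.mem_pi'] at hV
  obtain ⟨F, t, ht, htV⟩ := hV
  have hball : ∀ᶠ ε in 𝓝[>] (0 : ℝ), ∀ θ ∈ F, ball 1 ε ⊆ t θ :=
    (eventually_all_finset F).2 fun θ _ => by
      obtain ⟨ε, hε, hsub⟩ := Metric.mem_nhds_iff.1 (ht θ)
      filter_upwards [Ioc_mem_nhdsGT hε] with δ hδ using (ball_subset_ball hδ.2).trans hsub
  obtain ⟨ε, hsub, hε⟩ := (hball.and self_mem_nhdsWithin).exists
  exact ⟨F, ε, hε, fun h hh => hVU <| htV fun θ hθ => hsub θ hθ <| by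
    simpa [dist_eq_norm] using hh θ hθ⟩

lemma tendsto_neg_bohr : Tendsto (fun h : Rd d => -h) (bohr d) (bohr d) :=
  tendsto_bohr_iff.2 fun θ => by
    simpa only [e2pi_neg_left, inv_one] using (tendsto_e2pi_bohr θ).inv₀ one_ne_zero

lemma tendsto_add_bohr_nhds_zero :
    Tendsto (fun q : Rd d × Rd d => q.1 + q.2) (bohr d ×ˢ 𝓝 0) (bohr d) :=
  tendsto_bohr_iff.2 fun θ => by
    have hzero : Tendsto (fun x : Rd d => e2pi x θ) (𝓝 0) (𝓝 1) :=
      (continuous_e2pi_left θ).tendsto' 0 1 (e2pi_zero_left θ)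
    simpa only [e2pi_add_left, Function.comp_apply, mul_one] using
      ((tendsto_e2pi_bohr θ).comp tendsto_fst).mul (hzero.comp tendsto_snd)

lemma relDense_of_mem_bohr {U : Set (Rd d)} (hU : U ∈ bohr d) : RelDense U := by
  obtain ⟨F, ε, hε, hsub⟩ := exists_of_mem_bohr hU
  let Φ : Rd d → (F → ℂ) := fun h θ => e2pi h θ
  have htb : TotallyBounded (Φ '' univ) := by
    refine (isCompact_closedBall (0 : F → ℂ) 1).totallyBounded.subset ?_
    rintro _ ⟨h, -, rfl⟩
    exact mem_closedBall_zero_iff.2 <|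
      (pi_norm_le_iff_of_nonneg zero_le_one).2 fun θ => (norm_e2pi h θ).le
  obtain ⟨s, -, hs, hcover⟩ :=
    exists_subset_image_finite_and.1 (Metric.finite_approx_of_totallyBounded htb ε hε)
  obtain ⟨R, hR⟩ := hs.isBounded.exists_norm_le
  refine ⟨max R 1, by positivity, fun x => ?_⟩
  obtain ⟨_, ⟨a, ha, rfl⟩, hxa⟩ := mem_iUnion₂.1 (hcover (mem_image_of_mem Φ (mem_univ x)))
  refine ⟨x - a, hsub fun θ hθ => ?_, ?_⟩
  · rw [← norm_e2pi_sub_e2pi, ← dist_eq_norm]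
    exact (dist_pi_lt_iff hε).1 hxa ⟨θ, hθ⟩
  · rw [dist_eq_norm, sub_sub_cancel]
    exact (hR a ha).trans (le_max_left _ _)

lemma exists_forall_eq_inner (ℓ : Rd d →ₗ[ℝ] ℝ) : ∃ θ : Rd d, ∀ h, ℓ h = ⟪h, θ⟫ :=
  ⟨(InnerProductSpace.toDual ℝ (Rd d)).symm (LinearMap.toContinuousLinearMap ℓ), fun h => by
    rw [real_inner_comm, InnerProductSpace.toDual_symm_apply, LinearMap.coe_toContinuousLinearMap']⟩

lemma tendsto_sub_round_bohr (ℓ : Rd d →ₗ[ℝ] ℝ) :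
    Tendsto (fun h => ℓ h - round (ℓ h)) (bohr d) (𝓝 0) := by
  obtain ⟨θ, hθ⟩ := exists_forall_eq_inner ℓ
  have hlim : Tendsto (fun h => ‖e2pi h θ - 1‖ / 4) (bohr d) (𝓝 0) := by
    simpa using ((tendsto_e2pi_bohr θ).sub_const 1).norm.div_const 4
  refine squeeze_zero_norm (fun h => ?_) hlim
  rw [Real.norm_eq_abs, le_div_iff₀' four_pos, hθ]
  exact four_mul_abs_sub_round_le_norm_exp_sub_one _

lemma eventually_bohr_exists_mem_span_norm_sub_lt {ι : Type*} [Finite ι]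
    (b : Module.Basis ι ℝ (Rd d)) {r : ℝ} (hr : 0 < r) :
    ∀ᶠ h in bohr d, ∃ k ∈ Submodule.span ℤ (range b), ‖h - k‖ < r := by
  have := Fintype.ofFinite ι
  have hlim : Tendsto (fun h => ∑ i, (b.repr h i - round (b.repr h i)) • b i) (bohr d) (𝓝 0) := by
    simpa using tendsto_finsetSum Finset.univ fun i _ =>
      (tendsto_sub_round_bohr (b.coord i)).smul_const (b i)
  filter_upwards [hlim.norm.eventually (gt_mem_nhds (by simpa using hr))] with h hh
  refine ⟨∑ i, round (b.repr h i) • b i, sum_mem fun i _ =>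
    Submodule.smul_mem _ _ (Submodule.subset_span (mem_range_self i)), ?_⟩
  simpa only [sub_smul, Finset.sum_sub_distrib, b.sum_repr, Int.cast_smul_eq_zsmul] using hh

end Bohr

section RelativelyDense

lemma eventually_notMem_of_dist_smul_le {E : Type*} [NormedAddCommGroup E] [NormedSpace ℝ E]
    [FiniteDimensional ℝ E] {q : AffineSubspace ℝ E} {y : E} (hy : y ∉ q.direction) {R : ℝ}
    {g : ℕ → E} (hg : ∀ n : ℕ, dist ((n : ℝ) • y) (g n) ≤ R) : ∀ᶠ n in atTop, g n ∉ q := by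
  by_cases hq : ∃ a, a ∈ q
  swap; · exact .of_forall fun n hn => hq ⟨_, hn⟩
  obtain ⟨a, ha⟩ := hq
  have hlim : Tendsto (fun n : ℕ => (n : ℝ)⁻¹ • (g n - a)) atTop (𝓝 y) := by
    have hsmall : Tendsto (fun n : ℕ => (n : ℝ)⁻¹ • (((n : ℝ) • y - g n) + a)) atTop (𝓝 0) :=
      tendsto_inv_atTop_nhds_zero_nat.zero_smul_isBoundedUnder_le
        (isBoundedUnder_of ⟨R + ‖a‖, fun n => (norm_add_le _ _).trans
          (add_le_add_left (dist_eq_norm ((n : ℝ) • y) (g n) ▸ hg n) _)⟩)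
    have hsub := (tendsto_const_nhds (x := y)).sub hsmall
    rw [sub_zero] at hsub
    refine hsub.congr' ?_
    filter_upwards [eventually_ne_atTop 0] with n hn
    have hn' : (n : ℝ) ≠ 0 := Nat.cast_ne_zero.2 hn
    simp only [smul_add, smul_sub, inv_smul_smul₀ hn']
    abel
  filter_upwards [hlim.eventually
    (q.direction.closed_of_finiteDimensional.isOpen_compl.mem_nhds hy)] with n hn hgn
  exact hn (q.direction.smul_mem _ (q.vsub_mem_direction hgn ha))

variable {d : ℕ}

lemma exists_mem_forall_notMem_of_relDense {D : Set (Rd d)} (hD : RelDense D) {ι : Type*}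
    [Finite ι] {q : ι → AffineSubspace ℝ (Rd d)} (hq : ∀ i, q i ≠ ⊤) :
    ∃ h ∈ D, ∀ i, h ∉ q i := by
  obtain ⟨R, -, hDR⟩ := hD
  have hdir : ∀ i : {i // (q i : Set (Rd d)).Nonempty}, (q i).direction ≠ ⊤ := fun i hi =>
    hq i ((AffineSubspace.direction_eq_top_iff_of_nonempty i.2).1 hi)
  obtain ⟨y, hy⟩ := Submodule.exists_forall_notMem_of_forall_ne_top _ hdir
  choose g hgD hg using fun n : ℕ => hDR ((n : ℝ) • y)
  have hev : ∀ i, ∀ᶠ n in atTop, g n ∉ q i := fun i => by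
    by_cases hi : (q i : Set (Rd d)).Nonempty
    · exact eventually_notMem_of_dist_smul_le (hy ⟨i, hi⟩) hg
    · exact .of_forall fun n hn => hi ⟨_, hn⟩
  obtain ⟨n, hn⟩ := (eventually_all.2 hev).exists
  exact ⟨g n, hgD n, hn⟩

lemma exists_ultrafilter_le_bohr_forall_affineSpan_eq_top {T : Set (Rd d)}
    (hT : ∀ U ∈ bohr d, RelDense (U ∩ T)) :
    ∃ 𝒰 : Ultrafilter (Rd d), ↑𝒰 ≤ bohr d ∧ T ∈ 𝒰 ∧ ∀ A ∈ 𝒰, affineSpan ℝ A = ⊤ := by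
  let G : Filter (Rd d) := ⨅ q : {q : AffineSubspace ℝ (Rd d) // q ≠ ⊤}, 𝓟 (q : Set (Rd d))ᶜ
  have hne : (bohr d ⊓ 𝓟 T ⊓ G).NeBot := by
    refine Filter.inf_neBot_iff.2 fun {s} hs {s'} hs' => ?_
    obtain ⟨I, hI, V, hV, -, rfl, -⟩ := mem_iInf'.1 hs'
    have := hI.to_subtype
    obtain ⟨h, hh, hhq⟩ := exists_mem_forall_notMem_of_relDense
      (hT _ (mem_inf_principal.1 hs)) fun i : I => i.1.2
    exact ⟨h, hh.1 hh.2, mem_iInter₂.2 fun i hi => mem_principal.1 (hV i) (hhq ⟨i, hi⟩)⟩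
  have hle := Ultrafilter.of_le (bohr d ⊓ 𝓟 T ⊓ G)
  refine ⟨_, hle.trans (inf_le_left.trans inf_le_left),
    hle (mem_inf_of_left (mem_inf_of_right (mem_principal_self T))), fun A hA => ?_⟩
  by_contra hspan
  have hcompl : (affineSpan ℝ A : Set (Rd d))ᶜ ∈ bohr d ⊓ 𝓟 T ⊓ G :=
    mem_inf_of_right (mem_iInf_of_mem ⟨_, hspan⟩ (mem_principal_self _))
  obtain ⟨h, hhA, hh⟩ := Ultrafilter.nonempty_of_mem (inter_mem hA (hle hcompl))
  exact hh (subset_affineSpan ℝ A hhA)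

end RelativelyDense

section UniformlyDiscrete
variable {d : ℕ} {A B : Set (Rd d)}

namespace UniformlyDiscrete

lemma mono (hB : UniformlyDiscrete B) (hAB : A ⊆ B) : UniformlyDiscrete A := by
  obtain ⟨η, hη, h⟩ := hB
  exact ⟨η, hη, fun x hx y hy => h x (hAB hx) y (hAB hy)⟩

lemma isClosed (hA : UniformlyDiscrete A) : IsClosed A := by
  obtain ⟨η, hη, hA⟩ := hA
  exact isClosed_of_pairwise_le_dist hη fun x hx y hy => hA x hx y hy

lemma finite_inter_closedBall (hA : UniformlyDiscrete A) (x : Rd d) (R : ℝ) :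
    (A ∩ closedBall x R).Finite := by
  obtain ⟨η, hη, hsep⟩ := id hA
  have : DiscreteTopology A := .of_forall_le_dist hη fun x y hxy =>
    hsep x x.2 y y.2 (Subtype.coe_ne_coe.2 hxy)
  rw [inter_comm]
  exact Metric.finite_isBounded_inter_isClosed ⟨this⟩ isBounded_closedBall hA.isClosed

lemma exists_pos_inter_ball_subset_singleton (hA : UniformlyDiscrete A) (z : Rd d) :
    ∃ r > 0, A ∩ ball z r ⊆ {z} := by
  have hnhds : (A \ {z})ᶜ ∈ 𝓝 z :=
    (hA.mono sdiff_subset).isClosed.isOpen_compl.mem_nhds fun h => h.2 rfl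
  obtain ⟨r, hr, hball⟩ := Metric.mem_nhds_iff.1 hnhds
  exact ⟨r, hr, fun x hx => by_contra fun hne => hball hx.2 ⟨hx.1, hne⟩⟩

lemma exists_pos_subsingleton_inter_closedBall (hA : UniformlyDiscrete A) :
    ∃ δ > 0, ∀ x, (A ∩ closedBall x δ).Subsingleton := by
  obtain ⟨η, hη, hsep⟩ := hA
  refine ⟨η / 3, by positivity, fun x y hy z hz => by_contra fun hne => ?_⟩
  have hy' := mem_closedBall.1 hy.2
  have hz' := mem_closedBall.1 hz.2
  linarith [hsep y hy.1 z hz.1 hne, dist_triangle_right y z x]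

lemma stabilizer (hA : UniformlyDiscrete A) (hne : A.Nonempty) :
    UniformlyDiscrete (AddAction.stabilizer (Rd d) A : Set (Rd d)) := by
  obtain ⟨η, hη, hA⟩ := hA
  obtain ⟨w, hw⟩ := hne
  have hmem : ∀ {k}, k ∈ AddAction.stabilizer (Rd d) A → k + w ∈ A := fun hk =>
    (AddAction.mem_stabilizer_set.1 hk w).2 hw
  exact ⟨η, hη, fun k hk k' hk' hne => by
    simpa using hA _ (hmem hk) _ (hmem hk') (add_left_injective w |>.ne hne)⟩

end UniformlyDiscrete

/-- A finite union of translates of full-rank lattices. -/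
def IsFiniteUnionOfLatticeTranslates (A : Set (Rd d)) : Prop :=
  ∃ (J : ℕ) (L : Fin J → Set (Rd d)) (v : Fin J → Rd d),
    (∀ j, IsFullRankLattice (L j)) ∧ A = ⋃ j, (fun y => v j + y) '' L j

namespace IsFiniteUnionOfLatticeTranslates

lemma of_finite {ι : Type*} [Finite ι] {L : ι → Set (Rd d)} (hL : ∀ i, IsFullRankLattice (L i))
    (v : ι → Rd d) : IsFiniteUnionOfLatticeTranslates (⋃ i, (fun y => v i + y) '' L i) := by
  obtain ⟨J, ⟨e⟩⟩ := Finite.exists_equiv_fin ι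
  exact ⟨J, L ∘ e.symm, v ∘ e.symm, fun j => hL _,
    (e.symm.surjective.iUnion_comp fun i => (fun y => v i + y) '' L i).symm⟩

lemma empty : IsFiniteUnionOfLatticeTranslates (∅ : Set (Rd d)) :=
  ⟨0, finZeroElim, finZeroElim, finZeroElim, by simp⟩

lemma union (hA : IsFiniteUnionOfLatticeTranslates A) (hB : IsFiniteUnionOfLatticeTranslates B) :
    IsFiniteUnionOfLatticeTranslates (A ∪ B) := by
  obtain ⟨J, L, v, hL, rfl⟩ := hA
  obtain ⟨J', L', v', hL', rfl⟩ := hB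
  have := of_finite (L := Sum.elim L L') (Sum.forall.2 ⟨hL, hL'⟩) (Sum.elim v v')
  rwa [iUnion_sum] at this

end IsFiniteUnionOfLatticeTranslates

lemma isFullRankLattice_span_range (b : Module.Basis (Fin d) ℝ (Rd d)) :
    IsFullRankLattice (Submodule.span ℤ (range b) : Set (Rd d)) := by
  let e := b.equivFun.trans (WithLp.linearEquiv 2 ℝ (Fin d → ℝ)).symm
  refine ⟨e.symm.toLinearMap, e.symm.bijective, ?_⟩
  rw [LinearEquiv.coe_coe, LinearEquiv.image_symm_eq_preimage]
  ext x
  exact (b.mem_span_iff_repr_mem ℤ x).trans (forall_congr' fun i => exists_congr fun n => eq_comm)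

lemma UniformlyDiscrete.exists_basis_span_eq {H : AddSubgroup (Rd d)}
    (hH : UniformlyDiscrete (H : Set (Rd d))) (hspan : Submodule.span ℝ (H : Set (Rd d)) = ⊤) :
    ∃ b : Module.Basis (Fin d) ℝ (Rd d),
      Submodule.span ℤ (range b) = AddSubgroup.toIntSubmodule H := by
  obtain ⟨η, hη, hsep⟩ := hH
  let L : Submodule ℤ (Rd d) := AddSubgroup.toIntSubmodule H
  have : DiscreteTopology L := .of_forall_le_norm hη fun x hx => by
    simpa using hsep x x.2 0 H.zero_mem (by simpa using hx)
  have : IsZLattice ℝ L := ⟨hspan⟩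
  have := ZLattice.module_free ℝ L
  have := ZLattice.module_finite ℝ L
  have hrank : Module.finrank ℤ L = d := by rw [ZLattice.rank ℝ L, finrank_euclideanSpace_fin]
  exact ⟨(Module.finBasisOfFinrankEq ℤ L hrank).ofZLatticeBasis ℝ L,
    Module.Basis.ofZLatticeBasis_span ..⟩

lemma UniformlyDiscrete.isFiniteUnionOfLatticeTranslates (hA : UniformlyDiscrete A)
    (b : Module.Basis (Fin d) ℝ (Rd d))
    (hb : ∀ k ∈ Submodule.span ℤ (range b), k ∈ AddAction.stabilizer (Rd d) A) :
    IsFiniteUnionOfLatticeTranslates A := by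
  set F := A ∩ closedBall 0 (∑ i, ‖b i‖)
  have : Finite F := hA.finite_inter_closedBall _ _
  have hcover : A = ⋃ v : F, (fun y => (v : Rd d) + y) '' Submodule.span ℤ (range b) := by
    refine subset_antisymm (fun z hz => mem_iUnion.2 ?_) (iUnion_subset ?_)
    · have hfract : ZSpan.fract b z ∈ F := by
        refine ⟨?_, mem_closedBall_zero_iff.2 (ZSpan.norm_fract_le (K := ℝ) b z)⟩
        refine (AddAction.mem_stabilizer_set.1 (hb _ (ZSpan.floor b z).2) _).1 ?_
        simpa [ZSpan.fract_apply] using hz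
      exact ⟨⟨_, hfract⟩, ZSpan.floor b z, (ZSpan.floor b z).2, by simp [ZSpan.fract_apply]⟩
    · rintro ⟨v, hv⟩ _ ⟨k, hk, rfl⟩
      simpa [add_comm] using (AddAction.mem_stabilizer_set.1 (hb k hk) v).2 hv.1
  rw [hcover]
  exact .of_finite (fun _ => isFullRankLattice_span_range b) _

end UniformlyDiscrete

section IsBoundedOn
variable {E V : Type*} [NormedAddCommGroup V] {F : E → V} {Λ : Set E} {C : ℝ}

/-- `F` is bounded by `C` and vanishes outside `Λ`. -/
structure IsBoundedOn (Λ : Set E) (C : ℝ) (F : E → V) : Prop where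
  support_subset : Function.support F ⊆ Λ
  norm_le : ∀ x, ‖F x‖ ≤ C

lemma IsBoundedOn.apply_eq_zero (hF : IsBoundedOn Λ C F) {x : E} (hx : x ∉ Λ) : F x = 0 :=
  Function.notMem_support.1 fun h => hx (hF.support_subset h)

lemma IsBoundedOn.indicator (hF : IsBoundedOn Λ C F) (S : Set E) :
    IsBoundedOn Λ C (S.indicator F) where
  support_subset := by
    rw [Set.support_indicator]
    exact inter_subset_right.trans hF.support_subset
  norm_le x := (norm_indicator_le_norm_self F x).trans (hF.norm_le x)

end IsBoundedOn

section Correlation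
variable {E 𝕜 V W : Type*} [AddCommGroup E] [RCLike 𝕜] [NormedAddCommGroup V] [NormedSpace 𝕜 V]
  [NormedAddCommGroup W] [InnerProductSpace 𝕜 W]
variable {ρ : E → V →L[𝕜] W} {F F' G G' : E → V} {Λ : Set E} {C : ℝ}

/-- The correlation of `F` and `G` seen through the window `ρ` centred at `t`. -/
def corr (ρ : E → V →L[𝕜] W) (t : E) (F G : E → V) : 𝕜 :=
  ∑' x, inner 𝕜 (ρ (x - t) (G x)) (ρ (x - t) (F x))

lemma conj_corr (t : E) (F G : E → V) : starRingEnd 𝕜 (corr ρ t F G) = corr ρ t G F := by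
  simp only [corr, RCLike.conj_tsum, inner_conj_symm]

lemma corr_translate (t k : E) (F G : E → V) :
    corr ρ t (fun z => F (z + k)) (fun z => G (z + k)) = corr ρ (t + k) F G := by
  rw [corr, corr, ← (Equiv.subRight k).tsum_eq]
  simp only [Equiv.subRight_apply, sub_add_cancel, sub_sub, add_comm k t]

/-- `F` is square summable through every translate of the window `ρ`. -/
def SqSummable (ρ : E → V →L[𝕜] W) (F : E → V) : Prop :=
  ∀ t, Memℓp (fun x => ρ (x - t) (F x)) 2

lemma sqSummable_iff : SqSummable ρ F ↔ ∀ t, Summable fun x => ‖ρ (x - t) (F x)‖ ^ 2 :=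
  forall_congr' fun t => by
    simp only [memℓp_gen_iff (p := 2) (by norm_num), ENNReal.toReal_ofNat, Real.rpow_ofNat]

namespace SqSummable

/-- The element of `ℓ²` that one sees of `F` through the window `ρ` centred at `t`. -/
def toL2 (hF : SqSummable ρ F) (t : E) : lp (fun _ : E => W) 2 := ⟨_, hF t⟩

lemma sub (hF : SqSummable ρ F) (hG : SqSummable ρ G) : SqSummable ρ fun z => F z - G z :=
  fun t => by simpa only [map_sub] using! (hF t).sub (hG t)

lemma translate (hF : SqSummable ρ F) (k : E) : SqSummable ρ fun z => F (z + k) := by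
  refine sqSummable_iff.2 fun t => ?_
  rw [← (Equiv.subRight k).summable_iff]
  simpa only [Function.comp_def, Equiv.subRight_apply, sub_add_cancel, sub_sub, add_comm k t]
    using sqSummable_iff.1 hF (t + k)

lemma toL2_sub (hF : SqSummable ρ F) (hG : SqSummable ρ G) (t : E) :
    (hF.sub hG).toL2 t = hF.toL2 t - hG.toL2 t := by
  ext x
  exact map_sub (ρ (x - t)) (F x) (G x)

lemma inner_toL2 (hF : SqSummable ρ F) (hG : SqSummable ρ G) (t : E) :
    inner 𝕜 (hG.toL2 t) (hF.toL2 t) = corr ρ t F G := lp.inner_eq_tsum _ _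

lemma norm_toL2_sq (hF : SqSummable ρ F) (t : E) :
    ((‖hF.toL2 t‖ ^ 2 : ℝ) : 𝕜) = corr ρ t F F := by
  rw [← hF.inner_toL2 hF, inner_self_eq_norm_sq_to_K, RCLike.ofReal_pow]

lemma norm_apply_le_norm_toL2 (hF : SqSummable ρ F) (t x : E) :
    ‖ρ (x - t) (F x)‖ ≤ ‖hF.toL2 t‖ := lp.norm_apply_le_norm two_ne_zero (hF.toL2 t) x

lemma corr_sub_left (hF : SqSummable ρ F) (hF' : SqSummable ρ F') (hG : SqSummable ρ G) (t : E) :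
    corr ρ t (fun z => F z - F' z) G = corr ρ t F G - corr ρ t F' G := by
  rw [← (hF.sub hF').inner_toL2 hG, hF.toL2_sub hF', inner_sub_right, inner_toL2,
    inner_toL2]

end SqSummable

/-- The window `ρ` is square summable on `Λ`, wherever it is centred. -/
def SqSummableOn (ρ : E → V →L[𝕜] W) (Λ : Set E) : Prop :=
  ∀ t, Summable (Λ.indicator fun x => ‖ρ (x - t)‖ ^ 2)

lemma IsBoundedOn.sqSummable (hF : IsBoundedOn Λ C F) (hρ : SqSummableOn ρ Λ) :
    SqSummable ρ F := sqSummable_iff.2 fun t => by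
  refine .of_nonneg_of_le (fun _ => sq_nonneg _) (fun x => ?_) ((hρ t).mul_right (C ^ 2))
  by_cases hx : x ∈ Λ
  · rw [indicator_of_mem hx, ← mul_pow]
    exact pow_le_pow_left₀ (norm_nonneg _) ((ρ (x - t)).le_opNorm_of_le (hF.norm_le x)) 2
  · simp [hF.apply_eq_zero hx, hx]

lemma tendsto_corr_left {ι : Type*} {l : Filter ι} {Fi : ι → E → V} (hρ : SqSummableOn ρ Λ)
    (hG : IsBoundedOn Λ C G) (hFi : ∀ i x, ‖Fi i x‖ ≤ C)
    (hlim : ∀ x, Tendsto (fun i => Fi i x) l (𝓝 (F x))) (t : E) :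
    Tendsto (fun i => corr ρ t (Fi i) G) l (𝓝 (corr ρ t F G)) := by
  refine tendsto_tsum_of_dominated_convergence ((hρ t).mul_right (C ^ 2)) (fun x => ?_)
    (Eventually.of_forall fun i x => ?_)
  · exact tendsto_const_nhds.inner (((ρ (x - t)).continuous.tendsto _).comp (hlim x))
  · by_cases hx : x ∈ Λ
    · rw [indicator_of_mem hx, ← mul_pow, sq]
      have hGx := (ρ (x - t)).le_opNorm_of_le (hG.norm_le x)
      exact (norm_inner_le_norm _ _).trans (mul_le_mul hGx
        ((ρ (x - t)).le_opNorm_of_le (hFi i x)) (norm_nonneg _) ((norm_nonneg _).trans hGx))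
    · simp [hG.apply_eq_zero hx, hx]

lemma tendsto_corr_right {ι : Type*} {l : Filter ι} {Fi : ι → E → V} (hρ : SqSummableOn ρ Λ)
    (hG : IsBoundedOn Λ C G) (hFi : ∀ i x, ‖Fi i x‖ ≤ C)
    (hlim : ∀ x, Tendsto (fun i => Fi i x) l (𝓝 (F x))) (t : E) :
    Tendsto (fun i => corr ρ t G (Fi i)) l (𝓝 (corr ρ t G F)) := by
  simpa only [Function.comp_def, conj_corr] using
    (RCLike.continuous_conj.tendsto _).comp (tendsto_corr_left hρ hG hFi hlim t)

/-- The correlations of the translates of `F` with `G` do not depend on where the window is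
centred. -/
def JointlyStationary (ρ : E → V →L[𝕜] W) (F G : E → V) : Prop :=
  ∀ k t, corr ρ t (fun z => F (z + k)) G = corr ρ 0 (fun z => F (z + k)) G

namespace JointlyStationary

lemma corr_translate_neg (h : JointlyStationary ρ F G) (k t : E) :
    corr ρ t F (fun z => G (z + k)) = corr ρ 0 (fun z => F (z + -k)) G := by
  rw [← h (-k) (t + k), ← corr_translate]
  simp only [add_neg_cancel_right]

lemma corr_eq (h : JointlyStationary ρ F G) (t : E) : corr ρ t F G = corr ρ 0 F G := by
  simpa only [add_zero] using h 0 t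

lemma symm (h : JointlyStationary ρ F G) : JointlyStationary ρ G F := fun k t => by
  rw [← conj_corr, h.corr_translate_neg, ← h.corr_translate_neg k 0, conj_corr]

lemma translate_left (h : JointlyStationary ρ F G) (j : E) :
    JointlyStationary ρ (fun z => F (z + j)) G := fun k t => by
  simpa only [add_assoc] using h (k + j) t

lemma translate_right (h : JointlyStationary ρ F G) (j : E) :
    JointlyStationary ρ F fun z => G (z + j) := (h.symm.translate_left j).symm

lemma sub_left (hF : SqSummable ρ F) (hF' : SqSummable ρ F') (hG : SqSummable ρ G)
    (h : JointlyStationary ρ F G) (h' : JointlyStationary ρ F' G) :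
    JointlyStationary ρ (fun z => F z - F' z) G := fun k t => by
  rw [(hF.translate k).corr_sub_left (hF'.translate k) hG, h, h',
    ← (hF.translate k).corr_sub_left (hF'.translate k) hG]

lemma sub_right (hG : SqSummable ρ G) (hG' : SqSummable ρ G') (hF : SqSummable ρ F)
    (h : JointlyStationary ρ F G) (h' : JointlyStationary ρ F G') :
    JointlyStationary ρ F fun z => G z - G' z := (sub_left hG hG' hF h.symm h'.symm).symm

lemma of_tendsto_left {ι : Type*} {l : Filter ι} [l.NeBot] {Fi : ι → E → V}
    (hρ : SqSummableOn ρ Λ) (hG : IsBoundedOn Λ C G) (hFi : ∀ i x, ‖Fi i x‖ ≤ C)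
    (hlim : ∀ x, Tendsto (fun i => Fi i x) l (𝓝 (F x)))
    (h : ∀ i, JointlyStationary ρ (Fi i) G) : JointlyStationary ρ F G := fun k t => by
  have hcorr := tendsto_corr_left (F := fun z => F (z + k)) hρ hG (fun i x => hFi i (x + k))
    fun x => hlim (x + k)
  exact tendsto_nhds_unique (hcorr t) ((hcorr 0).congr fun i => (h i k t).symm)

lemma norm_toL2_eq (h : JointlyStationary ρ F F) (hF : SqSummable ρ F) (t : E) :
    ‖hF.toL2 t‖ = ‖hF.toL2 0‖ := by
  refine (sq_eq_sq₀ (norm_nonneg _) (norm_nonneg _)).1 (RCLike.ofReal_injective (K := 𝕜) ?_)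
  rw [hF.norm_toL2_sq, hF.norm_toL2_sq, h.corr_eq]

lemma mul_norm_le (h : JointlyStationary ρ F F) (hF : SqSummable ρ F) {κ : ℝ}
    (hκ : ∀ p, κ * ‖p‖ ≤ ‖ρ 0 p‖) (z : E) : κ * ‖F z‖ ≤ ‖hF.toL2 0‖ := by
  rw [← h.norm_toL2_eq hF z]
  exact (hκ _).trans (by simpa only [sub_self] using hF.norm_apply_le_norm_toL2 z z)

lemma mul_norm_sub_le_dist (h : JointlyStationary ρ F F) (hF : SqSummable ρ F) {κ : ℝ}
    (hκ : ∀ p, κ * ‖p‖ ≤ ‖ρ 0 p‖) (j k z : E) :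
    κ * ‖F (z + j) - F (z + k)‖ ≤ dist ((hF.translate j).toL2 0) ((hF.translate k).toL2 0) := by
  have hD := (hF.translate j).sub (hF.translate k)
  have hDF : ∀ i, JointlyStationary ρ (fun z => F (z + j) - F (z + k)) fun z => F (z + i) :=
    fun i => sub_left (hF.translate j) (hF.translate k) (hF.translate i)
      ((h.translate_left j).translate_right i) ((h.translate_left k).translate_right i)
  rw [dist_eq_norm, ← SqSummable.toL2_sub]
  exact (sub_right (hF.translate j) (hF.translate k) hD (hDF j) (hDF k)).mul_norm_le hD hκ z

end JointlyStationary

lemma corr_indicator_self (S : Set E) (t : E) (F : E → V) :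
    corr ρ t (S.indicator F) F = corr ρ t (S.indicator F) (S.indicator F) :=
  tsum_congr fun x => by by_cases hx : x ∈ S <;> simp [hx]

lemma SqSummable.norm_toL2_sq_add_norm_toL2_sub_sq (hF : SqSummable ρ F) (hG : SqSummable ρ G)
    {t : E} (h : corr ρ t G F = corr ρ t G G) :
    ‖hG.toL2 t‖ ^ 2 + ‖(hF.sub hG).toL2 t‖ ^ 2 = ‖hF.toL2 t‖ ^ 2 := by
  have horth : inner 𝕜 (hF.toL2 t - hG.toL2 t) (hG.toL2 t) = 0 := by
    rw [inner_sub_left, inner_toL2, inner_toL2, h, sub_self]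
  rw [hF.toL2_sub hG, ← sub_add_cancel (hF.toL2 t) (hG.toL2 t), add_sub_cancel_right, sq, sq, sq,
    norm_add_sq_eq_norm_sq_add_norm_sq_of_inner_eq_zero _ _ horth, add_comm]

end Correlation

lemma tendsto_of_tendsto_inner_of_norm_eq {𝕜 H ι : Type*} [RCLike 𝕜] [NormedAddCommGroup H]
    [InnerProductSpace 𝕜 H] {l : Filter ι} {u : ι → H} {a : H} (hnorm : ∀ i, ‖u i‖ = ‖a‖)
    (hinner : Tendsto (fun i => inner 𝕜 a (u i)) l (𝓝 (inner 𝕜 a a))) : Tendsto u l (𝓝 a) := by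
  have hsq : Tendsto (fun i => ‖a - u i‖ ^ 2) l (𝓝 0) := by
    simp only [norm_sub_sq (𝕜 := 𝕜), hnorm]
    have hre : Tendsto (fun i => RCLike.re (inner 𝕜 a (u i))) l (𝓝 (‖a‖ ^ 2)) := by
      simpa only [Function.comp_def, inner_self_eq_norm_sq] using
        (RCLike.continuous_re.tendsto _).comp hinner
    have hexp := ((hre.const_mul 2).const_sub (‖a‖ ^ 2)).add_const (‖a‖ ^ 2)
    rwa [two_mul, sub_add_cancel_left, neg_add_cancel] at hexp
  rw [tendsto_iff_norm_sub_tendsto_zero]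
  simpa [norm_sub_rev, Real.sqrt_sq] using hsq.sqrt

section Comb
variable {d : ℕ}

section Adherent

lemma sub_mem_stabilizer_support {E V : Type*} [AddCommGroup E] [NormedAddCommGroup V]
    {F : E → V} {c : ℝ} (hc : ∀ z, F z ≠ 0 → c ≤ ‖F z‖) {h h' : E}
    (hclose : ∀ z, ‖F (z + -h) - F (z + -h')‖ < c) :
    h - h' ∈ AddAction.stabilizer E (Function.support F) := by
  have hiff : ∀ z, F (z + -h) ≠ 0 ↔ F (z + -h') ≠ 0 := fun z => by
    have hz := hclose z
    constructor <;> intro hne h0 <;> have := hc _ hne <;> simp only [h0, zero_sub, sub_zero,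
      norm_neg] at hz <;> linarith
  refine AddAction.mem_stabilizer_set.2 fun w => ?_
  convert (hiff (w + h)).symm using 1
  · rw [vadd_eq_add, Function.mem_support, show h - h' + w = w + h + -h' by abel]
  · rw [Function.mem_support, add_neg_cancel_right]

variable {V : Type*} [NormedAddCommGroup V] {F P : Rd d → V}

/-- The points at which the functions `F i` are eventually nonzero. -/
def eventualSupport {ι α V : Type*} [Zero V] (l : Filter ι) (F : ι → α → V) : Set α :=
  {z | ∀ᶠ i in l, F i z ≠ 0}

/-- The points `z` such that `F (z + h) ≠ 0` for `𝒰`-almost every translation `h`. -/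
abbrev recurrenceSet (𝒰 : Ultrafilter (Rd d)) (F : Rd d → V) : Set (Rd d) :=
  eventualSupport 𝒰 fun h z => F (z + h)

/-- `F (z + h)` tends to `P z` when `h` tends to `0` for the Bohr topology among the translations
with `F (z + h) ≠ 0`. -/
def BohrAdherent (F P : Rd d → V) : Prop :=
  ∀ z, Tendsto (fun h => F (z + h)) (bohr d ⊓ 𝓟 {h | F (z + h) ≠ 0}) (𝓝 (P z))

lemma BohrAdherent.indicator (h : BohrAdherent F P) (S : Set (Rd d)) :
    BohrAdherent (S.indicator F) P := fun z => by
  have heq : ∀ y, S.indicator F y ≠ 0 → S.indicator F y = F y := fun y hy =>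
    indicator_of_mem (mem_of_indicator_ne_zero hy) F
  refine ((h z).mono_left (inf_le_inf_left _ (principal_mono.2 fun k hk => ?_))).congr' ?_
  · rwa [mem_ofPred_eq, ← heq _ hk]
  · exact (eventually_principal.2 fun k hk => (heq _ hk).symm).filter_mono inf_le_right

lemma BohrAdherent.tendsto_ultrafilter (h : BohrAdherent F P) {ι : Type*} {𝒰 : Ultrafilter ι}
    {σ : ι → Rd d} (hσ : Tendsto σ 𝒰 (bohr d)) (z : Rd d) :
    Tendsto (fun i => F (z + σ i)) 𝒰
      (𝓝 ((eventualSupport 𝒰 fun i z => F (z + σ i)).indicator P z)) := by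
  by_cases hz : z ∈ eventualSupport 𝒰 fun i z => F (z + σ i)
  · rw [indicator_of_mem hz]
    exact (h z).comp (tendsto_inf.2 ⟨hσ, tendsto_principal.2 hz⟩)
  · rw [indicator_of_notMem hz]
    refine tendsto_const_nhds.congr' ?_
    filter_upwards [Ultrafilter.eventually_not.2 hz] with i hi
    exact (not_not.1 hi).symm

end Adherent

lemma UniformlyDiscrete.eventually_bohr_mem_iff_of_stabilizer {Λ S : Set (Rd d)}
    (hΛ : UniformlyDiscrete Λ) (hS : S ⊆ Λ) (b : Module.Basis (Fin d) ℝ (Rd d))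
    (hb : ∀ k ∈ Submodule.span ℤ (range b), k ∈ AddAction.stabilizer (Rd d) S) :
    ∀ᶠ h in bohr d, ∀ z ∈ Λ, z + h ∈ Λ → (z ∈ S ↔ z + h ∈ S) := by
  obtain ⟨η, hη, hsep⟩ := hΛ
  filter_upwards [eventually_bohr_exists_mem_span_norm_sub_lt b hη] with h ⟨k, hk, hhk⟩ z hz hzh
  have hstab := AddAction.mem_stabilizer_set.1 (hb k hk)
  constructor <;> intro hzS
  · have hkz : k + z ∈ S := (hstab z).2 hzS
    suffices z + h = k + z from this ▸ hkz
    by_contra hne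
    refine (hsep _ hzh _ (hS hkz) hne).not_gt ?_
    rwa [add_comm k, dist_add_left, dist_eq_norm]
  · have hkz : z + h - k ∈ S := by simpa using (hstab (z + h - k)).1 (by simpa using hzS)
    suffices z = z + h - k from this ▸ hkz
    by_contra hne
    refine (hsep _ hz _ (hS hkz) hne).not_gt ?_
    rwa [add_sub_assoc, dist_self_add_right]

variable {𝕜 V W : Type*} [RCLike 𝕜] [NormedAddCommGroup V] [NormedSpace 𝕜 V]
  [NormedAddCommGroup W] [InnerProductSpace 𝕜 W]
variable {ρ : Rd d → V →L[𝕜] W} {P : Rd d → V} {Λ : Set (Rd d)} {c C κ : ℝ}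
  {𝒰 : Ultrafilter (Rd d)}

/-- A function on a discrete set whose nonzero values have norm between `c` and `C`, whose
correlations are stationary, and whose values are almost recovered, relatively densely often,
after a translation that is small for the Bohr topology. -/
structure StationaryComb (ρ : Rd d → V →L[𝕜] W) (Λ : Set (Rd d)) (c C : ℝ) (P : Rd d → V) :
    Prop where
  isBoundedOn : IsBoundedOn Λ C P
  le_norm : ∀ x, P x ≠ 0 → c ≤ ‖P x‖
  stationary : JointlyStationary ρ P P
  adherent : BohrAdherent P P
  recurrent : ∀ x, P x ≠ 0 → ∀ U ∈ bohr d, RelDense (U ∩ {h | P (x + h) ≠ 0})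

namespace StationaryComb

lemma jointlyStationary_indicator_left (hP : StationaryComb ρ Λ c C P) (hρ : SqSummableOn ρ Λ)
    (h𝒰 : ↑𝒰 ≤ bohr d) : JointlyStationary ρ ((recurrenceSet 𝒰 P).indicator P) P :=
  .of_tendsto_left hρ hP.isBoundedOn (fun _ _ => hP.isBoundedOn.norm_le _)
    (hP.adherent.tendsto_ultrafilter h𝒰) hP.stationary.translate_left

lemma jointlyStationary_indicator (hP : StationaryComb ρ Λ c C P) (hρ : SqSummableOn ρ Λ)
    (h𝒰 : ↑𝒰 ≤ bohr d) :
    JointlyStationary ρ ((recurrenceSet 𝒰 P).indicator P) ((recurrenceSet 𝒰 P).indicator P) :=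
  .of_tendsto_left hρ (hP.isBoundedOn.indicator _) (fun _ _ => hP.isBoundedOn.norm_le _)
    (hP.adherent.tendsto_ultrafilter h𝒰)
    (hP.jointlyStationary_indicator_left hρ h𝒰).symm.translate_left

lemma recurrenceSet_subset (hP : StationaryComb ρ Λ c C P) (hc : 0 < c) (h𝒰 : ↑𝒰 ≤ bohr d) :
    recurrenceSet 𝒰 P ⊆ Function.support P := fun z hz => by
  have hlim := (hP.adherent.tendsto_ultrafilter h𝒰 z).norm
  rw [indicator_of_mem hz] at hlim
  exact norm_pos_iff.1 (hc.trans_le (ge_of_tendsto hlim (hz.mono fun h => hP.le_norm _)))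

lemma support_indicator_recurrenceSet (hP : StationaryComb ρ Λ c C P) (hc : 0 < c)
    (h𝒰 : ↑𝒰 ≤ bohr d) :
    Function.support ((recurrenceSet 𝒰 P).indicator P) = recurrenceSet 𝒰 P := by
  rw [Set.support_indicator, inter_eq_left]
  exact hP.recurrenceSet_subset hc h𝒰

lemma le_norm_indicator (hP : StationaryComb ρ Λ c C P) (S : Set (Rd d)) (z : Rd d)
    (hz : S.indicator P z ≠ 0) : c ≤ ‖S.indicator P z‖ := by
  have hzS := mem_of_indicator_ne_zero hz
  rw [indicator_of_mem hzS] at hz ⊢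
  exact hP.le_norm z hz

-- Translating back the limit of the translates of `P` loses no energy, so the convergence, which
-- is only pointwise a priori, is a convergence in `ℓ²`.
lemma exists_tendsto_toL2 (hP : StationaryComb ρ Λ c C P) (hρ : SqSummableOn ρ Λ)
    (h𝒰 : ↑𝒰 ≤ bohr d) (hQ : SqSummable ρ ((recurrenceSet 𝒰 P).indicator P)) :
    ∃ a, Tendsto (fun h => (hQ.translate (-h)).toL2 0) 𝒰 (𝓝 a) := by
  set Q := (recurrenceSet 𝒰 P).indicator P
  have hQbd : IsBoundedOn Λ C Q := hP.isBoundedOn.indicator _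
  have hQQ : JointlyStationary ρ Q Q := hP.jointlyStationary_indicator hρ h𝒰
  have hQP : JointlyStationary ρ Q P := hP.jointlyStationary_indicator_left hρ h𝒰
  set S' := eventualSupport 𝒰 fun h z => Q (z + -h)
  have hlim : ∀ z, Tendsto (fun h => Q (z + -h)) 𝒰 (𝓝 (S'.indicator P z)) :=
    (hP.adherent.indicator _).tendsto_ultrafilter (tendsto_neg_bohr.mono_left h𝒰)
  have hQ'bd : IsBoundedOn Λ C (S'.indicator P) := hP.isBoundedOn.indicator _
  have hQ' := hQ'bd.sqSummable hρ
  have hcorr : corr ρ 0 (S'.indicator P) (S'.indicator P) = corr ρ 0 Q Q := by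
    rw [← corr_indicator_self, ← corr_indicator_self]
    refine tendsto_nhds_unique
      (tendsto_corr_left hρ hP.isBoundedOn (fun _ _ => hQbd.norm_le _) hlim 0) ?_
    simp only [← hQP.corr_translate_neg _ 0]
    rw [corr_indicator_self]
    exact tendsto_corr_right hρ hQbd (fun _ _ => hP.isBoundedOn.norm_le _)
      (hP.adherent.tendsto_ultrafilter h𝒰) 0
  refine ⟨hQ'.toL2 0, tendsto_of_tendsto_inner_of_norm_eq (𝕜 := 𝕜) (fun h => ?_) ?_⟩
  · refine (sq_eq_sq₀ (norm_nonneg _) (norm_nonneg _)).1 (RCLike.ofReal_injective (K := 𝕜) ?_)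
    rw [SqSummable.norm_toL2_sq, SqSummable.norm_toL2_sq, corr_translate, hQQ.corr_eq, hcorr]
  · simp only [SqSummable.inner_toL2]
    exact tendsto_corr_left hρ hQ'bd (fun _ _ => hQbd.norm_le _) hlim 0

lemma exists_mem_forall_sub_mem_stabilizer (hP : StationaryComb ρ Λ c C P) (hc : 0 < c)
    (hκ0 : 0 < κ) (hκ : ∀ p, κ * ‖p‖ ≤ ‖ρ 0 p‖) (hρ : SqSummableOn ρ Λ) (h𝒰 : ↑𝒰 ≤ bohr d) :
    ∃ A ∈ 𝒰, ∀ h ∈ A, ∀ h' ∈ A, h - h' ∈ AddAction.stabilizer (Rd d) (recurrenceSet 𝒰 P) := by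
  have hQ := (hP.isBoundedOn.indicator (recurrenceSet 𝒰 P)).sqSummable hρ
  have hQQ := hP.jointlyStationary_indicator hρ h𝒰
  obtain ⟨a, ha⟩ := hP.exists_tendsto_toL2 hρ h𝒰 hQ
  refine ⟨_, ha (ball_mem_nhds a (half_pos (mul_pos hκ0 hc))), fun h hh h' hh' => ?_⟩
  rw [← hP.support_indicator_recurrenceSet hc h𝒰]
  refine sub_mem_stabilizer_support (hP.le_norm_indicator _) fun z => ?_
  refine lt_of_mul_lt_mul_left ((hQQ.mul_norm_sub_le_dist hQ hκ (-h) (-h') z).trans_lt ?_) hκ0.le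
  exact (dist_triangle_right _ _ a).trans_lt (by linarith [mem_ball.1 hh, mem_ball.1 hh'])

lemma exists_basis_forall_mem_stabilizer (hP : StationaryComb ρ Λ c C P) (hc : 0 < c)
    (hκ0 : 0 < κ) (hκ : ∀ p, κ * ‖p‖ ≤ ‖ρ 0 p‖) (hΛ : UniformlyDiscrete Λ)
    (hρ : SqSummableOn ρ Λ) (h𝒰 : ↑𝒰 ≤ bohr d) (hspan : ∀ A ∈ 𝒰, affineSpan ℝ A = ⊤)
    (hne : (recurrenceSet 𝒰 P).Nonempty) :
    ∃ b : Module.Basis (Fin d) ℝ (Rd d), ∀ k ∈ Submodule.span ℤ (range b),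
      k ∈ AddAction.stabilizer (Rd d) (recurrenceSet 𝒰 P) := by
  obtain ⟨A, hA, hdiff⟩ := hP.exists_mem_forall_sub_mem_stabilizer hc hκ0 hκ hρ h𝒰
  have hS : UniformlyDiscrete (recurrenceSet 𝒰 P) :=
    hΛ.mono ((hP.recurrenceSet_subset hc h𝒰).trans hP.isBoundedOn.support_subset)
  obtain ⟨b, hb⟩ := (hS.stabilizer hne).exists_basis_span_eq <| top_unique <| by
    rw [← AffineSubspace.direction_top ℝ (Rd d) (Rd d), ← hspan A hA, direction_affineSpan]
    exact Submodule.span_mono (vsub_subset_iff.2 hdiff)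
  exact ⟨b, fun k hk => by rwa [hb] at hk⟩

lemma compl_indicator (hP : StationaryComb ρ Λ c C P) (hρ : SqSummableOn ρ Λ) {S : Set (Rd d)}
    (hl : JointlyStationary ρ (S.indicator P) P)
    (hS : JointlyStationary ρ (S.indicator P) (S.indicator P))
    (hinv : ∀ᶠ h in bohr d, ∀ z, P z ≠ 0 → P (z + h) ≠ 0 → (z ∈ S ↔ z + h ∈ S)) :
    StationaryComb ρ Λ c C (Sᶜ.indicator P) where
  isBoundedOn := hP.isBoundedOn.indicator _
  le_norm := hP.le_norm_indicator _
  stationary := by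
    have hPs := hP.isBoundedOn.sqSummable hρ
    have hQs := (hP.isBoundedOn.indicator S).sqSummable hρ
    rw [indicator_compl]
    exact .sub_right hPs hQs (hPs.sub hQs) (.sub_left hPs hQs hPs hP.stationary hl)
      (.sub_left hPs hQs hQs hl.symm hS)
  adherent z := by
    by_cases hz : z ∈ Sᶜ ∨ P z = 0
    · have hval : Sᶜ.indicator P z = P z := by obtain hz | hz := hz <;> simp [hz]
      rw [hval]
      exact hP.adherent.indicator _ z
    · obtain ⟨hzS, hz0⟩ := not_or.1 hz
      refine tendsto_const_nhds.congr' ?_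
      filter_upwards [hinv.filter_mono inf_le_left, mem_inf_of_right (mem_principal_self _)]
        with h hh hne
      have hmem := mem_of_indicator_ne_zero hne
      have hzh : P (z + h) ≠ 0 := by rwa [← indicator_of_mem hmem P]
      exact absurd ((hh z hz0 hzh).1 (not_not.1 hzS)) hmem
  recurrent x hx U hU := by
    have hxS := mem_of_indicator_ne_zero hx
    rw [indicator_of_mem hxS] at hx
    obtain ⟨R, hR, hdense⟩ := hP.recurrent x hx _ (inter_mem hU hinv)
    refine ⟨R, hR, fun y => ?_⟩
    obtain ⟨h, ⟨⟨hhU, hh⟩, hne⟩, hy⟩ := hdense y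
    have hmem : x + h ∈ Sᶜ := fun hS => hxS ((hh x hx hne).2 hS)
    exact ⟨h, ⟨hhU, by rwa [mem_ofPred_eq, indicator_of_mem hmem]⟩, hy⟩

lemma exists_latticeTranslates_compl (hP : StationaryComb ρ Λ c C P) (hc : 0 < c)
    (hκ0 : 0 < κ) (hκ : ∀ p, κ * ‖p‖ ≤ ‖ρ 0 p‖) (hΛ : UniformlyDiscrete Λ)
    (hρ : SqSummableOn ρ Λ) {x : Rd d} (hx : P x ≠ 0) :
    ∃ S ⊆ Function.support P, x ∈ S ∧ IsFiniteUnionOfLatticeTranslates S ∧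
      JointlyStationary ρ (S.indicator P) (S.indicator P) ∧
      StationaryComb ρ Λ c C (Sᶜ.indicator P) := by
  obtain ⟨𝒰, h𝒰, hT, hspan⟩ :=
    exists_ultrafilter_le_bohr_forall_affineSpan_eq_top (hP.recurrent x hx)
  have hSP := hP.recurrenceSet_subset hc h𝒰
  have hSΛ := hSP.trans hP.isBoundedOn.support_subset
  obtain ⟨b, hb⟩ :=
    hP.exists_basis_forall_mem_stabilizer hc hκ0 hκ hΛ hρ h𝒰 hspan ⟨x, hT⟩
  have hSS := hP.jointlyStationary_indicator hρ h𝒰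
  refine ⟨_, hSP, hT, (hΛ.mono hSΛ).isFiniteUnionOfLatticeTranslates b hb, hSS,
    hP.compl_indicator hρ (hP.jointlyStationary_indicator_left hρ h𝒰) hSS ?_⟩
  filter_upwards [hΛ.eventually_bohr_mem_iff_of_stabilizer hSΛ b hb] with h hh z hz hzh
  exact hh z (hP.isBoundedOn.support_subset hz) (hP.isBoundedOn.support_subset hzh)

theorem isFiniteUnionOfLatticeTranslates_support (hP : StationaryComb ρ Λ c C P) (hc : 0 < c)
    (hκ0 : 0 < κ) (hκ : ∀ p, κ * ‖p‖ ≤ ‖ρ 0 p‖) (hΛ : UniformlyDiscrete Λ)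
    (hρ : SqSummableOn ρ Λ) : IsFiniteUnionOfLatticeTranslates (Function.support P) := by
  have hpos : 0 < (κ * c) ^ 2 := by positivity
  obtain ⟨n, hn⟩ := exists_nat_gt (‖(hP.isBoundedOn.sqSummable hρ).toL2 0‖ ^ 2 / (κ * c) ^ 2)
  rw [div_lt_iff₀ hpos] at hn
  induction n generalizing P with
  | zero => exact absurd hn (by simp)
  | succ n ih =>
    obtain h0 | ⟨x, hx⟩ := (Function.support P).eq_empty_or_nonempty
    · exact h0 ▸ .empty
    obtain ⟨S, hSP, hxS, hS, hstat, hcompl⟩ :=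
      hP.exists_latticeTranslates_compl hc hκ0 hκ hΛ hρ hx
    have hPs := hP.isBoundedOn.sqSummable hρ
    have hQs := (hP.isBoundedOn.indicator S).sqSummable hρ
    have hunion : Function.support P = S ∪ Function.support (Sᶜ.indicator P) := by
      rw [Set.support_indicator, inter_comm, ← sdiff_eq, union_sdiff_cancel hSP]
    have henergy : (κ * c) ^ 2 ≤ ‖hQs.toL2 0‖ ^ 2 := by
      refine pow_le_pow_left₀ (by positivity) (le_trans ?_ (hstat.mul_norm_le hQs hκ x)) 2
      rw [indicator_of_mem hxS]
      exact mul_le_mul_of_nonneg_left (hP.le_norm x hx) hκ0.le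
    have hpyth := hPs.norm_toL2_sq_add_norm_toL2_sub_sq hQs (corr_indicator_self S 0 P)
    rw [hunion]
    refine hS.union (ih hcompl ?_)
    simp only [indicator_compl]
    push_cast at hn
    linarith

end StationaryComb
end Comb

-- The product is a polynomial over the noncommutative ring `R`, evaluated at the central element
-- `s • 1`.
lemma exists_prod_add_smul_pow_eq_sum {𝕜 R ι : Type*} [CommSemiring 𝕜] [Semiring R] [Algebra 𝕜 R]
    (l : List ι) (u v : ι → R) (k : ι → ℕ) :
    ∃ (n : ℕ) (A : ℕ → R), ∀ s : 𝕜,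
      (l.map fun i => (u i + s • v i) ^ k i).prod = ∑ j ∈ Finset.range n, s ^ j • A j := by
  let q : Polynomial R :=
    (l.map fun i => (Polynomial.C (u i) + Polynomial.X * Polynomial.C (v i)) ^ k i).prod
  refine ⟨q.natDegree + 1, q.coeff, fun s => ?_⟩
  let evalAt := Polynomial.eval₂RingHom' (RingHom.id R) (algebraMap 𝕜 R s)
    fun r => Algebra.commute_algebraMap_right s r
  have hfactor : ∀ i, evalAt (Polynomial.C (u i) + Polynomial.X * Polynomial.C (v i)) =
      u i + s • v i := fun i => by
    simp only [evalAt, map_add, map_mul, Polynomial.eval₂RingHom'_apply, Polynomial.eval₂_C,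
      Polynomial.eval₂_X, RingHom.id_apply, Algebra.smul_def]
  calc (l.map fun i => (u i + s • v i) ^ k i).prod = evalAt q := by
        simp only [q, map_list_prod, List.map_map, Function.comp_def, map_pow, hfactor]
    _ = ∑ j ∈ Finset.range (q.natDegree + 1), s ^ j • q.coeff j := by
        simp only [evalAt, Polynomial.eval₂RingHom'_apply, Polynomial.eval₂_eq_sum_range,
          RingHom.id_apply, Algebra.smul_def, map_pow,
          fun j => ((Algebra.commute_algebraMap_right s (q.coeff j)).pow_right j).eq]

section TwistedDerivatives
open LineDeriv
variable {d : ℕ}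

/-- The twisted partial derivative `∂ᵢ + aᵢ`. -/
def twistedPartial (a : Fin d → ℂ) (i : Fin d) : 𝓢(Rd d, ℂ) →L[ℂ] 𝓢(Rd d, ℂ) :=
  lineDerivOpCLM ℂ 𝓢(Rd d, ℂ) (EuclideanSpace.single i (1 : ℝ)) + a i • 1

/-- The twisted mixed derivative `∏ᵢ (∂ᵢ + aᵢ)^(kᵢ)`, which is `D^k` conjugated by the exponential
`exp ∑ᵢ aᵢ yᵢ`. -/
def twistedDeriv (a : Fin d → ℂ) (k : Fin d → ℕ) : 𝓢(Rd d, ℂ) →L[ℂ] 𝓢(Rd d, ℂ) :=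
  ((List.finRange d).map fun i => twistedPartial a i ^ k i).prod

lemma twistedPartial_apply (a : Fin d → ℂ) (i : Fin d) (φ : 𝓢(Rd d, ℂ)) (x : Rd d) :
    twistedPartial a i φ x = pderiv' i φ x + a i * φ x := by
  simp only [twistedPartial, add_apply, lineDerivOpCLM_apply, lineDerivOp_apply_eq_fderiv,
    smul_apply, one_apply_eq_self, smul_eq_mul, pderiv']

lemma twistedPartial_eventuallyEq_const (a : Fin d → ℂ) (i : Fin d) {φ : 𝓢(Rd d, ℂ)} {x : Rd d}
    {c : ℂ} (h : φ =ᶠ[𝓝 x] fun _ => c) : twistedPartial a i φ =ᶠ[𝓝 x] fun _ => a i * c := by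
  filter_upwards [h, h.fderiv (𝕜 := ℝ)] with y hy hy'
  rw [twistedPartial_apply, pderiv', hy', fderiv_fun_const, Pi.zero_apply, zero_apply, hy, zero_add]

lemma twistedDeriv_eventuallyEq_const (a : Fin d → ℂ) (k : Fin d → ℕ) {φ : 𝓢(Rd d, ℂ)} {x : Rd d}
    {c : ℂ} (h : φ =ᶠ[𝓝 x] fun _ => c) :
    twistedDeriv a k φ =ᶠ[𝓝 x] fun _ => (∏ i, a i ^ k i) * c := by
  have hpow : ∀ i n (φ : 𝓢(Rd d, ℂ)) (c : ℂ), φ =ᶠ[𝓝 x] (fun _ => c) →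
      (twistedPartial a i ^ n) φ =ᶠ[𝓝 x] fun _ => a i ^ n * c := by
    intro i n
    induction n with
    | zero => simp
    | succ n ih =>
      intro φ c h
      simpa only [pow_succ, mul_assoc, mul_apply_eq_comp] using
        ih _ _ (twistedPartial_eventuallyEq_const a i h)
  rw [twistedDeriv, ← List.prod_ofFn, List.ofFn_eq_map]
  generalize List.finRange d = l
  induction l with
  | nil => simpa using h
  | cons i l ih =>
    simpa only [List.map_cons, List.prod_cons, mul_assoc, mul_apply_eq_comp] using
      hpow i (k i) _ _ ih

lemma Dmulti_eq_twistedDeriv_of_pderiv' {Ψ : 𝓢(Rd d, ℂ) → Rd d → ℂ} {a : Fin d → ℂ}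
    (hΨ : ∀ i φ, pderiv' i (Ψ φ) = Ψ (twistedPartial a i φ)) (k : Fin d → ℕ) (φ : 𝓢(Rd d, ℂ)) :
    Dmulti k (Ψ φ) = Ψ (twistedDeriv a k φ) := by
  have hpow : ∀ i n φ, (pderiv' i)^[n] (Ψ φ) = Ψ ((twistedPartial a i ^ n) φ) := by
    intro i n
    induction n with
    | zero => exact fun _ => rfl
    | succ n ih =>
      intro φ
      rw [Function.iterate_succ_apply, hΨ, ih, pow_succ]
      rfl
  unfold Dmulti twistedDeriv
  generalize List.finRange d = l
  induction l with
  | nil => rfl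
  | cons i l ih =>
    simp only [List.map_cons, List.foldr_cons, List.prod_cons, Function.comp_apply] at ih ⊢
    rw [ih, hpow]
    rfl

lemma Dmulti_eq_twistedDeriv_zero (k : Fin d → ℕ) (φ : 𝓢(Rd d, ℂ)) :
    Dmulti k φ = twistedDeriv 0 k φ :=
  Dmulti_eq_twistedDeriv_of_pderiv' (Ψ := fun φ => ⇑φ) (fun i φ => by
    ext x
    simp only [twistedPartial_apply, Pi.zero_apply, zero_mul, add_zero]) k φ

lemma twistedDeriv_zero_compSubConstCLM (k : Fin d → ℕ) (t : Rd d) (φ : 𝓢(Rd d, ℂ)) (x : Rd d) :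
    twistedDeriv 0 k (φ.compSubConstCLM ℂ t) x = twistedDeriv 0 k φ (x - t) := by
  rw [← Dmulti_eq_twistedDeriv_zero, Dmulti_eq_twistedDeriv_of_pderiv'
    (Ψ := fun φ : 𝓢(Rd d, ℂ) => φ.compSubConstCLM ℂ t) (a := 0) (fun i φ => ?_) k φ]
  · rfl
  · ext x
    rw [compSubConstCLM_apply, twistedPartial_apply, Pi.zero_apply, zero_mul, add_zero]
    exact congrArg (fun A : Rd d →L[ℝ] ℂ => A (EuclideanSpace.single i 1))
      (fderiv_comp_sub (𝕜 := ℝ) (f := φ) t)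

/-- The exponential `y ↦ exp ∑ᵢ aᵢ yᵢ` with complex frequency `a`. -/
def expSum (a : Fin d → ℂ) (y : Rd d) : ℂ := Complex.exp (∑ i, a i * (y i : ℂ))

lemma contDiff_expSum (a : Fin d → ℂ) : ContDiff ℝ (⊤ : ℕ∞) (expSum a) :=
  (ContDiff.sum fun i _ => contDiff_const.mul
    (Complex.ofRealCLM.contDiff.comp (EuclideanSpace.proj (𝕜 := ℝ) i).contDiff)).cexp

lemma pderiv'_expSum (a : Fin d → ℂ) (i : Fin d) (x : Rd d) :
    pderiv' i (expSum a) x = a i * expSum a x := by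
  have hline : HasDerivAt
      (fun s : ℝ => ∑ j, a j * ((x + s • EuclideanSpace.single i (1 : ℝ)) j : ℂ)) (a i) 0 := by
    have hterm : ∀ j, HasDerivAt
        (fun s : ℝ => a j * ((x + s • EuclideanSpace.single i (1 : ℝ)) j : ℂ))
        (if j = i then a i else 0) 0 := by
      intro j
      split_ifs with hj
      · subst hj
        simpa using ((hasDerivAt_id (0 : ℝ)).const_add (x j)).ofReal_comp.const_mul (a j)
      · simpa [hj] using hasDerivAt_const (0 : ℝ) (a j * (x j : ℂ))
    simpa using HasDerivAt.fun_sum fun j (_ : j ∈ Finset.univ) => hterm j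
  have hdiff : DifferentiableAt ℝ (expSum a) x := (contDiff_expSum a).differentiable (by simp) x
  rw [pderiv', ← hdiff.lineDeriv_eq_fderiv, lineDeriv]
  have hexp := hline.cexp.deriv
  simp only [zero_smul, add_zero] at hexp
  exact hexp.trans (mul_comm _ _)

lemma Dmulti_expSum_mul (a : Fin d → ℂ) (k : Fin d → ℕ) (φ : 𝓢(Rd d, ℂ)) (x : Rd d) :
    Dmulti k (fun y => expSum a y * φ y) x = expSum a x * twistedDeriv a k φ x := by
  rw [Dmulti_eq_twistedDeriv_of_pderiv' (Ψ := fun φ : 𝓢(Rd d, ℂ) => fun y => expSum a y * φ y)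
    (fun i φ => ?_) k φ]
  ext x
  have hexp := pderiv'_expSum a i x
  simp only [pderiv'] at hexp
  rw [twistedPartial_apply, pderiv',
    fderiv_fun_mul ((contDiff_expSum a).differentiable (by simp) x) φ.differentiableAt]
  simp only [add_apply, smul_apply, hexp, smul_eq_mul,
    pderiv']
  ring

lemma exists_twistedDeriv_add_smul_eq_sum (a b : Fin d → ℂ) (k : Fin d → ℕ) :
    ∃ (n : ℕ) (A : ℕ → 𝓢(Rd d, ℂ) →L[ℂ] 𝓢(Rd d, ℂ)),
      ∀ s : ℂ, twistedDeriv (a + s • b) k = ∑ j ∈ Finset.range n, s ^ j • A j := by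
  obtain ⟨n, A, hA⟩ := exists_prod_add_smul_pow_eq_sum (𝕜 := ℂ) (List.finRange d)
    (fun i => twistedPartial a i) (fun i => b i • 1) k
  refine ⟨n, A, fun s => ?_⟩
  simp only [← hA s, twistedDeriv, twistedPartial, Pi.add_apply, Pi.smul_apply, smul_eq_mul,
    add_smul, mul_smul, add_assoc]

/-- The complex frequency `-2πiζ` of the character `y ↦ e2pi y (-ζ)`. -/
def charFreq (ζ : Rd d) : Fin d → ℂ := fun i => -(2 * Real.pi * Complex.I * (ζ i : ℂ))

lemma charFreq_add_nsmul (ζ θ : Rd d) (n : ℕ) :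
    charFreq (ζ + n • θ) = charFreq ζ + (n : ℂ) • charFreq θ := by
  ext i
  simp only [charFreq, PiLp.add_apply, PiLp.smul_apply, nsmul_eq_mul, Complex.ofReal_add,
    Complex.ofReal_mul, Complex.ofReal_natCast, Pi.add_apply, Pi.smul_apply, smul_eq_mul]
  ring

lemma expSum_charFreq (ζ y : Rd d) : expSum (charFreq ζ) y = e2pi y (-ζ) := by
  simp only [e2pi, expSum, charFreq, inner_neg_right, PiLp.inner_apply, RCLike.inner_apply,
    conj_trivial, Complex.ofReal_neg, Complex.ofReal_sum, mul_neg, Finset.mul_sum,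
    ← Finset.sum_neg_distrib]
  congr 1
  refine Finset.sum_congr rfl fun i _ => ?_
  push_cast
  ring

end TwistedDerivatives

section DecaySeminorm
variable {d : ℕ}

/-- An integrable weight on `ℝ^d` which is comparable on points at bounded distance. -/
def decayWeight (x : Rd d) : ℝ := ((1 + ‖x‖) ^ (d + 1))⁻¹

/-- A continuous seminorm controlling the ratio of a Schwartz function to `decayWeight`. -/
def decaySeminorm (d : ℕ) : Seminorm ℂ 𝓢(Rd d, ℂ) :=
  (2 ^ (d + 1) : ℝ≥0) • (Finset.Iic (d + 1, 0)).sup fun m => SchwartzMap.seminorm ℂ m.1 m.2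

lemma decayWeight_pos (x : Rd d) : 0 < decayWeight x := by
  unfold decayWeight
  positivity

lemma decayWeight_le_one (x : Rd d) : decayWeight x ≤ 1 :=
  inv_le_one_of_one_le₀ (one_le_pow₀ (le_add_of_nonneg_right (norm_nonneg x)))

lemma norm_le_decaySeminorm_mul (φ : 𝓢(Rd d, ℂ)) (x : Rd d) :
    ‖φ x‖ ≤ decaySeminorm d φ * decayWeight x := by
  have h := one_add_le_sup_seminorm_apply (𝕜 := ℂ) (m := (d + 1, 0)) le_rfl le_rfl φ x
  rw [norm_iteratedFDeriv_zero, mul_comm] at h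
  rwa [decayWeight, ← div_eq_mul_inv, le_div_iff₀ (by positivity)]

lemma continuous_decaySeminorm : Continuous (decaySeminorm d) :=
  (Seminorm.continuous_finsetSup fun m _ =>
    (schwartz_withSeminorms ℂ (Rd d) ℂ).continuous_seminorm m).const_smul (2 ^ (d + 1) : ℝ≥0)

lemma integrable_decayWeight : Integrable (decayWeight (d := d)) := by
  have h := integrable_one_add_norm (E := Rd d) (μ := volume) (r := (d + 1 : ℕ)) (by simp)
  refine h.congr (Eventually.of_forall fun x => ?_)
  dsimp only
  rw [Real.rpow_neg (by positivity), Real.rpow_natCast, decayWeight]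

lemma decayWeight_le_mul_of_dist_le {x y : Rd d} {r : ℝ} (h : dist y x ≤ r) :
    decayWeight x ≤ (1 + r) ^ (d + 1) * decayWeight y := by
  have hr : 0 ≤ r := dist_nonneg.trans h
  have hnorm : 1 + ‖y‖ ≤ (1 + r) * (1 + ‖x‖) := by
    have := norm_le_norm_add_norm_sub' y x
    rw [dist_eq_norm] at h
    nlinarith [norm_nonneg x]
  unfold decayWeight
  rw [← div_eq_mul_inv, le_div_iff₀ (by positivity), inv_mul_le_iff₀ (by positivity), mul_comm,
    ← mul_pow]
  gcongr

end DecaySeminorm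

section UniformlyDiscreteSums
variable {d : ℕ} {Λ : Set (Rd d)}

-- The balls of radius `η / 2` around the points of `Λ` are disjoint, so the sum is at most a
-- constant times the integral of the weight.
lemma UniformlyDiscrete.exists_forall_sum_decayWeight_le (hΛ : UniformlyDiscrete Λ) :
    ∃ M, ∀ (t : Rd d) (s : Finset (Rd d)), ↑s ⊆ Λ → ∑ x ∈ s, decayWeight (x - t) ≤ M := by
  obtain ⟨η, hη, hsep⟩ := hΛ
  set v : ℝ := (volume : Measure (Rd d)).real (ball 0 (η / 2)) with hv
  have hv_pos : 0 < v :=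
    ENNReal.toReal_pos (measure_ball_pos _ _ (by positivity)).ne' measure_ball_lt_top.ne
  refine ⟨(1 + η / 2) ^ (d + 1) * (∫ y : Rd d, decayWeight y) / v, fun t s hs => ?_⟩
  have hinteg : Integrable fun y : Rd d => decayWeight (y - t) :=
    integrable_decayWeight.comp_sub_right t
  have hball : ∀ x ∈ s, decayWeight (x - t) * v ≤
      (1 + η / 2) ^ (d + 1) * ∫ y in ball x (η / 2), decayWeight (y - t) := by
    intro x _
    have hvx : v = (volume : Measure (Rd d)).real (ball x (η / 2)) := by
      rw [hv, measureReal_def, measureReal_def, Measure.addHaar_ball_center _ x]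
    rw [hvx, mul_comm, ← smul_eq_mul, ← setIntegral_const, ← integral_const_mul]
    refine setIntegral_mono_on (integrableOn_const measure_ball_lt_top.ne)
      (hinteg.integrableOn.const_mul _) measurableSet_ball fun y hy => ?_
    exact decayWeight_le_mul_of_dist_le (by rw [dist_sub_right]; exact (mem_ball.1 hy).le)
  have hunion : ∑ x ∈ s, ∫ y in ball x (η / 2), decayWeight (y - t) =
      ∫ y in ⋃ x ∈ s, ball x (η / 2), decayWeight (y - t) := by
    rw [integral_biUnion_finset _ (fun _ _ => measurableSet_ball) _ fun _ _ => hinteg.integrableOn]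
    intro x hx y hy hxy
    exact ball_disjoint_ball (by linarith [hsep x (hs hx) y (hs hy) hxy])
  have htotal : ∫ y in ⋃ x ∈ s, ball x (η / 2), decayWeight (y - t) ≤
      ∫ y : Rd d, decayWeight y := by
    rw [← integral_sub_right_eq_self (decayWeight (d := d)) t]
    exact setIntegral_le_integral hinteg (Eventually.of_forall fun y => (decayWeight_pos _).le)
  rw [le_div_iff₀ hv_pos, Finset.sum_mul]
  refine (Finset.sum_le_sum hball).trans ?_
  rw [← Finset.mul_sum, hunion]
  gcongr

lemma UniformlyDiscrete.exists_summable_tsum_decayWeight_le (hΛ : UniformlyDiscrete Λ) :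
    ∃ M, ∀ t, Summable (Λ.indicator fun x => decayWeight (x - t)) ∧
      ∑' x, Λ.indicator (fun x => decayWeight (x - t)) x ≤ M := by
  classical
  obtain ⟨M, hM⟩ := hΛ.exists_forall_sum_decayWeight_le
  have hsum : ∀ t (s : Finset (Rd d)),
      ∑ x ∈ s, Λ.indicator (fun x => decayWeight (x - t)) x ≤ M := fun t s => by
    simp only [indicator_apply, ← Finset.sum_filter]
    exact hM t _ fun x hx => (Finset.mem_filter.1 hx).2
  have hnonneg : ∀ t x, 0 ≤ Λ.indicator (fun x => decayWeight (x - t)) x := fun t =>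
    indicator_nonneg fun x _ => (decayWeight_pos _).le
  exact ⟨M, fun t => ⟨summable_of_sum_le (hnonneg t) (hsum t),
    Real.tsum_le_of_sum_le (hnonneg t) (hsum t)⟩⟩

end UniformlyDiscreteSums

section JetEval
variable {d K : ℕ}

/-- The coefficients `p_k` of a point distribution `∑ p_k D^k δ_s` of order at most `K`. -/
abbrev JetCoeff (d K : ℕ) : Type := mIdx d K → ℂ

/-- The value `∑ p_k (-1)^{‖k‖} (∏ᵢ (∂ᵢ + aᵢ)^(kᵢ) g) (s)`; for `a = 0` this is the value at `g` of
the point distribution `∑ p_k D^k δ_s`. -/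
def jetEval (a : Fin d → ℂ) (s : Rd d) : 𝓢(Rd d, ℂ) →ₗ[ℂ] JetCoeff d K →L[ℂ] ℂ where
  toFun g := ∑ k : mIdx d K,
    ((-1 : ℂ) ^ (∑ i, k.1 i) * twistedDeriv a k.1 g s) •
      (ContinuousLinearMap.proj k : JetCoeff d K →L[ℂ] ℂ)
  map_add' g h := by
    rw [← Finset.sum_add_distrib]
    refine Finset.sum_congr rfl fun k _ => ?_
    rw [map_add, add_apply, mul_add]
    exact add_smul (M := JetCoeff d K →L[ℂ] ℂ) _ _ _
  map_smul' c g := by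
    simp only [map_smul, smul_apply, smul_eq_mul, RingHom.id_apply, Finset.smul_sum, smul_smul,
      mul_left_comm]

lemma jetEval_apply (a : Fin d → ℂ) (s : Rd d) (g : 𝓢(Rd d, ℂ)) (p : JetCoeff d K) :
    jetEval a s g p = ∑ k : mIdx d K,
      p k * ((-1 : ℂ) ^ (∑ i, k.1 i) * twistedDeriv a k.1 g s) := by
  simp only [jetEval, LinearMap.coe_mk, AddHom.coe_mk, sum_apply, smul_apply,
    ContinuousLinearMap.proj_apply, smul_eq_mul, mul_comm]

lemma continuous_jetEval_apply (a : Fin d → ℂ) (s : Rd d) (p : JetCoeff d K) :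
    Continuous fun g => jetEval a s g p := by
  simp only [jetEval_apply]
  exact continuous_finsetSum _ fun k _ => continuous_const.mul <| continuous_const.mul <|
    (map_continuous (TemperedDistribution.delta s)).comp (twistedDeriv a k.1).continuous

/-- A continuous seminorm controlling `jetEval a s g` in terms of `decayWeight s`. -/
def jetSeminorm (K : ℕ) (a : Fin d → ℂ) : Seminorm ℂ 𝓢(Rd d, ℂ) :=
  ∑ k : mIdx d K, (decaySeminorm d).comp (twistedDeriv a k.1).toLinearMap

lemma continuous_jetSeminorm (a : Fin d → ℂ) : Continuous (jetSeminorm K a) :=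
  Seminorm.continuous_finsetSum fun k _ =>
    continuous_decaySeminorm.comp (twistedDeriv a k.1).continuous

lemma norm_jetEval_le (a : Fin d → ℂ) (s : Rd d) (g : 𝓢(Rd d, ℂ)) :
    ‖(jetEval a s g : JetCoeff d K →L[ℂ] ℂ)‖ ≤ jetSeminorm K a g * decayWeight s := by
  refine ContinuousLinearMap.opNorm_le_bound _
    (mul_nonneg (apply_nonneg _ _) (decayWeight_pos s).le) fun p => ?_
  rw [jetEval_apply, jetSeminorm, sum_apply, Finset.sum_mul, Finset.sum_mul]
  refine norm_sum_le_of_le _ fun k _ => ?_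
  rw [norm_mul, norm_mul, norm_pow, norm_neg, norm_one, one_pow, one_mul, mul_comm]
  exact mul_le_mul (norm_le_decaySeminorm_mul _ _) (norm_le_pi_norm p k) (norm_nonneg _)
    (mul_nonneg (apply_nonneg _ _) (decayWeight_pos s).le)

lemma jetEval_zero_compSubConstCLM (g : 𝓢(Rd d, ℂ)) (t s : Rd d) :
    (jetEval 0 s (g.compSubConstCLM ℂ t) : JetCoeff d K →L[ℂ] ℂ) = jetEval 0 (s - t) g := by
  simp only [jetEval, LinearMap.coe_mk, AddHom.coe_mk, twistedDeriv_zero_compSubConstCLM]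

lemma jetEval_zero_of_eq_expSum_mul {a : Fin d → ℂ} {g G : 𝓢(Rd d, ℂ)}
    (hG : ∀ y, G y = expSum a y * g y) (s : Rd d) :
    (jetEval 0 s G : JetCoeff d K →L[ℂ] ℂ) = expSum a s • jetEval a s g := by
  simp only [jetEval, LinearMap.coe_mk, AddHom.coe_mk, Finset.smul_sum, smul_smul]
  refine Finset.sum_congr rfl fun k _ => ?_
  rw [← Dmulti_eq_twistedDeriv_zero, funext hG, Dmulti_expSum_mul, mul_left_comm]

lemma jetEval_eq_zero_of_notMem_tsupport (a : Fin d → ℂ) {s : Rd d} {g : 𝓢(Rd d, ℂ)}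
    (hs : s ∉ tsupport g) : (jetEval a s g : JetCoeff d K →L[ℂ] ℂ) = 0 := by
  ext p
  rw [jetEval_apply, zero_apply]
  refine Finset.sum_eq_zero fun k _ => ?_
  have h := twistedDeriv_eventuallyEq_const a k.1 (c := 0) (notMem_tsupport_iff_eventuallyEq.1 hs)
  rw [h.eq_of_nhds, mul_zero, mul_zero, mul_zero]

end JetEval

section Cutoff
variable {E : Type*} [NormedAddCommGroup E] [NormedSpace ℝ E] [FiniteDimensional ℝ E]

/-- A smooth cutoff at scale `r`: it is `1` on `closedBall γ r` and `0` off `ball γ (2 * r)`. -/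
def cutoff (γ : E) (r : ℝ) (x : E) : ℂ :=
  ((⟨1, 2, one_pos, one_lt_two⟩ : ContDiffBump (0 : E)) (r⁻¹ • (x - γ)) : ℝ)

lemma contDiff_cutoff {n : ℕ∞} (γ : E) (r : ℝ) : ContDiff ℝ n (cutoff γ r) :=
  Complex.ofRealCLM.contDiff.comp <|
    (ContDiffBump.contDiff _).comp ((contDiff_id.sub contDiff_const).const_smul r⁻¹)

lemma cutoff_eq_one_of_dist_le {γ x : E} {r : ℝ} (hr : 0 < r) (h : dist x γ ≤ r) :
    cutoff γ r x = 1 := by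
  have hmem : r⁻¹ • (x - γ) ∈ closedBall (0 : E) 1 := by
    rw [mem_closedBall_zero_iff, norm_smul, norm_inv, Real.norm_of_nonneg hr.le, ← dist_eq_norm,
      inv_mul_le_one₀ hr]
    exact h
  rw [cutoff, ContDiffBump.one_of_mem_closedBall _ hmem, Complex.ofReal_one]

lemma cutoff_eq_zero_of_le_dist {γ x : E} {r : ℝ} (hr : 0 < r) (h : 2 * r ≤ dist x γ) :
    cutoff γ r x = 0 := by
  have hle : 2 ≤ dist (r⁻¹ • (x - γ)) 0 := by
    rwa [dist_zero_right, norm_smul, norm_inv, Real.norm_of_nonneg hr.le, ← dist_eq_norm,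
      le_inv_mul_iff₀ hr, mul_comm]
  rw [cutoff, ContDiffBump.zero_of_le_dist _ hle, Complex.ofReal_zero]

lemma tsupport_cutoff_subset {γ : E} {r : ℝ} (hr : 0 < r) :
    tsupport (cutoff γ r) ⊆ closedBall γ (2 * r) :=
  closure_minimal (fun _ hx => not_lt.1 fun h => hx (cutoff_eq_zero_of_le_dist hr h.le))
    isClosed_closedBall

lemma hasCompactSupport_cutoff {γ : E} {r : ℝ} (hr : 0 < r) : HasCompactSupport (cutoff γ r) :=
  (isCompact_closedBall γ (2 * r)).of_isClosed_subset (isClosed_tsupport _)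
    (tsupport_cutoff_subset hr)

lemma hasTemperateGrowth_cutoff {γ : E} {r : ℝ} (hr : 0 < r) : (cutoff γ r).HasTemperateGrowth :=
  (hasCompactSupport_cutoff hr).hasTemperateGrowth (contDiff_cutoff γ r)

variable (E) in
lemma exists_norm_iteratedFDeriv_cutoff_le (n : ℕ) :
    ∃ C, 0 ≤ C ∧ ∀ r, 0 < r → ∀ γ x : E, ‖iteratedFDeriv ℝ n (cutoff γ r) x‖ ≤ C * r⁻¹ ^ n := by
  obtain ⟨C, hC⟩ := ((hasCompactSupport_cutoff (γ := (0 : E)) one_pos).iteratedFDeriv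
    (𝕜 := ℝ) n).exists_bound_of_continuous
      ((contDiff_cutoff (n := ⊤) 0 1).continuous_iteratedFDeriv (mod_cast le_top))
  have hC0 : 0 ≤ C := (norm_nonneg _).trans (hC 0)
  refine ⟨C, hC0, fun r hr γ x => ?_⟩
  have hscale : cutoff γ r =
      fun x => (cutoff 0 1 ∘ (r⁻¹ • ContinuousLinearMap.id ℝ E)) (x - γ) := by
    ext x
    simp [cutoff]
  rw [hscale, iteratedFDeriv_comp_sub, ContinuousLinearMap.iteratedFDeriv_comp_right _
    (contDiff_cutoff (n := ⊤) 0 1) _ (mod_cast le_top)]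
  refine (ContinuousMultilinearMap.norm_compContinuousLinearMap_le _ _).trans ?_
  rw [Finset.prod_const, Finset.card_univ, Fintype.card_fin]
  gcongr
  · exact hC _
  · refine (norm_smul_le _ _).trans ?_
    rw [norm_inv, Real.norm_of_nonneg hr.le]
    exact mul_le_of_le_one_right (inv_nonneg.2 hr.le) ContinuousLinearMap.norm_id_le

variable (E) in
lemma exists_norm_iteratedFDeriv_cutoff_sub_one_le (n : ℕ) :
    ∃ C, 0 ≤ C ∧ ∀ r, 1 ≤ r → ∀ γ x : E,
      ‖iteratedFDeriv ℝ n (fun x => cutoff γ r x - 1) x‖ ≤ C := by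
  obtain ⟨C, hC0, hC⟩ := exists_norm_iteratedFDeriv_cutoff_le E n
  refine ⟨C + 1, by positivity, fun r hr γ x => ?_⟩
  have hconst : ‖iteratedFDeriv ℝ n (fun _ : E => (1 : ℂ)) x‖ ≤ 1 := by
    rcases n.eq_zero_or_pos with rfl | hn
    · rw [norm_iteratedFDeriv_zero, norm_one]
    · rw [iteratedFDeriv_const_of_ne hn.ne', Pi.zero_apply, norm_zero]
      exact zero_le_one
  have hcut : ‖iteratedFDeriv ℝ n (cutoff γ r) x‖ ≤ C :=
    (hC r (one_pos.trans_le hr) γ x).trans <| mul_le_of_le_one_right hC0 <|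
      pow_le_one₀ (by positivity) (inv_le_one_of_one_le₀ hr)
  rw [fun_iteratedFDeriv_sub_apply (contDiff_cutoff (n := n) γ r).contDiffAt contDiffAt_const]
  exact (norm_sub_le _ _).trans (add_le_add hcut hconst)

end Cutoff

section Density
variable {E F : Type*} [NormedAddCommGroup E] [NormedSpace ℝ E] [NormedAddCommGroup F]
  [NormedSpace ℂ F]

lemma pow_mul_norm_iteratedFDeriv_le_seminorm_mul_inv (φ : 𝓢(E, F)) (k m : ℕ) {r : ℝ}
    (hr : 0 < r) {x : E} (hx : r ≤ ‖x‖) :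
    ‖x‖ ^ k * ‖iteratedFDeriv ℝ m φ x‖ ≤ SchwartzMap.seminorm ℂ (k + 1) m φ * r⁻¹ := by
  rw [← div_eq_mul_inv, le_div_iff₀ hr]
  refine le_trans ?_ (SchwartzMap.le_seminorm ℂ (k + 1) m φ x)
  rw [pow_succ, mul_right_comm]
  gcongr

variable [FiniteDimensional ℝ E]

lemma iteratedFDeriv_cutoff_sub_one_smul_of_norm_lt (g : E → F) (m : ℕ) {r : ℝ} {x : E}
    (hx : ‖x‖ < r) : iteratedFDeriv ℝ m (fun y => (cutoff 0 r y - 1) • g y) x = 0 := by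
  have hzero : (fun y => (cutoff 0 r y - 1) • g y) =ᶠ[𝓝 x] 0 := by
    filter_upwards [(isOpen_lt continuous_norm continuous_const).mem_nhds hx] with y hy
    have hy' : dist y 0 ≤ r := (dist_zero_right y).trans_le (le_of_lt hy)
    rw [cutoff_eq_one_of_dist_le ((norm_nonneg x).trans_lt hx) hy', sub_self, zero_smul,
      Pi.zero_apply]
  rw [(hzero.iteratedFDeriv ℝ m).eq_of_nhds, iteratedFDeriv_zero, Pi.zero_apply]

lemma exists_seminorm_smulLeftCLM_cutoff_sub_le (φ : 𝓢(E, F)) (k m : ℕ) :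
    ∃ Q, ∀ r, 1 ≤ r →
      SchwartzMap.seminorm ℂ k m (smulLeftCLM F (cutoff 0 r) φ - φ) ≤ Q * r⁻¹ := by
  choose C hC0 hC using exists_norm_iteratedFDeriv_cutoff_sub_one_le E
  set Q : ℝ := ∑ i ∈ Finset.range (m + 1),
    (m.choose i : ℝ) * C i * SchwartzMap.seminorm ℂ (k + 1) (m - i) φ with hQ
  have hQ0 : 0 ≤ Q := Finset.sum_nonneg fun i _ =>
    mul_nonneg (mul_nonneg (Nat.cast_nonneg _) (hC0 i)) (apply_nonneg _ _)
  refine ⟨Q, fun r hr => ?_⟩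
  have hr0 : 0 < r := one_pos.trans_le hr
  refine SchwartzMap.seminorm_le_bound ℂ k m _ (by positivity) fun x => ?_
  have hfun : ⇑(smulLeftCLM F (cutoff 0 r) φ - φ) = fun x => (cutoff 0 r x - 1) • φ x := by
    ext x
    rw [sub_apply, smulLeftCLM_apply_apply (hasTemperateGrowth_cutoff hr0), sub_smul, one_smul]
  rw [hfun]
  rcases lt_or_ge ‖x‖ r with hx | hx
  · rw [iteratedFDeriv_cutoff_sub_one_smul_of_norm_lt φ m hx, norm_zero, mul_zero]
    positivity
  calc ‖x‖ ^ k * ‖iteratedFDeriv ℝ m (fun x => (cutoff 0 r x - 1) • φ x) x‖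
    _ ≤ ‖x‖ ^ k * ∑ i ∈ Finset.range (m + 1), (m.choose i : ℝ) *
          ‖iteratedFDeriv ℝ i (fun x => cutoff 0 r x - 1) x‖ *
          ‖iteratedFDeriv ℝ (m - i) φ x‖ := by
        gcongr
        exact norm_iteratedFDeriv_smul_le ((contDiff_cutoff (n := ⊤) 0 r).sub contDiff_const)
          (φ.smooth ⊤) x (mod_cast le_top)
    _ ≤ Q * r⁻¹ := by
        rw [hQ, Finset.mul_sum, Finset.sum_mul]
        refine Finset.sum_le_sum fun i _ => ?_
        have := hC i r hr 0 x
        have := hC0 i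
        have := pow_mul_norm_iteratedFDeriv_le_seminorm_mul_inv φ k (m - i) hr0 hx
        calc ‖x‖ ^ k * ((m.choose i : ℝ) * ‖iteratedFDeriv ℝ i (fun x => cutoff 0 r x - 1) x‖ *
                ‖iteratedFDeriv ℝ (m - i) φ x‖)
          _ = (m.choose i : ℝ) * ‖iteratedFDeriv ℝ i (fun x => cutoff 0 r x - 1) x‖ *
                (‖x‖ ^ k * ‖iteratedFDeriv ℝ (m - i) φ x‖) := by ring
          _ ≤ (m.choose i : ℝ) * C i * (SchwartzMap.seminorm ℂ (k + 1) (m - i) φ * r⁻¹) := by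
              gcongr
          _ = _ := (mul_assoc _ _ _).symm

lemma tendsto_smulLeftCLM_cutoff (φ : 𝓢(E, F)) :
    Tendsto (fun r => smulLeftCLM F (cutoff 0 r) φ) atTop (𝓝 φ) := by
  rw [(schwartz_withSeminorms ℂ E F).tendsto_nhds]
  rintro ⟨k, m⟩ ε hε
  obtain ⟨Q, hQ⟩ := exists_seminorm_smulLeftCLM_cutoff_sub_le φ k m
  have hlim : Tendsto (fun r : ℝ => Q * r⁻¹) atTop (𝓝 0) := by
    simpa only [mul_zero] using tendsto_inv_atTop_zero.const_mul Q
  filter_upwards [hlim.eventually_lt_const hε, eventually_ge_atTop 1] with r hr hr1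
  exact (hQ r hr1).trans_lt hr

variable (E F) in
lemma dense_setOf_hasCompactSupport : Dense {φ : 𝓢(E, F) | HasCompactSupport φ} := fun φ => by
  refine mem_closure_of_tendsto (tendsto_smulLeftCLM_cutoff φ) ?_
  filter_upwards [eventually_gt_atTop 0] with r hr
  refine (hasCompactSupport_cutoff (γ := 0) hr).mono' ?_
  exact (subset_tsupport _).trans ((tsupport_smulLeftCLM_subset _ _).trans inter_subset_right)

end Density

section Localization
variable {E F : Type*} [NormedAddCommGroup E] [NormedSpace ℝ E] [FiniteDimensional ℝ E]
  [NormedAddCommGroup F] [NormedSpace ℂ F]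

lemma tsupport_sub_smulLeftCLM_cutoff_subset {γ : E} {r : ℝ} (hr : 0 < r) (φ : 𝓢(E, F)) :
    tsupport ⇑(φ - smulLeftCLM F (cutoff γ r) φ) ⊆ tsupport φ \ ball γ r := by
  refine closure_minimal (fun x hx => ?_) ((isClosed_tsupport φ).sdiff isOpen_ball)
  rw [Function.mem_support, sub_apply,
    smulLeftCLM_apply_apply (hasTemperateGrowth_cutoff hr)] at hx
  refine ⟨subset_tsupport φ fun h => hx (by rw [h, smul_zero, sub_zero]), fun hxball => hx ?_⟩
  rw [cutoff_eq_one_of_dist_le hr (mem_ball.1 hxball).le, one_smul, sub_self]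

lemma schwartz_induction_of_local {p : 𝓢(E, F) → Prop} (zero : p 0)
    (add : ∀ φ ψ, p φ → p ψ → p (φ + ψ)) (ψ : 𝓢(E, F)) (hψ : HasCompactSupport ψ)
    (hloc : ∀ x ∈ tsupport ψ, ∃ r > 0, ∀ φ : 𝓢(E, F),
      tsupport φ ⊆ tsupport ψ ∩ closedBall x r → p φ) : p ψ := by
  classical
  choose! r hr hp using hloc
  obtain ⟨t, ht, hcov⟩ := hψ.elim_nhds_subcover (fun x => ball x (r x / 2))
    fun x hx => ball_mem_nhds x (half_pos (hr x hx))
  suffices H : ∀ φ : 𝓢(E, F), tsupport φ ⊆ tsupport ψ →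
      tsupport φ ⊆ ⋃ x ∈ t, ball x (r x / 2) → p φ from H ψ subset_rfl hcov
  clear hcov
  induction t using Finset.induction_on with
  | empty =>
    intro φ _ hφ
    have hφ0 : φ = 0 := by
      ext x
      exact image_eq_zero_of_notMem_tsupport fun hx => by simpa using hφ hx
    exact hφ0 ▸ zero
  | insert x t _ ih =>
    intro φ hφψ hφ
    have hrx : 0 < r x / 2 := half_pos (hr x (ht x (Finset.mem_insert_self x t)))
    rw [← add_sub_cancel (smulLeftCLM F (cutoff x (r x / 2)) φ) φ]
    refine add _ _ (hp x (ht x (Finset.mem_insert_self x t)) _ ?_)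
      (ih (fun y hy => ht y (Finset.mem_insert_of_mem hy)) _ ?_ ?_)
    · refine (tsupport_smulLeftCLM_subset _ _).trans (inter_subset_inter hφψ ?_)
      simpa only [mul_div_cancel₀ (r x) two_ne_zero] using tsupport_cutoff_subset hrx
    · exact (tsupport_sub_smulLeftCLM_cutoff_subset hrx φ).trans (sdiff_subset.trans hφψ)
    · intro y hy
      obtain ⟨hyφ, hyx⟩ := tsupport_sub_smulLeftCLM_cutoff_subset hrx φ hy
      have hcov := hφ hyφ
      rw [Finset.set_biUnion_insert] at hcov
      exact hcov.resolve_left hyx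

lemma apply_eq_zero_of_disjoint_tdSupport {d : ℕ} (T : TemperedDist d) {φ : 𝓢(Rd d, ℂ)}
    (hφ : HasCompactSupport φ) (h : Disjoint (tsupport φ) (tdSupport T)) : T φ = 0 := by
  refine schwartz_induction_of_local (p := fun φ => T φ = 0) (map_zero T)
    (fun φ ψ hφ hψ => by rw [map_add, hφ, hψ, add_zero]) φ hφ fun x hx => ?_
  have hxT : x ∉ tdSupport T := disjoint_left.1 h hx
  simp only [tdSupport, mem_ofPred_eq, not_forall, not_exists, not_and, not_not] at hxT
  obtain ⟨U, hU, hxU, hT⟩ := hxT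
  obtain ⟨r, hr, hrU⟩ := nhds_basis_closedBall.mem_iff.1 (hU.mem_nhds hxU)
  refine ⟨r, hr, fun ψ hψ => hT ψ ?_ ((hψ.trans inter_subset_right).trans hrU)⟩
  exact hφ.of_isClosed_subset (isClosed_tsupport _) (hψ.trans inter_subset_left)

end Localization

section PointDistribution
variable {d K : ℕ} {f : TemperedDist d} {Λ : Set (Rd d)} {C : ℝ} {P : Rd d → JetCoeff d K}

namespace IsBoundedOn

lemma norm_jetEval_apply_le (hP : IsBoundedOn Λ C P) (a : Fin d → ℂ) (φ : 𝓢(Rd d, ℂ)) (t x : Rd d) :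
    ‖jetEval a (x - t) φ (P x)‖ ≤
      C * jetSeminorm K a φ * Λ.indicator (fun x => decayWeight (x - t)) x := by
  by_cases hx : x ∈ Λ
  · rw [indicator_of_mem hx, mul_assoc, mul_comm C]
    exact (jetEval a (x - t) φ).le_of_opNorm_le_of_le (norm_jetEval_le _ _ _) (hP.norm_le x)
  · rw [hP.apply_eq_zero hx, map_zero, norm_zero, indicator_of_notMem hx, mul_zero]

lemma summable_jetEval_apply (hP : IsBoundedOn Λ C P) (hΛ : UniformlyDiscrete Λ) (a : Fin d → ℂ)
    (φ : 𝓢(Rd d, ℂ)) (t : Rd d) : Summable fun x => jetEval a (x - t) φ (P x) := by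
  obtain ⟨M, hM⟩ := hΛ.exists_summable_tsum_decayWeight_le
  exact .of_norm_bounded ((hM t).1.mul_left _) (hP.norm_jetEval_apply_le a φ t)

lemma exists_norm_tsum_jetEval_apply_le (hP : IsBoundedOn Λ C P) (hΛ : UniformlyDiscrete Λ) :
    ∃ B, ∀ a (φ : 𝓢(Rd d, ℂ)) t,
      ‖∑' x, jetEval a (x - t) φ (P x)‖ ≤ B * jetSeminorm K a φ := by
  obtain ⟨M, hM⟩ := hΛ.exists_summable_tsum_decayWeight_le
  have hC : 0 ≤ C := (norm_nonneg _).trans (hP.norm_le 0)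
  refine ⟨C * M, fun a φ t => ?_⟩
  calc ‖∑' x, jetEval a (x - t) φ (P x)‖
      ≤ C * jetSeminorm K a φ * ∑' x, Λ.indicator (fun x => decayWeight (x - t)) x :=
        tsum_of_norm_bounded ((hM t).1.hasSum.mul_left _) (hP.norm_jetEval_apply_le a φ t)
    _ ≤ C * jetSeminorm K a φ * M :=
        mul_le_mul_of_nonneg_left (hM t).2 (mul_nonneg hC (apply_nonneg _ _))
    _ = C * M * jetSeminorm K a φ := mul_right_comm _ _ _

lemma continuous_tsum_jetEval_apply (hP : IsBoundedOn Λ C P) (hΛ : UniformlyDiscrete Λ) :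
    Continuous fun φ : 𝓢(Rd d, ℂ) => ∑' x, jetEval 0 x φ (P x) := by
  obtain ⟨B, hB⟩ := hP.exists_norm_tsum_jetEval_apply_le hΛ
  have hsum (φ : 𝓢(Rd d, ℂ)) : Summable fun x => jetEval 0 x φ (P x) := by
    simpa only [sub_zero] using hP.summable_jetEval_apply hΛ 0 φ 0
  let L : 𝓢(Rd d, ℂ) →+ ℂ := {
    toFun φ := ∑' x, jetEval 0 x φ (P x)
    map_zero' := by simp only [map_zero, zero_apply, tsum_zero]
    map_add' φ ψ := by simp only [map_add, add_apply, (hsum φ).tsum_add (hsum ψ)] }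
  refine continuous_of_continuousAt_zero L ?_
  have hlim := ((continuous_jetSeminorm (K := K) 0).const_mul B).tendsto (0 : 𝓢(Rd d, ℂ))
  rw [map_zero, mul_zero] at hlim
  rw [ContinuousAt, map_zero]
  refine squeeze_zero_norm (fun φ => ?_) hlim
  simpa only [sub_zero, L, AddMonoidHom.coe_mk, ZeroHom.coe_mk] using hB 0 φ 0

end IsBoundedOn

/-- `f` is the distribution `∑ P(x)_k D^k δ_x`, where the coefficients `P` are bounded by `C` and
supported on the uniformly discrete set `Λ`. -/
structure IsPointDistribution (f : TemperedDist d) (Λ : Set (Rd d)) (C : ℝ)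
    (P : Rd d → JetCoeff d K) : Prop where
  uniformlyDiscrete : UniformlyDiscrete Λ
  isBoundedOn : IsBoundedOn Λ C P
  apply_eq : ∀ φ, f φ = ∑' x, jetEval 0 x φ (P x)

namespace IsPointDistribution

lemma of_hasCompactSupport (hΛ : UniformlyDiscrete Λ) (hP : IsBoundedOn Λ C P)
    (hf : ∀ φ : 𝓢(Rd d, ℂ), HasCompactSupport φ → f φ = ∑' x, jetEval 0 x φ (P x)) :
    IsPointDistribution f Λ C P :=
  ⟨hΛ, hP, congrFun <| Continuous.ext_on (dense_setOf_hasCompactSupport _ _) f.continuous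
    (hP.continuous_tsum_jetEval_apply hΛ) hf⟩

lemma apply_compSubConstCLM (h : IsPointDistribution f Λ C P) (φ : 𝓢(Rd d, ℂ)) (t : Rd d) :
    f (φ.compSubConstCLM ℂ t) = ∑' x, jetEval 0 (x - t) φ (P x) := by
  simp only [h.apply_eq, jetEval_zero_compSubConstCLM]

lemma exists_norm_apply_compSubConstCLM_le (h : IsPointDistribution f Λ C P) :
    ∃ B, ∀ (φ : 𝓢(Rd d, ℂ)) t, ‖f (φ.compSubConstCLM ℂ t)‖ ≤ B * jetSeminorm K 0 φ := by
  obtain ⟨B, hB⟩ := h.isBoundedOn.exists_norm_tsum_jetEval_apply_le h.uniformlyDiscrete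
  exact ⟨B, fun φ t => h.apply_compSubConstCLM φ t ▸ hB 0 φ t⟩

end IsPointDistribution

end PointDistribution

section FiniteOrder

lemma exists_norm_apply_le_of_norm_iteratedFDeriv_le {E F G : Type*} [NormedAddCommGroup E]
    [NormedSpace ℝ E] [NormedAddCommGroup F] [NormedSpace ℝ F] [NormedSpace ℂ F]
    [SMulCommClass ℝ ℂ F] [NormedAddCommGroup G] [NormedSpace ℂ G] (T : 𝓢(E, F) →L[ℂ] G) :
    ∃ N : ℕ, ∀ R, ∃ D, ∀ (ψ : 𝓢(E, F)) (ε : ℝ), 0 ≤ ε →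
      (∀ x, ∀ n ≤ N, ‖iteratedFDeriv ℝ n ψ x‖ ≤ ε) → tsupport ψ ⊆ closedBall 0 R →
      ‖T ψ‖ ≤ D * ε := by
  obtain ⟨s, C, -, hle⟩ := Seminorm.bound_of_continuous (schwartz_withSeminorms ℂ E F)
    ((normSeminorm ℂ G).comp T.toLinearMap) (continuous_norm.comp T.continuous)
  refine ⟨s.sup Prod.snd, fun R => ⟨C * max R 1 ^ s.sup Prod.fst,
    fun ψ ε hε hψ hR => (hle ψ).trans ?_⟩⟩
  rw [mul_assoc]
  refine mul_le_mul_of_nonneg_left ?_ C.2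
  refine Seminorm.finset_sup_apply_le (by positivity) fun ⟨k, n⟩ hkn => ?_
  refine SchwartzMap.seminorm_le_bound ℂ k n ψ (by positivity) fun x => ?_
  by_cases hx : iteratedFDeriv ℝ n ψ x = 0
  · rw [hx, norm_zero, mul_zero]
    positivity
  · have hxR := mem_closedBall_zero_iff.1 (hR (support_iteratedFDeriv_subset n hx))
    refine mul_le_mul ?_ (hψ x n (Finset.le_sup (f := Prod.snd) hkn)) (norm_nonneg _)
      (by positivity)
    calc ‖x‖ ^ k ≤ max R 1 ^ k := by gcongr; exact hxR.trans (le_max_left _ _)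
      _ ≤ max R 1 ^ s.sup Prod.fst :=
          pow_le_pow_right₀ (le_max_right _ _) (Finset.le_sup (f := Prod.fst) hkn)

end FiniteOrder

section VanishingOrder
variable {E : Type*} [NormedAddCommGroup E] [NormedSpace ℝ E] {γ : E} {a b : ℕ}
  {F G : ℝ → E → ℂ} {u : E → ℂ}

lemma exists_norm_iteratedFDeriv_le_of_mem_closedBall [FiniteDimensional ℝ E]
    (hu : ContDiff ℝ (⊤ : ℕ∞) u) (γ : E) {R : ℝ}
    (hR : 0 ≤ R) (n : ℕ) :
    ∃ C, 0 ≤ C ∧ ∀ x ∈ closedBall γ R, ‖iteratedFDeriv ℝ n u x‖ ≤ C := by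
  have : ProperSpace E := FiniteDimensional.proper_real E
  have hcont := hu.continuous_iteratedFDeriv (m := n) (mod_cast le_top)
  obtain ⟨C, hC⟩ := (isCompact_closedBall γ R).exists_bound_of_continuousOn hcont.continuousOn
  exact ⟨C, (norm_nonneg _).trans (hC γ (mem_closedBall_self hR)), hC⟩

/-- The smooth functions `F r` are `O(r ^ a)` on the balls `closedBall γ (2 * r)` as `r → 0`, and
every derivative costs at most one power of `r`. -/
structure HasVanishingOrder (γ : E) (a : ℕ) (F : ℝ → E → ℂ) : Prop where
  contDiff : ∀ r, ContDiff ℝ (⊤ : ℕ∞) (F r)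
  bound : ∀ n : ℕ, ∃ C, 0 ≤ C ∧ ∀ r ∈ Ioc (0 : ℝ) 1, ∀ x ∈ closedBall γ (2 * r),
    ‖iteratedFDeriv ℝ n (F r) x‖ * r ^ n ≤ C * r ^ a

namespace HasVanishingOrder

lemma mul (hF : HasVanishingOrder γ a F) (hG : HasVanishingOrder γ b G) :
    HasVanishingOrder γ (a + b) fun r x => F r x * G r x := by
  refine ⟨fun r => (hF.contDiff r).mul (hG.contDiff r), fun n => ?_⟩
  choose A hA0 hA using hF.bound
  choose B hB0 hB using hG.bound
  refine ⟨∑ i ∈ Finset.range (n + 1), (n.choose i : ℝ) * A i * B (n - i),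
    Finset.sum_nonneg fun i _ => mul_nonneg (mul_nonneg (by positivity) (hA0 i)) (hB0 (n - i)),
    fun r hr x hx => ?_⟩
  have hr0 : 0 ≤ r := hr.1.le
  have hleibniz := norm_iteratedFDeriv_mul_le (𝕜 := ℝ) (N := (⊤ : ℕ∞)) (hF.contDiff r)
    (hG.contDiff r) x (n := n) (mod_cast le_top)
  refine (mul_le_mul_of_nonneg_right hleibniz (by positivity)).trans ?_
  rw [Finset.sum_mul, Finset.sum_mul]
  refine Finset.sum_le_sum fun i hi => ?_
  have hpow : r ^ n = r ^ i * r ^ (n - i) := by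
    rw [← pow_add, Nat.add_sub_cancel' (Finset.mem_range_succ_iff.1 hi)]
  calc (n.choose i : ℝ) * ‖iteratedFDeriv ℝ i (F r) x‖ * ‖iteratedFDeriv ℝ (n - i) (G r) x‖ * r ^ n
      = (n.choose i : ℝ) * ((‖iteratedFDeriv ℝ i (F r) x‖ * r ^ i) *
          (‖iteratedFDeriv ℝ (n - i) (G r) x‖ * r ^ (n - i))) := by rw [hpow]; ring
    _ ≤ (n.choose i : ℝ) * ((A i * r ^ a) * (B (n - i) * r ^ b)) :=
        mul_le_mul_of_nonneg_left (mul_le_mul (hA i r hr x hx) (hB (n - i) r hr x hx)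
          (by positivity) (mul_nonneg (hA0 i) (by positivity))) (by positivity)
    _ = (n.choose i : ℝ) * A i * B (n - i) * r ^ (a + b) := by rw [pow_add]; ring

variable [FiniteDimensional ℝ E]

lemma const (hu : ContDiff ℝ (⊤ : ℕ∞) u) (γ : E) : HasVanishingOrder γ 0 fun _ => u := by
  refine ⟨fun _ => hu, fun n => ?_⟩
  obtain ⟨C, hC0, hC⟩ := exists_norm_iteratedFDeriv_le_of_mem_closedBall hu γ zero_le_two n
  refine ⟨C, hC0, fun r ⟨hr, hr1⟩ x hx => ?_⟩
  rw [pow_zero]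
  exact mul_le_mul (hC x (closedBall_subset_closedBall (by linarith) hx))
    (pow_le_one₀ hr.le hr1) (by positivity) hC0

lemma of_apply_eq_zero (hu : ContDiff ℝ (⊤ : ℕ∞) u) (h0 : u γ = 0) :
    HasVanishingOrder γ 1 fun _ => u := by
  refine ⟨fun _ => hu, fun n => ?_⟩
  rcases n.eq_zero_or_pos with rfl | hn
  · obtain ⟨C, hC0, hC⟩ := exists_norm_iteratedFDeriv_le_of_mem_closedBall hu γ zero_le_two 1
    refine ⟨C * 2, by positivity, fun r ⟨_, hr1⟩ x hx => ?_⟩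
    have hlip := (convex_closedBall γ (2 : ℝ)).norm_image_sub_le_of_norm_fderiv_le (𝕜 := ℝ)
      (fun y _ => hu.differentiable (by simp) y)
      (fun y hy => (norm_iteratedFDeriv_one (𝕜 := ℝ) (f := u)).symm.trans_le (hC y hy))
      (mem_closedBall_self zero_le_two) (closedBall_subset_closedBall (by linarith) hx)
    rw [h0, sub_zero, ← dist_eq_norm] at hlip
    rw [norm_iteratedFDeriv_zero, pow_zero, mul_one, pow_one, mul_assoc]
    exact hlip.trans (mul_le_mul_of_nonneg_left hx hC0)
  · obtain ⟨C, hC0, hC⟩ := exists_norm_iteratedFDeriv_le_of_mem_closedBall hu γ zero_le_two n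
    refine ⟨C, hC0, fun r ⟨hr, hr1⟩ x hx => ?_⟩
    exact mul_le_mul (hC x (closedBall_subset_closedBall (by linarith) hx))
      (pow_le_pow_of_le_one hr.le hr1 hn) (by positivity) hC0

lemma pow (hu : HasVanishingOrder γ 1 fun _ => u) (m : ℕ) :
    HasVanishingOrder γ m fun _ x => u x ^ m := by
  induction m with
  | zero => simpa only [pow_zero] using const contDiff_const γ
  | succ m ih => simpa only [pow_succ] using ih.mul hu

lemma cutoff (γ : E) : HasVanishingOrder γ 0 (cutoff γ) := by
  refine ⟨contDiff_cutoff γ, fun n => ?_⟩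
  obtain ⟨C, hC0, hC⟩ := exists_norm_iteratedFDeriv_cutoff_le E n
  refine ⟨C, hC0, fun r hr x _ => ?_⟩
  rw [pow_zero, mul_one, ← le_div_iff₀ (pow_pos hr.1 n), div_eq_mul_inv, ← inv_pow]
  exact hC r hr.1 γ x

end HasVanishingOrder

lemma exists_norm_apply_le_mul_of_hasVanishingOrder {G : Type*} [NormedAddCommGroup G]
    [NormedSpace ℂ G] (T : 𝓢(E, ℂ) →L[ℂ] G) :
    ∃ N, ∀ γ F, HasVanishingOrder γ N F → ∃ D, ∀ r ∈ Ioc (0 : ℝ) 1, ∀ ψ : 𝓢(E, ℂ),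
      ⇑ψ = F r → tsupport ψ ⊆ closedBall γ (2 * r) → ‖T ψ‖ ≤ D * r := by
  obtain ⟨N, hN⟩ := exists_norm_apply_le_of_norm_iteratedFDeriv_le T
  refine ⟨N + 1, fun γ F hF => ?_⟩
  obtain ⟨D, hD⟩ := hN (‖γ‖ + 2)
  choose A hA0 hA using hF.bound
  let B := ∑ n ∈ Finset.range (N + 1), A n
  have hB0 : 0 ≤ B := Finset.sum_nonneg fun n _ => hA0 n
  refine ⟨D * B, fun r hr ψ hψ hsupp => ?_⟩
  have hr0 : 0 < r := hr.1
  rw [mul_assoc]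
  refine hD ψ (B * r) (by positivity) (fun x n hn => ?_) (hsupp.trans ?_)
  · by_cases hx : iteratedFDeriv ℝ n ψ x = 0
    · rw [hx, norm_zero]
      positivity
    · have hAB : A n ≤ B :=
        Finset.single_le_sum (fun i _ => hA0 i) (Finset.mem_range_succ_iff.2 hn)
      refine le_of_mul_le_mul_right ?_ (pow_pos hr0 n)
      calc ‖iteratedFDeriv ℝ n ψ x‖ * r ^ n ≤ A n * r ^ (N + 1) := by
            rw [hψ] at hx ⊢
            exact hA n r hr x (hsupp (hψ ▸ support_iteratedFDeriv_subset n hx))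
        _ ≤ B * r ^ (n + 1) := by
            gcongr ?_ * ?_
            exact pow_le_pow_of_le_one hr0.le hr.2 (by omega)
        _ = B * r * r ^ n := by rw [pow_succ', mul_assoc]
  · refine closedBall_subset_closedBall' ?_
    rw [dist_zero_right]
    linarith [hr.2]

end VanishingOrder

section PointSupport
variable {d : ℕ}

lemma smulLeftCLM_pow_apply {u : Rd d → ℂ} (hu : u.HasTemperateGrowth) (m : ℕ) (w : 𝓢(Rd d, ℂ)) :
    ⇑((smulLeftCLM ℂ u ^ m) w) = fun x => u x ^ m * w x := by
  induction m with
  | zero => simp only [pow_zero, one_mul, one_apply_eq_self]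
  | succ m ih =>
    ext x
    rw [pow_succ', mul_apply_eq_comp, smulLeftCLM_apply_apply hu, ih, smul_eq_mul, pow_succ',
      mul_assoc]

-- A distribution of finite order supported at `γ` is annihilated by high powers of functions
-- vanishing at `γ`.
lemma exists_apply_smulLeftCLM_pow_eq_zero (T : TemperedDist d) :
    ∃ M, ∀ (γ : Rd d) (u : Rd d → ℂ), u.HasTemperateGrowth → u γ = 0 → ∀ w : 𝓢(Rd d, ℂ),
      HasCompactSupport w → tsupport w ∩ tdSupport T ⊆ {γ} → T ((smulLeftCLM ℂ u ^ M) w) = 0 := by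
  obtain ⟨M, hM⟩ := exists_norm_apply_le_mul_of_hasVanishingOrder T
  refine ⟨M, fun γ u hu h0 w hw hsupp => ?_⟩
  set ψ := (smulLeftCLM ℂ u ^ M) w
  have hψfun : ⇑ψ = fun x => u x ^ M * w x := smulLeftCLM_pow_apply hu M w
  have hψw : tsupport ψ ⊆ tsupport w := hψfun ▸ tsupport_mul_subset_right
  obtain ⟨D, hD⟩ := hM γ (fun r x => cutoff γ r x * (u x ^ M * w x)) <| by
    simpa only [zero_add, add_zero] using (HasVanishingOrder.cutoff γ).mul
      (((HasVanishingOrder.of_apply_eq_zero hu.1 h0).pow M).mul (.const (w.smooth ⊤) γ))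
  have hcut : ∀ r, 0 < r → T ψ = T (smulLeftCLM ℂ (cutoff γ r) ψ) := fun r hr => by
    rw [← sub_eq_zero, ← map_sub]
    refine apply_eq_zero_of_disjoint_tdSupport T
      (hw.of_isClosed_subset (isClosed_tsupport _) ?_) (disjoint_left.2 fun x hx hxT => ?_)
    · exact (tsupport_sub_smulLeftCLM_cutoff_subset hr ψ).trans (sdiff_subset.trans hψw)
    · have hx' := tsupport_sub_smulLeftCLM_cutoff_subset hr ψ hx
      exact hx'.2 (hsupp ⟨hψw hx'.1, hxT⟩ ▸ mem_ball_self hr)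
  have hlim : Tendsto (fun r => D * r) (𝓝[>] 0) (𝓝 0) :=
    ((continuous_const_mul D).tendsto' 0 0 (mul_zero D)).mono_left nhdsWithin_le_nhds
  refine norm_le_zero_iff.1 (ge_of_tendsto hlim ?_)
  filter_upwards [Ioc_mem_nhdsGT zero_lt_one] with r hr
  rw [hcut r hr.1]
  refine hD r hr _ ?_ (((tsupport_smulLeftCLM_subset _ _).trans inter_subset_right).trans
    (tsupport_cutoff_subset hr.1))
  rw [smulLeftCLM_apply (hasTemperateGrowth_cutoff hr.1), hψfun]
  rfl

end PointSupport

section ForwardDifference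

lemma apply_eq_apply_zero_of_fwdDiff_iterate_eq_zero {V : Type*} [NormedAddCommGroup V]
    [NormedSpace ℝ V] {M : ℕ} {b : ℕ → V} (hb : ∃ B, ∀ n, ‖b n‖ ≤ B)
    (h : (fwdDiff 1)^[M] b = 0) (n : ℕ) : b n = b 0 := by
  induction M generalizing b n with
  | zero => rw [show b = 0 from h, Pi.zero_apply, Pi.zero_apply]
  | succ M ih =>
    obtain ⟨B, hB⟩ := hb
    have hconst : ∀ n, fwdDiff 1 b n = fwdDiff 1 b 0 := ih
      ⟨B + B, fun n => (norm_sub_le _ _).trans (add_le_add (hB _) (hB _))⟩ h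
    have hlin : ∀ n : ℕ, b n = b 0 + n • fwdDiff 1 b 0 := fun n => by
      induction n with
      | zero => rw [zero_smul, add_zero]
      | succ n ih => rw [succ_nsmul, ← add_assoc, ← ih, ← hconst n, fwdDiff, add_sub_cancel]
    suffices hzero : fwdDiff 1 b 0 = 0 by rw [hlin n, hzero, smul_zero, add_zero]
    by_contra hne
    obtain ⟨n, hn⟩ := exists_nat_gt ((B + B) / ‖fwdDiff 1 b 0‖)
    rw [div_lt_iff₀ (norm_pos_iff.2 hne), ← Real.norm_natCast, ← norm_smul,
      Nat.cast_smul_eq_nsmul, ← sub_eq_of_eq_add' (hlin n)] at hn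
    exact hn.not_ge ((norm_sub_le _ _).trans (add_le_add (hB _) (hB _)))

lemma fwdDiff_iterate_apply_pow {V W : Type*} [AddCommGroup V] [Module ℂ V] [TopologicalSpace V]
    [IsTopologicalAddGroup V] [AddCommGroup W] [Module ℂ W] [TopologicalSpace W]
    (T : V →L[ℂ] W) (A : V →L[ℂ] V) (v : V) (m : ℕ) :
    (fwdDiff 1)^[m] (fun n => T ((A ^ n) v)) = fun n => T (((A - 1) ^ m) ((A ^ n) v)) := by
  induction m with
  | zero => rfl
  | succ m ih =>
    ext n
    rw [Function.iterate_succ_apply', ih, fwdDiff, ← map_sub, ← map_sub, pow_succ A,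
      pow_succ (A - 1), ← pow_succ, pow_succ', mul_apply_eq_comp, mul_apply_eq_comp,
      sub_apply, one_apply_eq_self]

lemma apply_apply_eq_of_sub_one_pow_eq_zero {V W : Type*} [AddCommGroup V] [Module ℂ V]
    [TopologicalSpace V] [IsTopologicalAddGroup V] [NormedAddCommGroup W] [NormedSpace ℂ W]
    (T : V →L[ℂ] W) (A : V →L[ℂ] V) (v : V) {M : ℕ} (hbdd : ∃ B, ∀ n, ‖T ((A ^ n) v)‖ ≤ B)
    (hzero : ∀ n, T (((A - 1) ^ M) ((A ^ n) v)) = 0) : T (A v) = T v := by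
  have h := apply_eq_apply_zero_of_fwdDiff_iterate_eq_zero (V := W) hbdd
    ((fwdDiff_iterate_apply_pow T A v M).trans (funext hzero)) 1
  rwa [pow_one, pow_zero, one_apply_eq_self] at h

end ForwardDifference

section Fourier
open FourierTransform
variable {d : ℕ}

lemma iteratedDeriv_cexp_const_mul_ofReal (c : ℂ) (n : ℕ) :
    iteratedDeriv n (fun s : ℝ => Complex.exp (c * s)) =
      fun s : ℝ => c ^ n * Complex.exp (c * s) := by
  induction n with
  | zero => simp only [iteratedDeriv_zero, pow_zero, one_mul]
  | succ n ih =>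
    ext s
    have hexp : HasDerivAt (fun s : ℝ => Complex.exp (c * s)) (Complex.exp (c * s) * (c * 1)) s :=
      ((Complex.ofRealCLM.hasDerivAt (x := s)).const_mul c).cexp
    rw [iteratedDeriv_succ, ih, (hexp.const_mul (c ^ n)).deriv, mul_one, pow_succ]
    ring

lemma hasTemperateGrowth_e2pi_left (t : Rd d) : (fun x => e2pi x t).HasTemperateGrowth := by
  have hexp : (fun s : ℝ =>
      Complex.exp (((2 * Real.pi : ℝ) : ℂ) * Complex.I * s)).HasTemperateGrowth := by
    refine ⟨(contDiff_const.mul Complex.ofRealCLM.contDiff).cexp, fun n =>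
      ⟨0, ‖((2 * Real.pi : ℝ) : ℂ) * Complex.I‖ ^ n, fun s => ?_⟩⟩
    rw [norm_iteratedFDeriv_eq_norm_iteratedDeriv, iteratedDeriv_cexp_const_mul_ofReal, norm_mul,
      norm_pow, mul_right_comm, ← Complex.ofReal_mul, Complex.norm_exp_ofReal_mul_I, pow_zero]
  exact hexp.comp (Function.hasTemperateGrowth_inner_left t)

lemma fourierTD_apply (f : TemperedDist d) (φ : 𝓢(Rd d, ℂ)) : fourierTD f φ = f (𝓕 φ) := rfl

lemma fourier_apply_eq_integral_e2pi (ψ : 𝓢(Rd d, ℂ)) (y : Rd d) :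
    𝓕 ψ y = ∫ s, e2pi s (-y) * ψ s := by
  rw [SchwartzMap.fourier_coe, Real.fourier_eq']
  refine integral_congr_ae (Eventually.of_forall fun s => ?_)
  simp only [smul_eq_mul, e2pi, inner_neg_right]
  congr 2
  push_cast
  ring

lemma fourier_smulLeftCLM_e2pi (t : Rd d) (ψ : 𝓢(Rd d, ℂ)) :
    𝓕 (smulLeftCLM ℂ (fun x => e2pi x t) ψ) = (𝓕 ψ).compSubConstCLM ℂ t := by
  ext y
  simp only [compSubConstCLM_apply, fourier_apply_eq_integral_e2pi, smul_eq_mul,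
    smulLeftCLM_apply_apply (hasTemperateGrowth_e2pi_left t), neg_sub, sub_eq_neg_add t y,
    e2pi_add_right, mul_assoc]

lemma fourier_compSubConstCLM_apply (ξ : Rd d) (ψ : 𝓢(Rd d, ℂ)) (y : Rd d) :
    𝓕 (ψ.compSubConstCLM ℂ ξ) y = e2pi y (-ξ) * 𝓕 ψ y := by
  have hcomm : e2pi y (-ξ) = e2pi ξ (-y) := by rw [e2pi_neg_right, e2pi_comm, e2pi_neg_right]
  rw [fourier_apply_eq_integral_e2pi, fourier_apply_eq_integral_e2pi,
    ← integral_add_right_eq_self _ ξ, ← integral_const_mul, hcomm]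
  simp only [compSubConstCLM_apply, add_sub_cancel_right, e2pi_add_left]
  exact integral_congr_ae (Eventually.of_forall fun s => by ring)

end Fourier

section Quasiperiodicity
open FourierTransform
variable {d K : ℕ} {f : TemperedDist d} {Λ : Set (Rd d)} {C : ℝ} {P : Rd d → JetCoeff d K}

-- The modulation `A` below is unipotent modulo the kernel of `f̂`, so `f̂ (Aⁿ ψ)` is polynomial in
-- `n`; being bounded, it is constant.
lemma IsPointDistribution.apply_fourier_compSubConstCLM (h : IsPointDistribution f Λ C P)
    {γ : Rd d} {ψ : 𝓢(Rd d, ℂ)} (hψ : HasCompactSupport ψ)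
    (hsupp : tsupport ψ ∩ tdSupport (fourierTD f) ⊆ {γ}) (t : Rd d) :
    f ((𝓕 ψ).compSubConstCLM ℂ t) = e2pi γ t * f (𝓕 ψ) := by
  obtain ⟨M, hM⟩ := exists_apply_smulLeftCLM_pow_eq_zero (fourierTD f)
  obtain ⟨B, hB⟩ := h.exists_norm_apply_compSubConstCLM_le
  have he : (fun x => e2pi (x - γ) t).HasTemperateGrowth :=
    (hasTemperateGrowth_e2pi_left t).comp (by fun_prop : (fun x => x - γ).HasTemperateGrowth)
  set A : 𝓢(Rd d, ℂ) →L[ℂ] 𝓢(Rd d, ℂ) := smulLeftCLM ℂ fun x => e2pi (x - γ) t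
  have hA_sub_one : A - 1 = smulLeftCLM ℂ ((fun x => e2pi (x - γ) t) - fun _ => 1) := by
    rw [smulLeftCLM_sub he (.const 1), smulLeftCLM_const, one_smul]
    rfl
  have hA_pow (n : ℕ) : (A ^ n) ψ =
      (e2pi γ (n • t))⁻¹ • smulLeftCLM ℂ (fun x => e2pi x (n • t)) ψ := by
    ext x
    rw [smulLeftCLM_pow_apply he, smul_apply,
      smulLeftCLM_apply_apply (hasTemperateGrowth_e2pi_left _)]
    beta_reduce
    rw [← e2pi_nsmul_right, e2pi_sub_left, smul_eq_mul, smul_eq_mul]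
    ring
  have hT_pow (n : ℕ) : fourierTD f ((A ^ n) ψ) =
      (e2pi γ (n • t))⁻¹ * f ((𝓕 ψ).compSubConstCLM ℂ (n • t)) := by
    rw [hA_pow, map_smul, fourierTD_apply, fourier_smulLeftCLM_e2pi, smul_eq_mul]
  have hA_supp (n : ℕ) : tsupport ((A ^ n) ψ) ⊆ tsupport ψ := by
    rw [smulLeftCLM_pow_apply he]
    exact tsupport_mul_subset_right
  have hAψ : fourierTD f (A ψ) = fourierTD f ψ := by
    refine apply_apply_eq_of_sub_one_pow_eq_zero (M := M) (fourierTD f) A ψ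
      ⟨B * jetSeminorm K 0 (𝓕 ψ), fun n => ?_⟩ fun n => ?_
    · rw [hT_pow, norm_mul, norm_inv, norm_e2pi, inv_one, one_mul]
      exact hB _ _
    · rw [hA_sub_one]
      exact hM γ _ (he.sub (.const 1)) (by simp) _
        (hψ.of_isClosed_subset (isClosed_tsupport _) (hA_supp n))
        ((inter_subset_inter_left _ (hA_supp n)).trans hsupp)
  have hone := hT_pow 1
  rwa [pow_one, one_smul, hAψ, eq_inv_mul_iff_mul_eq₀ (e2pi_ne_zero _ _), eq_comm] at hone

lemma IsPointDistribution.exists_apply_fourier_compSubConstCLM_eq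
    (h : IsPointDistribution f Λ C P) {ψ : 𝓢(Rd d, ℂ)} (hψ : HasCompactSupport ψ)
    (hsupp : (tsupport ψ ∩ tdSupport (fourierTD f)).Subsingleton) :
    ∃ γ, ∀ t, f ((𝓕 ψ).compSubConstCLM ℂ t) = e2pi γ t * f (𝓕 ψ) := by
  obtain hempty | ⟨γ, hγ⟩ := hsupp.eq_empty_or_singleton
  · exact ⟨0, h.apply_fourier_compSubConstCLM hψ (hempty ▸ empty_subset _)⟩
  · exact ⟨γ, h.apply_fourier_compSubConstCLM hψ hγ.subset⟩

end Quasiperiodicity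

section SeparatingFunctionals
variable {𝕜 V ι : Type*}

lemma exists_finset_injective_pi [Field 𝕜] [AddCommGroup V] [Module 𝕜 V] [FiniteDimensional 𝕜 V]
    (A : ι → V →ₗ[𝕜] 𝕜) (hA : ∀ p ≠ 0, ∃ i, A i p ≠ 0) :
    ∃ s : Finset ι, Function.Injective (LinearMap.pi fun i : s => A i) := by
  classical
  let W : Finset ι → Submodule 𝕜 V := fun s => ⨅ i ∈ s, LinearMap.ker (A i)
  obtain ⟨_, ⟨s, rfl⟩, hmin⟩ := IsArtinian.set_has_minimal (range W) (range_nonempty W)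
  refine ⟨s, LinearMap.ker_eq_bot.1 ((Submodule.eq_bot_iff _).2 fun p hp => ?_)⟩
  by_contra hne
  obtain ⟨i, hi⟩ := hA p hne
  refine hmin _ ⟨insert i s, rfl⟩ (lt_of_le_of_ne ?_ fun heq => hi ?_)
  · exact biInf_mono fun j hj => Finset.mem_insert_of_mem hj
  · have hps : p ∈ W s := by
      simpa [W, LinearMap.mem_ker, funext_iff, Submodule.mem_iInf] using hp
    rw [← heq] at hps
    simp only [W, Submodule.mem_iInf] at hps
    exact hps i (Finset.mem_insert_self i s)

variable [RCLike 𝕜] [NormedAddCommGroup V] [NormedSpace 𝕜 V]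

/-- The map `V → 𝕜^ι` with the coordinates `A i`. -/
def euclideanPi (A : ι → V →L[𝕜] 𝕜) : V →L[𝕜] EuclideanSpace 𝕜 ι :=
  (EuclideanSpace.equiv ι 𝕜).symm ∘L ContinuousLinearMap.pi A

variable [FiniteDimensional 𝕜 V]

lemma exists_finset_pos_mul_norm_le (A : ι → V →L[𝕜] 𝕜) (hA : ∀ p ≠ 0, ∃ i, A i p ≠ 0) :
    ∃ (s : Finset ι) (κ : ℝ), 0 < κ ∧ ∀ p, κ * ‖p‖ ≤ ‖euclideanPi (fun i : s => A i) p‖ := by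
  obtain ⟨s, hs⟩ := exists_finset_injective_pi (fun i => (A i : V →ₗ[𝕜] 𝕜)) hA
  let L : V →ₗ[𝕜] EuclideanSpace 𝕜 s := (euclideanPi fun i : s => A i).toLinearMap
  obtain ⟨K, hK, hL⟩ := L.injective_iff_antilipschitz.1
    ((EuclideanSpace.equiv s 𝕜).symm.injective.comp hs)
  refine ⟨s, (K : ℝ)⁻¹, by positivity, fun p => ?_⟩
  rw [inv_mul_le_iff₀ (by positivity)]
  simpa [L] using hL.le_mul_norm_sub (x := p) (y := 0)

lemma tendsto_of_forall_tendsto_apply {α : Type*} {l : Filter α} {u : α → V} {p : V}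
    {A : ι → V →L[𝕜] 𝕜} (hA : ∀ p ≠ 0, ∃ i, A i p ≠ 0)
    (hu : ∀ i, Tendsto (fun x => A i (u x)) l (𝓝 (A i p))) : Tendsto u l (𝓝 p) := by
  obtain ⟨s, hs⟩ := exists_finset_injective_pi (fun i => (A i : V →ₗ[𝕜] 𝕜)) hA
  exact (LinearMap.isClosedEmbedding_of_injective (LinearMap.ker_eq_bot.2 hs)).tendsto_nhds_iff.2
    (tendsto_pi_nhds.2 fun i => hu i)

end SeparatingFunctionals

section Jets
variable {d K : ℕ}

lemma exists_jetEval_ne_zero {p : JetCoeff d K} (hp : p ≠ 0) {r : ℝ} (hr : 0 < r) :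
    ∃ φ : 𝓢(Rd d, ℂ), tsupport φ ⊆ ball 0 r ∧ jetEval 0 0 φ p ≠ 0 := by
  -- At `y ↦ exp ∑ᵢ aᵢ yᵢ`, cut off near the origin, the jet `p` takes a value `q a` that is
  -- polynomial in `a`.
  let q : MvPolynomial (Fin d) ℂ := ∑ k : mIdx d K,
    MvPolynomial.monomial (Finsupp.equivFunOnFinite.symm k.1) (p k * (-1) ^ (∑ i, k.1 i))
  have hq : q ≠ 0 := by
    obtain ⟨k, hk⟩ := Function.ne_iff.1 hp
    refine MvPolynomial.ne_zero_iff.2 ⟨Finsupp.equivFunOnFinite.symm k.1, ?_⟩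
    simpa [q, MvPolynomial.coeff_sum, MvPolynomial.coeff_monomial, Subtype.ext_iff.symm] using hk
  obtain ⟨a, ha⟩ : ∃ a, MvPolynomial.eval a q ≠ 0 := by
    by_contra! h
    exact hq (MvPolynomial.funext fun a => by rw [h, map_zero])
  have hr3 : 0 < r / 3 := by positivity
  have hcut := hasCompactSupport_cutoff (γ := (0 : Rd d)) hr3
  let g : 𝓢(Rd d, ℂ) := hcut.toSchwartzMap (contDiff_cutoff 0 (r / 3))
  let G : 𝓢(Rd d, ℂ) := (hcut.mul_left (f := expSum a)).toSchwartzMap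
    ((contDiff_expSum a).mul (contDiff_cutoff 0 (r / 3)))
  have hg : g =ᶠ[𝓝 0] fun _ => 1 := by
    filter_upwards [closedBall_mem_nhds 0 hr3] with y hy using cutoff_eq_one_of_dist_le hr3 hy
  have hG : jetEval 0 0 G p = MvPolynomial.eval a q := by
    rw [jetEval_zero_of_eq_expSum_mul (a := a) (g := g) fun _ => rfl, smul_apply, jetEval_apply]
    simp only [(twistedDeriv_eventuallyEq_const a _ hg).eq_of_nhds, q, map_sum,
      MvPolynomial.eval_monomial, Finsupp.prod_fintype _ _ fun _ => pow_zero _]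
    simp [expSum, mul_assoc]
  refine ⟨G, ?_, hG ▸ ha⟩
  refine (tsupport_mul_subset_right.trans (tsupport_cutoff_subset hr3)).trans ?_
  exact closedBall_subset_ball (by linarith)

end Jets

section AlmostPeriodicity
open FourierTransform
variable {d K : ℕ} {f : TemperedDist d} {Λ : Set (Rd d)} {C : ℝ} {P : Rd d → JetCoeff d K}

lemma dense_image_fourier_hasCompactSupport :
    Dense (𝓕 '' {ψ : 𝓢(Rd d, ℂ) | HasCompactSupport ψ} : Set 𝓢(Rd d, ℂ)) :=
  (fourierCLE ℂ 𝓢(Rd d, ℂ)).surjective.denseRange.dense_image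
    (fourierCLE ℂ 𝓢(Rd d, ℂ)).continuous (dense_setOf_hasCompactSupport _ _)

lemma compSubConstCLM_compSubConstCLM (φ : 𝓢(Rd d, ℂ)) (a b : Rd d) :
    (φ.compSubConstCLM ℂ a).compSubConstCLM ℂ b = φ.compSubConstCLM ℂ (a + b) := by
  ext x
  simp only [compSubConstCLM_apply, sub_sub, add_comm b]

lemma coe_compSubConstCLM_eq_comp (φ : 𝓢(Rd d, ℂ)) (a : Rd d) :
    ⇑(φ.compSubConstCLM ℂ a) = φ ∘ Homeomorph.subRight a :=
  funext fun _ => compSubConstCLM_apply _ _ _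

lemma hasCompactSupport_compSubConstCLM {φ : 𝓢(Rd d, ℂ)} (hφ : HasCompactSupport φ) (a : Rd d) :
    HasCompactSupport (φ.compSubConstCLM ℂ a) := by
  rw [coe_compSubConstCLM_eq_comp]
  exact hφ.comp_homeomorph _

lemma tsupport_compSubConstCLM_subset_closedBall {φ : 𝓢(Rd d, ℂ)} {b : Rd d} {r : ℝ}
    (hφ : tsupport φ ⊆ closedBall b r) (a : Rd d) :
    tsupport (φ.compSubConstCLM ℂ a) ⊆ closedBall (b + a) r := fun x hx => by
  rw [coe_compSubConstCLM_eq_comp, tsupport_comp_eq_preimage] at hx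
  simpa only [mem_closedBall, Homeomorph.subRight_apply, dist_eq_norm, sub_sub, add_comm a] using
    hφ hx

namespace IsPointDistribution

lemma equicontinuous_apply_compSubConstCLM (h : IsPointDistribution f Λ C P) :
    Equicontinuous fun (t : Rd d) (φ : 𝓢(Rd d, ℂ)) => f (φ.compSubConstCLM ℂ t) := by
  obtain ⟨B, hB⟩ := h.exists_norm_apply_compSubConstCLM_le
  refine (((norm_withSeminorms ℂ ℂ).equicontinuous_TFAE fun t : Rd d =>
    (f.comp (SchwartzMap.compSubConstCLM ℂ t)).toLinearMap).out 3 1).1 fun _ => ?_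
  refine ⟨B.toNNReal • jetSeminorm K 0, (continuous_jetSeminorm 0).const_smul _, fun t φ => ?_⟩
  refine (hB φ t).trans ?_
  exact mul_le_mul_of_nonneg_right (Real.le_coe_toNNReal B) (apply_nonneg _ _)

lemma tendsto_apply_compSubConstCLM_bohr (h : IsPointDistribution f Λ C P)
    (hΓ : UniformlyDiscrete (tdSupport (fourierTD f))) (φ : 𝓢(Rd d, ℂ)) :
    Tendsto (fun t => f (φ.compSubConstCLM ℂ t)) (bohr d) (𝓝 (f φ)) := by
  obtain ⟨δ, hδ, hsub⟩ := hΓ.exists_pos_subsingleton_inter_closedBall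
  refine dense_image_fourier_hasCompactSupport.induction ?_
    (h.equicontinuous_apply_compSubConstCLM.isClosed_setOfPred_tendsto f.continuous) φ
  rintro _ ⟨ψ, hψ, rfl⟩
  refine schwartz_induction_of_local
    (p := fun ψ => Tendsto (fun t => f ((𝓕 ψ).compSubConstCLM ℂ t)) (bohr d) (𝓝 (f (𝓕 ψ))))
    ?_ ?_ ψ hψ fun x _ => ⟨δ, hδ, fun ψ' hψ' => ?_⟩
  · simp only [FourierTransform.fourier_zero, map_zero, tendsto_const_nhds]
  · intro φ₁ φ₂ h₁ h₂
    simpa only [FourierTransform.fourier_add, map_add] using h₁.add h₂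
  · have hcomp : HasCompactSupport ψ' :=
      hψ.of_isClosed_subset (isClosed_tsupport _) (hψ'.trans inter_subset_left)
    have hsubsingleton : (tsupport ψ' ∩ tdSupport (fourierTD f)).Subsingleton :=
      (hsub x).anti fun y hy => ⟨hy.2, (hψ' hy.1).2⟩
    obtain ⟨γ, hγ⟩ := h.exists_apply_fourier_compSubConstCLM_eq hcomp hsubsingleton
    simp only [hγ, e2pi_comm γ]
    simpa only [one_mul] using (tendsto_e2pi_bohr γ).mul_const (f (𝓕 ψ'))

lemma apply_compSubConstCLM_eq_jetEval (h : IsPointDistribution f Λ C P) {φ : 𝓢(Rd d, ℂ)} {r : ℝ}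
    (hφ : tsupport φ ⊆ ball 0 r) {z : Rd d} (hz : Λ ∩ ball z r ⊆ {z}) :
    f (φ.compSubConstCLM ℂ z) = jetEval 0 0 φ (P z) := by
  rw [h.apply_compSubConstCLM, tsum_eq_single z, sub_self]
  intro x hx
  by_cases hxΛ : x ∈ Λ
  · rw [jetEval_eq_zero_of_notMem_tsupport, zero_apply]
    refine fun hmem => hx (hz ⟨hxΛ, ?_⟩)
    rw [mem_ball_iff_norm, ← mem_ball_zero_iff]
    exact hφ hmem
  · rw [h.isBoundedOn.apply_eq_zero hxΛ, map_zero]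

lemma bohrAdherent (h : IsPointDistribution f Λ C P)
    (hΓ : UniformlyDiscrete (tdSupport (fourierTD f))) : BohrAdherent P P := fun z => by
  obtain ⟨η, hη, hsep⟩ := h.uniformlyDiscrete
  obtain ⟨r, hr, hrz⟩ := h.uniformlyDiscrete.exists_pos_inter_ball_subset_singleton z
  let A (φ : {φ : 𝓢(Rd d, ℂ) // tsupport φ ⊆ ball 0 (min r η)}) : JetCoeff d K →L[ℂ] ℂ :=
    jetEval 0 0 φ.1
  have hA : ∀ p ≠ 0, ∃ φ, A φ p ≠ 0 := fun p hp =>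
    let ⟨φ, hφ, hφp⟩ := exists_jetEval_ne_zero hp (lt_min hr hη)
    ⟨⟨φ, hφ⟩, hφp⟩
  refine tendsto_of_forall_tendsto_apply hA fun φ => ?_
  have hval : f (φ.1.compSubConstCLM ℂ z) = A φ (P z) :=
    h.apply_compSubConstCLM_eq_jetEval (φ.2.trans (ball_subset_ball (min_le_left _ _))) hrz
  rw [← hval]
  refine ((h.tendsto_apply_compSubConstCLM_bohr hΓ _).mono_left inf_le_left).congr' ?_
  filter_upwards [mem_inf_of_right (mem_principal_self _)] with t ht
  rw [compSubConstCLM_compSubConstCLM]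
  refine h.apply_compSubConstCLM_eq_jetEval (φ.2.trans (ball_subset_ball (min_le_right _ _))) ?_
  intro y hy
  by_contra hne
  exact (hsep y hy.1 _ (h.isBoundedOn.support_subset ht) hne).not_gt hy.2

lemma exists_norm_sub_lt_of_apply_compSubConstCLM_ne_zero (h : IsPointDistribution f Λ C P)
    {φ : 𝓢(Rd d, ℂ)} {r : ℝ} (hφ : tsupport φ ⊆ ball 0 r) {t : Rd d}
    (ht : f (φ.compSubConstCLM ℂ t) ≠ 0) : ∃ x, P x ≠ 0 ∧ ‖x - t‖ < r := by
  rw [h.apply_compSubConstCLM] at ht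
  obtain ⟨x, hx⟩ : ∃ x, jetEval 0 (x - t) φ (P x) ≠ 0 := by
    by_contra! hzero
    exact ht (by simp only [hzero, tsum_zero])
  refine ⟨x, fun hPx => hx (by rw [hPx, map_zero]), mem_ball_zero_iff.1 (hφ ?_)⟩
  by_contra hmem
  exact hx (by rw [jetEval_eq_zero_of_notMem_tsupport 0 hmem, zero_apply])

lemma relDense_bohr (h : IsPointDistribution f Λ C P)
    (hΓ : UniformlyDiscrete (tdSupport (fourierTD f))) {x : Rd d} (hx : P x ≠ 0)
    {U : Set (Rd d)} (hU : U ∈ bohr d) : RelDense (U ∩ {h | P (x + h) ≠ 0}) := by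
  obtain ⟨V, hV, W, hW, hVW⟩ := mem_prod_iff.1 (tendsto_add_bohr_nhds_zero hU)
  obtain ⟨ρ, hρ, hρW⟩ := Metric.mem_nhds_iff.1 hW
  obtain ⟨r, hr, hrx⟩ := h.uniformlyDiscrete.exists_pos_inter_ball_subset_singleton x
  obtain ⟨φ, hφ, hφx⟩ := exists_jetEval_ne_zero hx (lt_min hρ hr)
  rw [← h.apply_compSubConstCLM_eq_jetEval (hφ.trans (ball_subset_ball (min_le_right _ _))) hrx]
    at hφx
  have hne : {t | f ((φ.compSubConstCLM ℂ x).compSubConstCLM ℂ t) ≠ 0} ∈ bohr d :=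
    (h.tendsto_apply_compSubConstCLM_bohr hΓ _).eventually_ne hφx
  obtain ⟨R, hR, hdense⟩ := relDense_of_mem_bohr (inter_mem hV hne)
  refine ⟨R + ρ, by positivity, fun y => ?_⟩
  obtain ⟨t, ⟨htV, ht⟩, hyt⟩ := hdense y
  rw [mem_ofPred_eq, compSubConstCLM_compSubConstCLM] at ht
  obtain ⟨l, hPl, hl⟩ := h.exists_norm_sub_lt_of_apply_compSubConstCLM_ne_zero
    (hφ.trans (ball_subset_ball (min_le_left _ _))) ht
  rw [← sub_sub] at hl
  refine ⟨l - x, ⟨?_, ?_⟩, (dist_triangle y t _).trans (add_le_add hyt ?_)⟩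
  · have hmem : (t, l - x - t) ∈ V ×ˢ W := ⟨htV, hρW (mem_ball_zero_iff.2 hl)⟩
    simpa only [mem_preimage, add_sub_cancel] using hVW hmem
  · rwa [mem_ofPred_eq, add_sub_cancel]
  · rw [dist_comm, dist_eq_norm]
    exact hl.le

end IsPointDistribution

end AlmostPeriodicity

section Recurrence
open Polynomial ComplexConjugate

lemma exists_ultrafilter_le_atTop_tendsto_pow :
    ∃ V : Ultrafilter ℕ, ↑V ≤ (atTop : Filter ℕ) ∧
      ∀ z : ℂ, ‖z‖ = 1 → Tendsto (fun n => z ^ n) V (𝓝 1) := by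
  obtain ⟨V, hV, hlim⟩ := mapClusterPt_iff_ultrafilter.1
    (mapClusterPt_one_atTop_pow (id : Circle → Circle))
  refine ⟨V, hV, fun z hz => ?_⟩
  let w : Circle := ⟨z, mem_sphere_zero_iff_norm.2 hz⟩
  exact (continuous_subtype_val.tendsto (1 : Circle)).comp (tendsto_pi_nhds.1 hlim w)

variable (V : Filter ℕ)

/-- The `*`-algebra of sequences recurrent along `V`: those with `a (m + n) → a m` as `n → V`, for
every `m`. -/
def recurrentSeq : StarSubalgebra ℂ (ℕ → ℂ) where
  carrier := {a | ∀ m, Tendsto (fun n => a (m + n)) V (𝓝 (a m))}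
  mul_mem' ha hb m := (ha m).mul (hb m)
  add_mem' ha hb m := (ha m).add (hb m)
  algebraMap_mem' _ _ := tendsto_const_nhds
  star_mem' ha m := (ha m).star

/-- The value at `n` of a recurrent sequence, as a ring homomorphism. -/
def evalRecurrentSeq (n : ℕ) : recurrentSeq V →+* ℂ :=
  (Pi.evalRingHom (fun _ => ℂ) n).comp (recurrentSeq V).subtype

/-- The functions `G s n` that are polynomial in `s`, with coefficients recurrent in `n`. -/
def IsRecurrentPolynomial (G : ℂ → ℕ → ℂ) : Prop :=
  ∃ q : (recurrentSeq V)[X], ∀ s n, G s n = q.eval₂ (evalRecurrentSeq V n) s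

variable {V} {G G' : ℂ → ℕ → ℂ}

lemma tsum_pow_mul_mem_recurrentSeq (hV : ∀ z : ℂ, ‖z‖ = 1 → Tendsto (fun n => z ^ n) V (𝓝 1))
    {ι : Type*} {w A : ι → ℂ} (hw : ∀ i, ‖w i‖ = 1) (hA : Summable A) :
    (fun n => ∑' i, w i ^ n * A i) ∈ recurrentSeq V := fun m => by
  refine tendsto_tsum_of_dominated_convergence hA.norm (fun i => ?_) (.of_forall fun n i => ?_)
  · simpa only [pow_add, mul_one] using ((hV (w i) (hw i)).const_mul (w i ^ m)).mul_const (A i)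
  · rw [norm_mul, norm_pow, hw, one_pow, one_mul]

lemma tendsto_eval₂_evalRecurrentSeq (q : (recurrentSeq V)[X]) {u : ℕ → ℂ} {x : ℂ}
    (hu : Tendsto u V (𝓝 x)) (m : ℕ) :
    Tendsto (fun n => q.eval₂ (evalRecurrentSeq V (m + n)) (u n)) V
      (𝓝 (q.eval₂ (evalRecurrentSeq V m) x)) := by
  simp only [eval₂_eq_sum_range]
  exact tendsto_finsetSum _ fun i _ => ((q.coeff i).2 m).mul (hu.pow i)

-- The diagonal kills the reversed polynomial at `1 / (m + n)`; letting `n → V` leaves the leading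
-- coefficient at `m`.
lemma eq_zero_of_forall_eval₂_natCast_eq_zero [V.NeBot] (hV : V ≤ atTop) {q : (recurrentSeq V)[X]}
    (hq : ∀ n : ℕ, q.eval₂ (evalRecurrentSeq V n) n = 0) : q = 0 := by
  refine leadingCoeff_eq_zero.1 (Subtype.ext (funext fun m => ?_))
  have hinv : Tendsto (fun n : ℕ => ((m + n : ℕ) : ℂ)⁻¹) V (𝓝 0) :=
    tendsto_inv_atTop_nhds_zero_nat.comp
      (tendsto_atTop_mono (fun n => Nat.le_add_left n m) (tendsto_id.mono_right hV))
  have hlim := tendsto_eval₂_evalRecurrentSeq q.reverse hinv m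
  rw [eval₂_at_zero, coeff_zero_reverse] at hlim
  refine tendsto_nhds_unique hlim (tendsto_const_nhds.congr' ?_)
  filter_upwards [hV (eventually_ge_atTop 1)] with n hn
  have hne : ((m + n : ℕ) : ℂ) ≠ 0 := Nat.cast_ne_zero.2 (by lia)
  let := invertibleOfNonzero hne
  rw [← invOf_eq_inv, (eval₂_reverse_eq_zero_iff _ _ _).2 (hq _)]
  rfl

namespace IsRecurrentPolynomial

lemma mul (h : IsRecurrentPolynomial V G) (h' : IsRecurrentPolynomial V G') :
    IsRecurrentPolynomial V fun s n => G s n * G' s n := by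
  obtain ⟨q, hq⟩ := h
  obtain ⟨q', hq'⟩ := h'
  exact ⟨q * q', fun s n => by simp only [eval₂_mul, hq, hq']⟩

lemma sub (h : IsRecurrentPolynomial V G) (h' : IsRecurrentPolynomial V G') :
    IsRecurrentPolynomial V fun s n => G s n - G' s n := by
  obtain ⟨q, hq⟩ := h
  obtain ⟨q', hq'⟩ := h'
  exact ⟨q - q', fun s n => by simp only [eval₂_sub, hq, hq']⟩

lemma sum {ι : Type*} (S : Finset ι) {G : ι → ℂ → ℕ → ℂ}
    (h : ∀ i ∈ S, IsRecurrentPolynomial V (G i)) :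
    IsRecurrentPolynomial V fun s n => ∑ i ∈ S, G i s n := by
  choose! q hq using h
  exact ⟨∑ i ∈ S, q i, fun s n => by
    rw [eval₂_finsetSum]
    exact Finset.sum_congr rfl fun i hi => hq i hi s n⟩

lemma pow_mul {a : ℕ → ℂ} (ha : a ∈ recurrentSeq V) (j : ℕ) :
    IsRecurrentPolynomial V fun s n => s ^ j * a n :=
  ⟨monomial j ⟨a, ha⟩, fun s n => by rw [eval₂_monomial, mul_comm]; rfl⟩

lemma star (h : IsRecurrentPolynomial V G) :
    IsRecurrentPolynomial V fun s n => conj (G (conj s) n) := by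
  obtain ⟨q, hq⟩ := h
  refine ⟨q.map (starRingEnd _), fun s n => ?_⟩
  simp only [hq, hom_eval₂, Complex.conj_conj, eval₂_map]
  rfl

lemma eq_zero_of_diagonal [V.NeBot] (h : IsRecurrentPolynomial V G) (hV : V ≤ atTop)
    (hG : ∀ n : ℕ, G n n = 0) (s : ℂ) (n : ℕ) : G s n = 0 := by
  obtain ⟨q, hq⟩ := h
  have hq_zero : q = 0 :=
    eq_zero_of_forall_eval₂_natCast_eq_zero hV fun n => (hq n n).symm.trans (hG n)
  rw [hq, hq_zero, eval₂_zero]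

end IsRecurrentPolynomial

end Recurrence

section Parseval
open ComplexConjugate

lemma integral_tsum_mul_of_summable {ι X : Type*} [MeasurableSpace X] {μ : Measure X} {a : ι → ℂ}
    (ha : Summable a) {u : ι → X → ℂ} (hu : ∀ i, AEStronglyMeasurable (u i) μ)
    (hu_le : ∀ i x, ‖u i x‖ ≤ 1) {w : X → ℂ} (hw : Integrable w μ) :
    ∫ x, (∑' i, a i * u i x) * w x ∂μ = ∑' i, a i * ∫ x, u i x * w x ∂μ := by
  have := ha.countable_support.to_subtype
  have hsub (b : ι → ℂ) : ∑' i : Function.support a, a i * b i = ∑' i, a i * b i :=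
    tsum_subtype_eq_of_support_subset (Function.support_mul_subset_left a b)
  have hinteg (i) : Integrable (fun x => a i * (u i x * w x)) μ :=
    (hw.bdd_mul (hu i) (.of_forall (hu_le i))).const_mul _
  have hle (i) : ∫ x, ‖a i * (u i x * w x)‖ ∂μ ≤ ‖a i‖ * ∫ x, ‖w x‖ ∂μ := by
    rw [← integral_const_mul]
    refine integral_mono (hinteg i).norm (hw.norm.const_mul _) fun x => ?_
    rw [norm_mul, norm_mul]
    gcongr
    exact mul_le_of_le_one_left (norm_nonneg _) (hu_le i x)
  have hsum : Summable fun i : Function.support a => ∫ x, ‖a i * (u i x * w x)‖ ∂μ :=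
    .of_nonneg_of_le (fun i => integral_nonneg fun x => norm_nonneg _) (fun i => hle i)
      ((ha.norm.mul_right _).subtype _)
  calc ∫ x, (∑' i, a i * u i x) * w x ∂μ
      = ∫ x, ∑' i : Function.support a, a i * (u i x * w x) ∂μ := by
        simp only [← hsub, ← tsum_mul_right, mul_assoc]
    _ = ∑' i : Function.support a, a i * ∫ x, u i x * w x ∂μ := by
        simp only [← integral_const_mul,
          integral_tsum_of_summable_integral_norm (fun i : Function.support a => hinteg i) hsum]
    _ = ∑' i, a i * ∫ x, u i x * w x ∂μ :=
        hsub fun i => ∫ x, u i x * w x ∂μ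

variable {d : ℕ}

lemma tendsto_integral_e2pi_pow_mul (w : Rd d → ℂ) (θ : Rd d) :
    Tendsto (fun n : ℕ => ∫ ξ, e2pi ξ θ ^ n * w ξ) atTop
      (𝓝 (if θ = 0 then ∫ ξ, w ξ else 0)) := by
  split_ifs with hθ
  · simp only [hθ, e2pi_zero_right, one_pow, one_mul, tendsto_const_nhds]
  · have hfreq : Tendsto (fun n : ℕ => -(n • θ)) atTop (cocompact (Rd d)) := by
      rw [← cobounded_eq_cocompact, ← tendsto_norm_atTop_iff_cobounded]
      simp only [norm_neg, RCLike.norm_nsmul ℝ, nsmul_eq_mul]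
      exact tendsto_natCast_atTop_atTop.atTop_mul_const (norm_pos_iff.2 hθ)
    refine ((tendsto_integral_exp_inner_smul_cocompact w).comp hfreq).congr fun n => ?_
    refine integral_congr_ae (.of_forall fun ξ => ?_)
    beta_reduce
    rw [← e2pi_nsmul_right, inner_neg_right, neg_neg, Circle.smul_def, smul_eq_mul,
      Real.fourierChar_apply, e2pi]
    push_cast
    ring_nf

lemma tendsto_integral_tsum_mul_e2pi_pow_mul {ι : Type*} {a : ι → ℂ} (ha : Summable a)
    (θ : ι → Rd d) {w : Rd d → ℂ} (hw : Integrable w) :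
    Tendsto (fun n : ℕ => ∫ ξ, (∑' i, a i * e2pi ξ (θ i) ^ n) * w ξ) atTop
      (𝓝 (∑' i, a i * if θ i = 0 then ∫ ξ, w ξ else 0)) := by
  have hnorm (n : ℕ) (i ξ) : ‖e2pi ξ (θ i) ^ n‖ = 1 := by rw [norm_pow, norm_e2pi, one_pow]
  have hintegral (n : ℕ) : ∫ ξ, (∑' i, a i * e2pi ξ (θ i) ^ n) * w ξ =
      ∑' i, a i * ∫ ξ, e2pi ξ (θ i) ^ n * w ξ :=
    integral_tsum_mul_of_summable ha
      (fun i => ((continuous_e2pi_left (θ i)).pow n).aestronglyMeasurable)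
      (fun i ξ => (hnorm n i ξ).le) hw
  simp only [hintegral]
  refine tendsto_tsum_of_dominated_convergence (ha.norm.mul_right (∫ ξ, ‖w ξ‖))
    (fun i => (tendsto_integral_e2pi_pow_mul w (θ i)).const_mul _) (.of_forall fun n i => ?_)
  rw [norm_mul]
  gcongr
  refine (norm_integral_le_integral_norm _).trans_eq ?_
  simp only [norm_mul, hnorm, one_mul]

/-- The almost periodic function `ξ ↦ ∑ α(x) e^{-2πi⟨x, ξ⟩}` with Fourier coefficients `α`. -/
def apSum (α : Rd d → ℂ) (ξ : Rd d) : ℂ := ∑' x, e2pi x (-ξ) * α x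

lemma apSum_mul_conj_apSum {α β : Rd d → ℂ} (hα : Summable α) (hβ : Summable β) (n : ℕ)
    (ξ : Rd d) : apSum α (n • ξ) * conj (apSum β (n • ξ)) =
      ∑' z : Rd d × Rd d, α z.1 * conj (β z.2) * e2pi ξ (z.2 - z.1) ^ n := by
  have hnorm {γ : Rd d → ℂ} (hγ : Summable γ) : Summable fun x => ‖e2pi x (-(n • ξ)) * γ x‖ := by
    simpa only [norm_mul, norm_e2pi, one_mul] using hγ.norm
  rw [apSum, apSum, Complex.conj_tsum, tsum_mul_tsum_of_summable_norm (hnorm hα)]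
  · refine tsum_congr fun z => ?_
    rw [map_mul, ← Complex.inv_eq_conj (norm_e2pi _ _), e2pi_neg_right, e2pi_neg_right, inv_inv,
      e2pi_comm ξ, e2pi_sub_left, mul_pow, inv_pow, ← e2pi_nsmul_right, ← e2pi_nsmul_right]
    ring
  · simpa only [RCLike.norm_conj] using hnorm hβ

-- Averaging over `n • ξ` as `n → ∞` keeps only the diagonal of the product.
lemma tendsto_integral_apSum_mul_conj_apSum {α β : Rd d → ℂ} (hα : Summable α) (hβ : Summable β)
    {w : Rd d → ℂ} (hw : Integrable w) :
    Tendsto (fun n : ℕ => ∫ ξ, apSum α (n • ξ) * conj (apSum β (n • ξ)) * w ξ) atTop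
      (𝓝 ((∑' x, α x * conj (β x)) * ∫ ξ, w ξ)) := by
  have hprod : Summable fun z : Rd d × Rd d => α z.1 * conj (β z.2) :=
    summable_mul_of_summable_norm (g := fun y => conj (β y)) hα.norm
      (by simpa only [RCLike.norm_conj] using hβ.norm)
  have hdiag : ∑' z : Rd d × Rd d, α z.1 * conj (β z.2) *
      (if z.2 - z.1 = 0 then ∫ ξ, w ξ else 0) = (∑' x, α x * conj (β x)) * ∫ ξ, w ξ := by
    have hinj : Function.Injective fun x : Rd d => (x, x) := fun x y h => congrArg Prod.fst h
    rw [← tsum_mul_right, ← hinj.tsum_eq]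
    · simp only [sub_self, if_true]
    · refine Function.support_subset_iff'.2 fun z hz => ?_
      rw [if_neg (sub_ne_zero.2 fun h => hz ⟨z.1, Prod.ext rfl h.symm⟩), mul_zero]
  rw [← hdiag]
  simp only [apSum_mul_conj_apSum hα hβ]
  exact tendsto_integral_tsum_mul_e2pi_pow_mul hprod (fun z => z.2 - z.1) hw

lemma tsum_mul_conj_eq_of_apSum_mul_conj_eq {α β α' β' : Rd d → ℂ} (hα : Summable α)
    (hβ : Summable β) (hα' : Summable α') (hβ' : Summable β')
    (h : ∀ ξ, apSum α ξ * conj (apSum β ξ) = apSum α' ξ * conj (apSum β' ξ)) :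
    ∑' x, α x * conj (β x) = ∑' x, α' x * conj (β' x) := by
  have hweight : ∫ ξ : Rd d, (decayWeight ξ : ℂ) ≠ 0 := by
    rw [integral_complex_ofReal, Complex.ofReal_ne_zero]
    refine ((integral_pos_iff_support_of_nonneg (fun ξ => (decayWeight_pos ξ).le)
      integrable_decayWeight).2 ?_).ne'
    rw [Function.support_eq_univ fun ξ => (decayWeight_pos ξ).ne']
    exact isOpen_univ.measure_pos _ univ_nonempty
  have hlim := tendsto_integral_apSum_mul_conj_apSum hα hβ integrable_decayWeight.ofReal
  simp only [h] at hlim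
  exact mul_right_cancel₀ hweight (tendsto_nhds_unique hlim
    (tendsto_integral_apSum_mul_conj_apSum hα' hβ' integrable_decayWeight.ofReal))

end Parseval

section Stationarity
open ComplexConjugate FourierTransform
variable {d K : ℕ}

lemma apSum_finsetSum {ι : Type*} (S : Finset ι) {α : ι → Rd d → ℂ}
    (hα : ∀ i ∈ S, Summable (α i)) (ξ : Rd d) :
    apSum (fun x => ∑ i ∈ S, α i x) ξ = ∑ i ∈ S, apSum (α i) ξ := by
  simp only [apSum, Finset.mul_sum]
  refine Summable.tsum_finsetSum fun i hi => .of_norm ?_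
  simpa only [norm_mul, norm_e2pi, one_mul] using (hα i hi).norm

lemma apSum_const_mul (c : ℂ) (α : Rd d → ℂ) (ξ : Rd d) :
    apSum (fun x => c * α x) ξ = c * apSum α ξ := by
  simp only [apSum, mul_left_comm, tsum_mul_left]

variable {V : Filter ℕ}

lemma apSum_mem_recurrentSeq (hV : ∀ z : ℂ, ‖z‖ = 1 → Tendsto (fun n => z ^ n) V (𝓝 1))
    {α : Rd d → ℂ} (hα : Summable α) (ζ θ : Rd d) :
    (fun n : ℕ => apSum α (ζ + n • θ)) ∈ recurrentSeq V := by
  have hsum : Summable fun x => e2pi x (-ζ) * α x :=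
    .of_norm (by simpa only [norm_mul, norm_e2pi, one_mul] using hα.norm)
  convert tsum_pow_mul_mem_recurrentSeq hV (fun x => norm_e2pi x (-θ)) hsum using 2 with n
  refine tsum_congr fun x => ?_
  rw [neg_add, e2pi_add_right, ← smul_neg, e2pi_nsmul_right]
  ring

lemma isRecurrentPolynomial_apSum_mul_twistedDeriv
    (hV : ∀ z : ℂ, ‖z‖ = 1 → Tendsto (fun n => z ^ n) V (𝓝 1)) {c : Rd d → ℂ}
    (hc : ∀ φ : 𝓢(Rd d, ℂ), Summable fun x => c x * φ x) (a b : Fin d → ℂ) (k : Fin d → ℕ)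
    (g : 𝓢(Rd d, ℂ)) (ζ θ : Rd d) :
    IsRecurrentPolynomial V fun s n =>
      apSum (fun x => c x * twistedDeriv (a + s • b) k g x) (ζ + n • θ) := by
  obtain ⟨N, A, hA⟩ := exists_twistedDeriv_add_smul_eq_sum a b k
  convert IsRecurrentPolynomial.sum (Finset.range N) fun j _ =>
    .pow_mul (apSum_mem_recurrentSeq hV (hc (A j g)) ζ θ) j using 3 with s n
  simp only [← apSum_const_mul]
  rw [← apSum_finsetSum _ fun j _ => (hc (A j g)).mul_left _]
  simp only [hA, sum_apply, smul_apply, smul_eq_mul, Finset.mul_sum,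
    mul_left_comm]

variable {f : TemperedDist d} {Λ : Set (Rd d)} {C : ℝ} {P : Rd d → JetCoeff d K}

namespace IsBoundedOn

lemma summable_apply_add_mul (hP : IsBoundedOn Λ C P) (hΛ : UniformlyDiscrete Λ)
    (φ : 𝓢(Rd d, ℂ)) (t : Rd d) (k : mIdx d K) : Summable fun x => P (x + t) k * φ x := by
  obtain ⟨M, hM⟩ := hΛ.exists_summable_tsum_decayWeight_le
  refine .of_norm_bounded (((hM t).1.comp_injective (add_left_injective t)).mul_left
    (C * decaySeminorm d φ)) fun x => ?_
  rw [norm_mul]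
  by_cases hx : x + t ∈ Λ
  · rw [Function.comp_apply, indicator_of_mem hx, add_sub_cancel_right, mul_assoc]
    exact mul_le_mul ((norm_le_pi_norm _ k).trans (hP.norm_le _)) (norm_le_decaySeminorm_mul φ x)
      (norm_nonneg _) ((norm_nonneg _).trans (hP.norm_le 0))
  · rw [Function.comp_apply, indicator_of_notMem hx, hP.apply_eq_zero hx, Pi.zero_apply, norm_zero,
      zero_mul, mul_zero]

lemma summable_jetEval_apply_add (hP : IsBoundedOn Λ C P) (hΛ : UniformlyDiscrete Λ)
    (a : Fin d → ℂ) (φ : 𝓢(Rd d, ℂ)) (t : Rd d) :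
    Summable fun x => jetEval a x φ (P (x + t)) := by
  simpa only [Function.comp_def, add_sub_cancel_right] using
    (hP.summable_jetEval_apply hΛ a φ t).comp_injective (add_left_injective t)

lemma isRecurrentPolynomial_apSum_jetEval (hP : IsBoundedOn Λ C P) (hΛ : UniformlyDiscrete Λ)
    (hV : ∀ z : ℂ, ‖z‖ = 1 → Tendsto (fun n => z ^ n) V (𝓝 1)) (a b : Fin d → ℂ)
    (g : 𝓢(Rd d, ℂ)) (ζ θ t : Rd d) : IsRecurrentPolynomial V fun s n =>
      apSum (fun x => jetEval (a + s • b) x g (P (x + t))) (ζ + n • θ) := by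
  have hsum (k : mIdx d K) (φ : 𝓢(Rd d, ℂ)) :
      Summable fun x => (-1) ^ (∑ i, k.1 i) * P (x + t) k * φ x := by
    simpa only [mul_assoc] using (hP.summable_apply_add_mul hΛ φ t k).mul_left _
  convert IsRecurrentPolynomial.sum Finset.univ fun k _ =>
    isRecurrentPolynomial_apSum_mul_twistedDeriv hV (hsum k) a b k.1 g ζ θ using 3 with s n
  rw [← apSum_finsetSum _ fun k _ => hsum k _]
  simp only [jetEval_apply, mul_assoc, mul_left_comm]

end IsBoundedOn

namespace IsPointDistribution

lemma apSum_jetEval_fourier (h : IsPointDistribution f Λ C P) (ψ : 𝓢(Rd d, ℂ)) (ξ t : Rd d) :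
    apSum (fun x => jetEval (charFreq ξ) x (𝓕 ψ) (P (x + t))) ξ =
      f ((𝓕 (ψ.compSubConstCLM ℂ ξ)).compSubConstCLM ℂ t) := by
  have hmod (y : Rd d) : 𝓕 (ψ.compSubConstCLM ℂ ξ) y = expSum (charFreq ξ) y * 𝓕 ψ y := by
    rw [fourier_compSubConstCLM_apply, expSum_charFreq]
  rw [h.apply_compSubConstCLM, ← (Equiv.addRight t).tsum_eq, apSum]
  simp only [Equiv.coe_addRight, add_sub_cancel_right, jetEval_zero_of_eq_expSum_mul hmod,
    smul_apply, smul_eq_mul, expSum_charFreq]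

lemma apSum_mul_conj_apSum_jetEval (h : IsPointDistribution f Λ C P) {δ : ℝ}
    (hδ : ∀ x, (tdSupport (fourierTD f) ∩ closedBall x δ).Subsingleton) {ψ : 𝓢(Rd d, ℂ)}
    (hψ : HasCompactSupport ψ) (hψδ : tsupport ψ ⊆ closedBall 0 δ) (ζ u t ξ : Rd d) :
    apSum (fun x => jetEval (charFreq ζ) x (𝓕 ψ) (P (x + (t + u)))) ξ *
        conj (apSum (fun x => jetEval (charFreq ζ) x (𝓕 ψ) (P (x + t))) ξ) =
      apSum (fun x => jetEval (charFreq ζ) x (𝓕 ψ) (P (x + u))) ξ *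
        conj (apSum (fun x => jetEval (charFreq ζ) x (𝓕 ψ) (P (x + 0))) ξ) := by
  obtain ⟨V, hV_le, hV⟩ := exists_ultrafilter_le_atTop_tendsto_pow
  let G (t : Rd d) (s : ℂ) (n : ℕ) : ℂ := apSum
    (fun x => jetEval (charFreq ζ + s • charFreq (ξ - ζ)) x (𝓕 ψ) (P (x + t))) (ζ + n • (ξ - ζ))
  have hG (t) : IsRecurrentPolynomial V (G t) :=
    h.isBoundedOn.isRecurrentPolynomial_apSum_jetEval h.uniformlyDiscrete hV _ _ _ _ _ _
  have hG_diagonal (t) (n : ℕ) : G t n n =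
      f ((𝓕 (ψ.compSubConstCLM ℂ (ζ + n • (ξ - ζ)))).compSubConstCLM ℂ t) := by
    simp only [G, ← charFreq_add_nsmul, h.apSum_jetEval_fourier]
  have hG_zero_one (t) : G t 0 1 =
      apSum (fun x => jetEval (charFreq ζ) x (𝓕 ψ) (P (x + t))) ξ := by
    simp only [G, zero_smul, add_zero, one_smul, add_sub_cancel]
  have hzero := (((hG (t + u)).mul (hG t).star).sub ((hG u).mul (hG 0).star)).eq_zero_of_diagonal
    hV_le (fun n => ?_) 0 1
  · simpa only [map_zero, hG_zero_one, sub_eq_zero] using hzero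
  · obtain ⟨γ, hγ⟩ : ∃ γ, ∀ t, G t n n = e2pi γ t * G 0 n n := by
      let ψn := ψ.compSubConstCLM ℂ (ζ + n • (ξ - ζ))
      have hψn : tsupport ψn ⊆ closedBall (ζ + n • (ξ - ζ)) δ := by
        simpa only [zero_add] using tsupport_compSubConstCLM_subset_closedBall hψδ _
      obtain ⟨γ, hγ⟩ := h.exists_apply_fourier_compSubConstCLM_eq
        (hasCompactSupport_compSubConstCLM hψ _) ((hδ _).anti fun y hy => ⟨hy.2, hψn hy.1⟩)
      exact ⟨γ, fun t => by rw [hG_diagonal, hG_diagonal, hγ, hγ 0, e2pi_zero_right, one_mul]⟩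
    simp only [map_natCast]
    rw [hγ (t + u), hγ t, hγ u, e2pi_add_right, map_mul, ← Complex.inv_eq_conj (norm_e2pi _ _)]
    have := e2pi_ne_zero γ t
    field_simp
    ring

lemma jointlyStationary_jetEval (h : IsPointDistribution f Λ C P) {δ : ℝ}
    (hδ : ∀ x, (tdSupport (fourierTD f) ∩ closedBall x δ).Subsingleton) {ψ : 𝓢(Rd d, ℂ)}
    (hψ : HasCompactSupport ψ) (hψδ : tsupport ψ ⊆ closedBall 0 δ) (ζ : Rd d) :
    JointlyStationary (fun x => jetEval (charFreq ζ) x (𝓕 ψ)) P P := fun u t => by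
  have hsum := h.isBoundedOn.summable_jetEval_apply_add h.uniformlyDiscrete (charFreq ζ) (𝓕 ψ)
  rw [corr, corr, ← (Equiv.addRight t).tsum_eq]
  simpa only [RCLike.inner_apply, Equiv.coe_addRight, add_sub_cancel_right, sub_zero, add_zero,
    add_assoc] using tsum_mul_conj_eq_of_apSum_mul_conj_eq (hsum (t + u)) (hsum t) (hsum u) (hsum 0)
      (h.apSum_mul_conj_apSum_jetEval hδ hψ hψδ ζ u t)

end IsPointDistribution

end Stationarity

section EuclideanPi
variable {E 𝕜 V ι : Type*} [AddCommGroup E] [RCLike 𝕜] [NormedAddCommGroup V] [NormedSpace 𝕜 V]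
  [Fintype ι] {A : ι → E → V →L[𝕜] 𝕜} {F G : E → V} {Λ : Set E}

lemma norm_euclideanPi_sq_le (A : ι → V →L[𝕜] 𝕜) : ‖euclideanPi A‖ ^ 2 ≤ ∑ i, ‖A i‖ ^ 2 := by
  refine (Real.le_sqrt (norm_nonneg _) (by positivity)).1 ?_
  refine ContinuousLinearMap.opNorm_le_bound _ (Real.sqrt_nonneg _) fun p => ?_
  rw [EuclideanSpace.norm_eq, ← Real.sqrt_sq (norm_nonneg p), ← Real.sqrt_mul (by positivity),
    Finset.sum_mul]
  refine Real.sqrt_le_sqrt (Finset.sum_le_sum fun i _ => ?_)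
  rw [← mul_pow]
  exact pow_le_pow_left₀ (norm_nonneg _) ((A i).le_opNorm p) 2

lemma SqSummableOn.euclideanPi (hA : ∀ i, SqSummableOn (A i) Λ) :
    SqSummableOn (fun x => euclideanPi fun i => A i x) Λ := fun t => by
  refine .of_nonneg_of_le (indicator_nonneg fun _ _ => sq_nonneg _) (fun x => ?_)
    (summable_sum fun i (_ : i ∈ Finset.univ) => hA i t)
  by_cases hx : x ∈ Λ
  · simpa only [indicator_of_mem hx] using norm_euclideanPi_sq_le _
  · simp only [indicator_of_notMem hx, Finset.sum_const_zero, le_refl]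

lemma corr_euclideanPi (hF : ∀ i, SqSummable (A i) F) (hG : ∀ i, SqSummable (A i) G) (t : E) :
    corr (fun x => euclideanPi fun i => A i x) t F G = ∑ i, corr (A i) t F G := by
  have hsum (i : ι) := lp.summable_inner (𝕜 := 𝕜) ((hG i).toL2 t) ((hF i).toL2 t)
  exact (tsum_congr fun x => PiLp.inner_apply _ _).trans
    (Summable.tsum_finsetSum fun i _ => hsum i)

lemma JointlyStationary.euclideanPi (hF : ∀ i, SqSummable (A i) F) (hG : ∀ i, SqSummable (A i) G)
    (h : ∀ i, JointlyStationary (A i) F G) :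
    JointlyStationary (fun x => euclideanPi fun i => A i x) F G := fun k t => by
  simp only [corr_euclideanPi (fun i => (hF i).translate k) hG, h _ k t]

end EuclideanPi

section Window
open FourierTransform
variable {d K : ℕ} {f : TemperedDist d} {Λ : Set (Rd d)} {C : ℝ} {P : Rd d → JetCoeff d K}

lemma exists_jetEval_fourier_ne_zero {p : JetCoeff d K} (hp : p ≠ 0) {δ : ℝ} (hδ : 0 < δ) :
    ∃ (ζ : Rd d) (ψ : 𝓢(Rd d, ℂ)), HasCompactSupport ψ ∧ tsupport ψ ⊆ closedBall 0 δ ∧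
      jetEval (charFreq ζ) 0 (𝓕 ψ) p ≠ 0 := by
  by_contra! hzero
  have hlocal (ζ : Rd d) (ψ : 𝓢(Rd d, ℂ)) (hψ : HasCompactSupport ψ)
      (hψζ : tsupport ψ ⊆ closedBall ζ δ) : jetEval 0 0 (𝓕 ψ) p = 0 := by
    have hmod (y : Rd d) : 𝓕 ψ y = expSum (charFreq ζ) y * 𝓕 (ψ.compSubConstCLM ℂ (-ζ)) y := by
      rw [expSum_charFreq, ← fourier_compSubConstCLM_apply, compSubConstCLM_compSubConstCLM,
        neg_add_cancel]
      congr 2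
      ext x
      rw [compSubConstCLM_apply, sub_zero]
    have hshift := tsupport_compSubConstCLM_subset_closedBall hψζ (-ζ)
    rw [add_neg_cancel] at hshift
    rw [jetEval_zero_of_eq_expSum_mul hmod, smul_apply,
      hzero ζ _ (hasCompactSupport_compSubConstCLM hψ _) hshift, smul_zero]
  have hcompact (ψ : 𝓢(Rd d, ℂ)) (hψ : HasCompactSupport ψ) : jetEval 0 0 (𝓕 ψ) p = 0 := by
    refine schwartz_induction_of_local (p := fun ψ => jetEval 0 0 (𝓕 ψ) p = 0) ?_ ?_ ψ hψ
      fun x _ => ⟨δ, hδ, fun ψ' hψ' => hlocal x ψ' ?_ (hψ'.trans inter_subset_right)⟩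
    · rw [FourierTransform.fourier_zero, map_zero, zero_apply]
    · intro φ₁ φ₂ h₁ h₂
      rw [FourierTransform.fourier_add, map_add, add_apply, h₁, h₂, add_zero]
    · exact hψ.of_isClosed_subset (isClosed_tsupport _) (hψ'.trans inter_subset_left)
  obtain ⟨φ, -, hφ⟩ := exists_jetEval_ne_zero hp one_pos
  refine hφ (congrFun (Continuous.ext_on dense_image_fourier_hasCompactSupport
    (continuous_jetEval_apply 0 0 p) continuous_const ?_) φ)
  rintro _ ⟨ψ, hψ, rfl⟩
  exact hcompact ψ hψ

lemma sqSummableOn_jetEval (hΛ : UniformlyDiscrete Λ) (a : Fin d → ℂ) (g : 𝓢(Rd d, ℂ)) :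
    SqSummableOn (fun x => (jetEval a x g : JetCoeff d K →L[ℂ] ℂ)) Λ := fun t => by
  obtain ⟨M, hM⟩ := hΛ.exists_summable_tsum_decayWeight_le
  refine .of_nonneg_of_le (indicator_nonneg fun _ _ => sq_nonneg _) (fun x => ?_)
    ((hM t).1.mul_left (jetSeminorm K a g ^ 2))
  rw [← indicator_const_mul]
  refine indicator_le_indicator ?_
  calc ‖(jetEval a (x - t) g : JetCoeff d K →L[ℂ] ℂ)‖ ^ 2
    _ ≤ (jetSeminorm K a g * decayWeight (x - t)) ^ 2 :=
        pow_le_pow_left₀ (norm_nonneg _) (norm_jetEval_le _ _ _) 2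
    _ = jetSeminorm K a g ^ 2 * decayWeight (x - t) ^ 2 := mul_pow _ _ _
    _ ≤ _ := mul_le_mul_of_nonneg_left
        (pow_le_of_le_one (decayWeight_pos _).le (decayWeight_le_one _) two_ne_zero) (sq_nonneg _)

namespace IsPointDistribution

theorem isFiniteUnionOfLatticeTranslates_support (h : IsPointDistribution f Λ C P)
    (hΓ : UniformlyDiscrete (tdSupport (fourierTD f))) {c : ℝ} (hc : 0 < c)
    (hP : ∀ x, P x ≠ 0 → c ≤ ‖P x‖) : IsFiniteUnionOfLatticeTranslates (Function.support P) := by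
  obtain ⟨δ, hδ, hsub⟩ := hΓ.exists_pos_subsingleton_inter_closedBall
  let Q := {q : Rd d × 𝓢(Rd d, ℂ) // HasCompactSupport q.2 ∧ tsupport q.2 ⊆ closedBall 0 δ}
  let A (q : Q) (x : Rd d) : JetCoeff d K →L[ℂ] ℂ := jetEval (charFreq q.1.1) x (𝓕 q.1.2)
  have hA : ∀ p ≠ 0, ∃ q, A q 0 p ≠ 0 := fun p hp =>
    let ⟨ζ, ψ, hψ, hψδ, hne⟩ := exists_jetEval_fourier_ne_zero hp hδ
    ⟨⟨(ζ, ψ), hψ, hψδ⟩, hne⟩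
  obtain ⟨s, κ, hκ0, hκ⟩ := exists_finset_pos_mul_norm_le (fun q => A q 0) hA
  have hsq (q : Q) : SqSummableOn (A q) Λ := sqSummableOn_jetEval h.uniformlyDiscrete _ _
  have hPsq (q : Q) : SqSummable (A q) P := h.isBoundedOn.sqSummable (hsq q)
  have hcomb : StationaryComb (fun x => euclideanPi fun q : s => A q x) Λ c C P := {
    isBoundedOn := h.isBoundedOn
    le_norm := hP
    stationary := .euclideanPi (fun q => hPsq q) (fun q => hPsq q) fun q =>
      h.jointlyStationary_jetEval hsub q.1.2.1 q.1.2.2 _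
    adherent := h.bohrAdherent hΓ
    recurrent := fun _ hx _ hU => h.relDense_bohr hΓ hx hU }
  exact hcomb.isFiniteUnionOfLatticeTranslates_support hc hκ0 hκ h.uniformlyDiscrete
    (.euclideanPi fun q => hsq q)

end IsPointDistribution

end Window

section Coefficients
variable {d K : ℕ} {Λ : Set (Rd d)} {c C : ℝ} {p : (Fin d → ℕ) → Rd d → ℂ}

/-- The coefficients `p_k(x)` with `‖k‖ ≤ K`, collected into one vector for every point `x`. -/
def jetCoeffs (K : ℕ) (p : (Fin d → ℕ) → Rd d → ℂ) (x : Rd d) : JetCoeff d K := fun k => p k x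

lemma le_norm_jetCoeffs (hp : ∀ k ∉ mIdx d K, ∀ x, p k x = 0) (hc : 0 < c) {x : Rd d}
    (hx : ∃ k, c ≤ ‖p k x‖) : c ≤ ‖jetCoeffs K p x‖ := by
  obtain ⟨k, hk⟩ := hx
  have hkK : k ∈ mIdx d K := by
    by_contra h
    exact (hc.trans_le hk).ne' (by rw [hp k h x, norm_zero])
  exact hk.trans (norm_le_pi_norm (jetCoeffs K p x) ⟨k, hkK⟩)

lemma support_jetCoeffs_subset (hp : ∀ k x, p k x ≠ 0 → x ∈ Λ) :
    Function.support (jetCoeffs K p) ⊆ Λ := fun x hx =>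
  let ⟨k, hk⟩ := Function.ne_iff.1 hx
  hp k x hk

lemma isBoundedOn_jetCoeffs (hp : ∀ k x, p k x ≠ 0 → x ∈ Λ) (hC : ∀ x ∈ Λ, ∀ k, ‖p k x‖ ≤ C) :
    IsBoundedOn Λ (max C 0) (jetCoeffs K p) where
  support_subset := support_jetCoeffs_subset hp
  norm_le x := (pi_norm_le_iff_of_nonneg (le_max_right _ _)).2 fun k => by
    by_cases hx : x ∈ Λ
    · exact (hC x hx k).trans (le_max_left _ _)
    · rw [jetCoeffs, not_not.1 (mt (hp k x) hx), norm_zero]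
      exact le_max_right _ _

lemma sum_mul_dkDelta (p : (Fin d → ℕ) → Rd d → ℂ) (x : Rd d) (φ : 𝓢(Rd d, ℂ)) :
    ∑ k ∈ mIdx d K, p k x * dkDelta k x φ = jetEval 0 x φ (jetCoeffs K p x) := by
  simp only [jetEval_apply, jetCoeffs, dkDelta, Dmulti_eq_twistedDeriv_zero]
  exact (Finset.sum_coe_sort (mIdx d K) _).symm

end Coefficients

end

/-- (Theorem 6.) Let `f = Σ_{λ∈Λ} Σ_k p_k(λ) D^k δ_λ` be a
tempered distribution on `ℝ^d` whose support `Λ` and spectrum are both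
uniformly discrete, with coefficients satisfying
`0 < c ≤ sup_k |p_k(λ)| ≤ C < ∞` on `Λ`. Then `Λ` is a finite union of
translates of several full-rank lattices. -/
theorem statement18 {d : ℕ} (f : TemperedDist d) (Λ : Set (Rd d)) (K : ℕ)
    (p : (Fin d → ℕ) → Rd d → ℂ)
    (hp0 : ∀ k ∉ mIdx d K, ∀ x, p k x = 0)
    (hsupp : ∀ k x, p k x ≠ 0 → x ∈ Λ)
    (hΛ : UniformlyDiscrete Λ)
    (hrep : ∀ φ : SchwartzMap (Rd d) ℂ, HasCompactSupport (⇑φ) →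
      f φ = ∑' x : Rd d, ∑ k ∈ mIdx d K, p k x * dkDelta k x φ)
    (hΓ : UniformlyDiscrete (tdSupport (fourierTD f)))
    (c C : ℝ) (hc : 0 < c)
    (hbound : ∀ x ∈ Λ, (∃ k, c ≤ ‖p k x‖) ∧ ∀ k, ‖p k x‖ ≤ C) :
    ∃ (J : ℕ) (L : Fin J → Set (Rd d)) (v : Fin J → Rd d),
      (∀ j, IsFullRankLattice (L j)) ∧
      Λ = ⋃ j, (fun y => v j + y) '' (L j) := by
  have hlow : ∀ x ∈ Λ, c ≤ ‖jetCoeffs K p x‖ := fun x hx =>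
    le_norm_jetCoeffs hp0 hc (hbound x hx).1
  have hsub : Function.support (jetCoeffs K p) ⊆ Λ := support_jetCoeffs_subset hsupp
  have hΛ_eq : Function.support (jetCoeffs K p) = Λ :=
    hsub.antisymm fun x hx => norm_pos_iff.1 (hc.trans_le (hlow x hx))
  have hf : IsPointDistribution f Λ (max C 0) (jetCoeffs K p) :=
    .of_hasCompactSupport hΛ (isBoundedOn_jetCoeffs hsupp fun x hx => (hbound x hx).2)
      fun φ hφ => by simp only [hrep φ hφ, sum_mul_dkDelta]
  have hmain := hf.isFiniteUnionOfLatticeTranslates_support hΓ hc fun x hx => hlow x (hsub hx)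
  rwa [hΛ_eq] at hmain
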